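/- Let Ω ⊂ ℂⁿ, n ≥ 2, be a bounded pseudoconvex domain with C^∞ boundary, and let p ∈ ∂Ω be a strongly pseudoconvex boundary point. Let F be an automorphism of Ω with F(z) = z + o(‖z−p‖²) as z → p within Ω. Then F(z) = z for all z ∈ Ω. -/

import Mathlib

/-!
Near the strongly pseudoconvex point `p` the domain agrees, to sufficiently high weighted order,
with the Siegel model `{Re z > ‖a‖²}`, and inverting this model moves `p` to infinity. There the
condition `F z = z + o(‖z - p‖²)` says that `F` and each of its iterates tends to the identity for
bounded `a`.

Comparing the height `Re z - ‖a‖²` with a plurisubharmonic barrier by a Phragmén–Lindelöf argument,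
as in Julia's lemma, one finds that a holomorphic self-map of the domain which is tangent to the
identity at `p` lowers the height by at most a constant that does not depend on the map. Applied to
the iterates of `F` and of its inverse, this bounds the change of height under all iterates at once.
Averages over circles then show that every iterate moves the first coordinate by at most
`O(1 / √(Re z))` and the real part of the second by a bounded amount. By Cauchy estimates the
successive displacements `F^[j + 1] x - F^[j] x` are therefore all close to `F x - x`, relative to
`‖F x - x‖`; if this were nonzero they would add up to a displacement growing linearly in `j`, which
these bounds exclude. So `F` is the identity near infinity, and the identity theorem concludes.
-/

open Complex Topology Filter Metric Set Function

noncomputable section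

/-- `ℂⁿ` as a normed space. -/
abbrev En (n : ℕ) : Type := EuclideanSpace ℂ (Fin n)

/-- A domain: a nonempty open connected set. -/
def IsDomain' {n : ℕ} (Ω : Set (En n)) : Prop :=
  IsOpen Ω ∧ IsConnected Ω

/-- The Levi form of `ρ` at `q` in direction `ξ`:
`(1/4)(H_q(ξ,ξ) + H_q(iξ,iξ))` with `H_q` the second real Fréchet derivative. -/
def LeviForm {n : ℕ} (ρ : En n → ℝ) (q ξ : En n) : ℝ :=
  (1 / 4) * (iteratedFDeriv ℝ 2 ρ q ![ξ, ξ] + iteratedFDeriv ℝ 2 ρ q ![I • ξ, I • ξ])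

/-- `ξ` lies in the complex tangent space of `{ρ = 0}` at `q`. -/
def InCplxTangent {n : ℕ} (ρ : En n → ℝ) (q ξ : En n) : Prop :=
  fderiv ℝ ρ q ξ = 0 ∧ fderiv ℝ ρ q (I • ξ) = 0

/-- `ρ` is a `C^m` defining function for `Ω`. -/
def IsDefiningFunction {n : ℕ} (Ω : Set (En n)) (m : ℕ∞) (ρ : En n → ℝ) : Prop :=
  ContDiff ℝ m ρ ∧ Ω = {z | ρ z < 0} ∧ frontier Ω = {z | ρ z = 0} ∧
    ∀ q ∈ frontier Ω, fderiv ℝ ρ q ≠ 0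

/-- `q` is a strongly pseudoconvex point with respect to `ρ`. -/
def StronglyPcxAt {n : ℕ} (ρ : En n → ℝ) (q : En n) : Prop :=
  ∀ ξ : En n, ξ ≠ 0 → InCplxTangent ρ q ξ → 0 < LeviForm ρ q ξ

/-- `Ω` is pseudoconvex with `C^∞` boundary, witnessed by the defining function `ρ`. -/
def IsPcxCinfBoundary {n : ℕ} (Ω : Set (En n)) (ρ : En n → ℝ) : Prop :=
  IsDefiningFunction Ω ⊤ ρ ∧
    ∀ q ∈ frontier Ω, ∀ ξ : En n, InCplxTangent ρ q ξ → 0 ≤ LeviForm ρ q ξ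

/-- `F z = z + o(‖z - p‖^k)` as `z → p` within `Ω`. -/
def LittleOh {n : ℕ} (Ω : Set (En n)) (F : En n → En n) (p : En n) (k : ℕ) : Prop :=
  Tendsto (fun z => ‖F z - z‖ / ‖z - p‖ ^ k) (𝓝[Ω] p) (𝓝 0)

/-- `F` is an automorphism of `Ω`: a holomorphic bijection with holomorphic inverse. -/
def IsAutomorphismOf {n : ℕ} (F : En n → En n) (Ω : Set (En n)) : Prop :=
  DifferentiableOn ℂ F Ω ∧ MapsTo F Ω Ω ∧
    ∃ G : En n → En n, DifferentiableOn ℂ G Ω ∧ MapsTo G Ω Ω ∧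
      (∀ z ∈ Ω, G (F z) = z) ∧ (∀ z ∈ Ω, F (G z) = z)

section CircleAverage

open Real (circleAverage)

variable {F : Type*} [NormedAddCommGroup F] [NormedSpace ℂ F]
  {E : Type*} [NormedAddCommGroup E] [InnerProductSpace ℂ E] {c : ℂ} {R : ℝ}

theorem norm_circleAverage_le_circleAverage {f : ℂ → F} {g : ℂ → ℝ} (hg : CircleIntegrable g c R)
    (h : ∀ z ∈ sphere c |R|, ‖f z‖ ≤ g z) : ‖circleAverage f c R‖ ≤ circleAverage g c R := by
  rw [Real.circleAverage_def, Real.circleAverage_def, norm_smul, smul_eq_mul,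
    Real.norm_of_nonneg (by positivity)]
  gcongr
  exact intervalIntegral.norm_integral_le_of_norm_le (by positivity)
    (.of_forall fun t _ => h _ (circleMap_mem_sphere' _ _ _)) hg

theorem circleAverage_eq_of_differentiableOn_closedBall [CompleteSpace F] {f : ℂ → F}
    (hf : DifferentiableOn ℂ f (closedBall c |R|)) : circleAverage f c R = f c :=
  (hf.mono closure_ball_subset_closedBall).diffContOnCl.circleAverage

theorem circleAverage_re {f : ℂ → ℂ} (hf : DifferentiableOn ℂ f (closedBall c |R|)) :
    circleAverage (fun z => (f z).re) c R = (f c).re := by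
  have h := Complex.reCLM.circleAverage_comp_comm
    (hf.continuousOn.mono sphere_subset_closedBall).circleIntegrable'
  rwa [circleAverage_eq_of_differentiableOn_closedBall hf] at h

theorem circleAverage_norm_sq_sub_center {f : ℂ → E}
    (hf : DifferentiableOn ℂ f (closedBall c |R|)) :
    circleAverage (fun z => ‖f z - f c‖ ^ 2) c R
      = circleAverage (fun z => ‖f z‖ ^ 2) c R - ‖f c‖ ^ 2 := by
  have hfc : ContinuousOn f (sphere c |R|) := hf.continuousOn.mono sphere_subset_closedBall
  have hin : DifferentiableOn ℂ (fun z => inner ℂ (f c) ((2 : ℂ) • f z - f c))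
      (closedBall c |R|) :=
    (innerSL ℂ (f c)).differentiable.comp_differentiableOn ((hf.const_smul _).sub_const _)
  have hexp : (fun z => ‖f z - f c‖ ^ 2) =
      fun z => ‖f z‖ ^ 2 - (inner ℂ (f c) ((2 : ℂ) • f z - f c)).re := by
    ext z
    rw [@norm_sub_sq ℂ, inner_sub_right, inner_smul_right, ← inner_conj_symm (f z) (f c),
      inner_self_eq_norm_sq_to_K]
    norm_cast
    simp only [RCLike.re_eq_complex_re, conj_re, sub_re, re_ofNat, im_ofNat, mul_re,
      coe_algebraMap, ofReal_re]
    ring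
  have hsq : ContinuousOn (fun z => ‖f z‖ ^ 2) (sphere c |R|) := hfc.norm.pow 2
  have hre : ContinuousOn (fun z => (inner ℂ (f c) ((2 : ℂ) • f z - f c)).re) (sphere c |R|) :=
    continuous_re.comp_continuousOn (hin.continuousOn.mono sphere_subset_closedBall)
  rw [hexp, Real.circleAverage_fun_sub hsq.circleIntegrable' hre.circleIntegrable',
    circleAverage_re hin, two_smul, add_sub_cancel_right, inner_self_eq_norm_sq_to_K]
  norm_cast

theorem norm_sq_le_circleAverage {f : ℂ → E} (hf : DifferentiableOn ℂ f (closedBall c |R|)) :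
    ‖f c‖ ^ 2 ≤ circleAverage (fun z => ‖f z‖ ^ 2) c R := by
  have h := Real.circleAverage_nonneg_of_nonneg (c := c) (R := R)
    (f := fun z => ‖f z - f c‖ ^ 2) fun z _ => by positivity
  linarith [circleAverage_norm_sq_sub_center hf]

theorem circleAverage_norm_sq_sub_eq_mul_dslope (f : ℂ → F) :
    circleAverage (fun z => ‖f z - f c‖ ^ 2) c R
      = R ^ 2 * circleAverage (fun z => ‖dslope f c z‖ ^ 2) c R := by
  rw [← smul_eq_mul, ← Real.circleAverage_fun_smul]
  refine Real.circleAverage_congr_sphere fun z hz => ?_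
  simp only [← sub_smul_dslope f c z, norm_smul, mem_sphere_iff_norm.1 hz, mul_pow, sq_abs,
    smul_eq_mul]

theorem norm_sq_le_four_mul_circleAverage [CompleteSpace F] {f : ℂ → F}
    (hf : DifferentiableOn ℂ f (closedBall 0 1)) {w : ℂ} (hw : ‖w‖ ≤ 1 / 2) :
    ‖f w‖ ^ 2 ≤ 4 * circleAverage (fun z => ‖f z‖ ^ 2) 0 1 := by
  have hfc : ContinuousOn f (sphere 0 |1|) := by
    simpa using hf.continuousOn.mono sphere_subset_closedBall
  have hcauchy : circleAverage (fun z => ((z - 0) / (z - w)) • f z) 0 1 = f w :=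
    DiffContOnCl.circleAverage_smul_div
      (by simpa using (hf.mono closure_ball_subset_closedBall).diffContOnCl)
      (by simp only [abs_one, mem_ball_zero_iff]; linarith)
  have hkernel : ∀ z ∈ sphere (0 : ℂ) |1|, ‖((z - 0) / (z - w)) • f z‖ ≤ 2 * ‖f z‖ := by
    intro z hz
    have hz1 : ‖z‖ = 1 := by simpa using hz
    have hzw : 1 / 2 ≤ ‖z - w‖ := by linarith [norm_sub_norm_le z w]
    rw [norm_smul, norm_div, sub_zero, hz1]
    gcongr
    rw [div_le_iff₀ (by linarith)]
    linarith
  have hnorm : CircleIntegrable (fun z => 2 * ‖f z‖) 0 1 :=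
    (hfc.norm.const_smul (2 : ℝ)).circleIntegrable'
  have hsq : CircleIntegrable (fun z => (2 : ℝ) • ‖f z‖ ^ 2) 0 1 :=
    ((hfc.norm.pow 2).const_smul (2 : ℝ)).circleIntegrable'
  have hmean : ‖f w‖ ≤ circleAverage (fun z => 2 * ‖f z‖) 0 1 :=
    hcauchy ▸ norm_circleAverage_le_circleAverage hnorm hkernel
  have hamgm : ‖f w‖ * circleAverage (fun z => 2 * ‖f z‖) 0 1
      ≤ circleAverage (fun z => ‖f w‖ ^ 2 / 2 + (2 : ℝ) • ‖f z‖ ^ 2) 0 1 := by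
    rw [← smul_eq_mul, ← Real.circleAverage_fun_smul]
    refine Real.circleAverage_mono (hnorm.const_fun_smul (a := ‖f w‖))
      ((circleIntegrable_const _ _ _).add hsq) fun z _ => ?_
    simp only [smul_eq_mul]
    nlinarith [sq_nonneg (‖f w‖ - 2 * ‖f z‖)]
  rw [Real.circleAverage_fun_add (circleIntegrable_const _ _ _) hsq, Real.circleAverage_const,
    Real.circleAverage_fun_smul, smul_eq_mul] at hamgm
  nlinarith [norm_nonneg (f w)]

theorem circleAverage_norm_sq_sub_center_quarter_le [CompleteSpace F] {f : ℂ → F}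
    (hf : DifferentiableOn ℂ f (closedBall 0 1)) :
    circleAverage (fun z => ‖f z - f 0‖ ^ 2) 0 (1 / 4)
      ≤ 1 / 4 * circleAverage (fun z => ‖f z - f 0‖ ^ 2) 0 1 := by
  have hd : DifferentiableOn ℂ (dslope f 0) (closedBall 0 1) :=
    (differentiableOn_dslope (closedBall_mem_nhds 0 one_pos)).2 hf
  have hle : circleAverage (fun z => ‖dslope f 0 z‖ ^ 2) 0 (1 / 4)
      ≤ 4 * circleAverage (fun z => ‖dslope f 0 z‖ ^ 2) 0 1 := by
    have hsub : sphere (0 : ℂ) |1 / 4| ⊆ closedBall 0 (1 / 2) := by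
      rw [abs_of_pos (by norm_num)]
      exact sphere_subset_closedBall.trans (closedBall_subset_closedBall (by norm_num))
    refine Real.circleAverage_mono_on_of_le_circle ((hd.continuousOn.mono (hsub.trans
      (closedBall_subset_closedBall (by norm_num)))).norm.pow 2).circleIntegrable' fun z hz => ?_
    exact norm_sq_le_four_mul_circleAverage hd (by simpa using hsub hz)
  rw [circleAverage_norm_sq_sub_eq_mul_dslope, circleAverage_norm_sq_sub_eq_mul_dslope]
  linarith

theorem abs_circleAverage_sub_center_le {ψ : ℂ → ℝ} {h : ℂ → ℂ} {C : ℝ}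
    (hψ : ContinuousOn ψ (sphere c |R|)) (hh : DifferentiableOn ℂ h (closedBall c |R|))
    (hC : ∀ z ∈ closedBall c |R|, |ψ z - (h z).re| ≤ C) :
    |circleAverage ψ c R - ψ c| ≤ 2 * C := by
  have hre : ContinuousOn (fun z => (h z).re) (sphere c |R|) :=
    continuous_re.comp_continuousOn (hh.continuousOn.mono sphere_subset_closedBall)
  have havg : |circleAverage (fun z => ψ z - (h z).re) c R| ≤ C :=
    Real.abs_circleAverage_le_circleAverage_abs.trans <|
      Real.circleAverage_mono_on_of_le_circle (hψ.sub hre).abs.circleIntegrable'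
        fun z hz => hC z (sphere_subset_closedBall hz)
  rw [Real.circleAverage_fun_sub hψ.circleIntegrable' hre.circleIntegrable',
    circleAverage_re hh] at havg
  have hcenter := hC c (mem_closedBall_self (abs_nonneg R))
  rw [abs_le] at *
  constructor <;> linarith

theorem circleAverage_norm_sq_sub_center_eq_mul_dslope {f : ℂ → E}
    (hf : DifferentiableOn ℂ f (closedBall c |R|)) :
    circleAverage (fun z => ‖f z‖ ^ 2) c R - ‖f c‖ ^ 2
      = R ^ 2 * circleAverage (fun z => ‖dslope f c z‖ ^ 2) c R := by
  rw [← circleAverage_norm_sq_sub_center hf, circleAverage_norm_sq_sub_eq_mul_dslope]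

theorem hasDerivAt_add_smul (a u : F) (z : ℂ) : HasDerivAt (fun z : ℂ => a + z • u) u z := by
  simpa only [id, one_smul] using ((hasDerivAt_id z).smul_const u).const_add a

theorem dslope_add_smul (a u : F) : dslope (fun z : ℂ => a + z • u) 0 = fun _ => u := by
  ext z
  rcases eq_or_ne z 0 with rfl | hz
  · rw [dslope_same, (hasDerivAt_add_smul a u 0).deriv]
  · simp [dslope_of_ne _ hz, slope_def_module, smul_smul, hz]

/-- If `‖P‖² - ‖a + ζ u‖²` is nearly harmonic, comparing its averages over the circles of radius
`1` and `1 / 4` separates the first Taylor coefficient of `P` from the higher ones. -/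
theorem abs_norm_deriv_sq_sub_le [CompleteSpace E] {P : ℂ → E} {h : ℂ → ℂ} {a u : E} {C : ℝ}
    (hP : DifferentiableOn ℂ P (closedBall 0 1)) (hh : DifferentiableOn ℂ h (closedBall 0 1))
    (hC : ∀ ζ ∈ closedBall (0 : ℂ) 1, |‖P ζ‖ ^ 2 - ‖a + ζ • u‖ ^ 2 - (h ζ).re| ≤ C) :
    |‖deriv P 0‖ ^ 2 - ‖u‖ ^ 2| ≤ 50 * C := by
  set r := dslope P 0
  have hr : DifferentiableOn ℂ r (closedBall 0 1) :=
    (differentiableOn_dslope (closedBall_mem_nhds 0 one_pos)).2 hP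
  have hQ : Differentiable ℂ fun ζ : ℂ => a + ζ • u := by fun_prop
  have hsub {R : ℝ} (hR : |R| ≤ 1) : closedBall (0 : ℂ) |R| ⊆ closedBall 0 1 :=
    closedBall_subset_closedBall hR
  have hmean {R : ℝ} (hR : |R| ≤ 1) :
      |R ^ 2 * (circleAverage (fun ζ => ‖r ζ‖ ^ 2) 0 R - ‖u‖ ^ 2)| ≤ 2 * C := by
    have hPc : ContinuousOn (fun ζ => ‖P ζ‖ ^ 2) (sphere 0 |R|) :=
      ((hP.mono (hsub hR)).continuousOn.mono sphere_subset_closedBall).norm.pow 2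
    have hQc : ContinuousOn (fun ζ : ℂ => ‖a + ζ • u‖ ^ 2) (sphere 0 |R|) := by fun_prop
    have hav := abs_circleAverage_sub_center_le (ψ := fun ζ => ‖P ζ‖ ^ 2 - ‖a + ζ • u‖ ^ 2)
      (hPc.sub hQc) (hh.mono (hsub hR)) fun z hz => hC z (hsub hR hz)
    rw [Real.circleAverage_fun_sub hPc.circleIntegrable' hQc.circleIntegrable'] at hav
    have hPr := circleAverage_norm_sq_sub_center_eq_mul_dslope (hP.mono (hsub hR))
    have hQu := circleAverage_norm_sq_sub_center_eq_mul_dslope (R := R) (c := 0)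
      hQ.differentiableOn
    rw [dslope_add_smul, Real.circleAverage_const] at hQu
    convert hav using 2
    linarith
  have hmean_one := hmean (R := 1) (by simp)
  have hmean_quarter := hmean (R := 1 / 4) (by norm_num [abs_of_pos])
  have hcenter_one := circleAverage_norm_sq_sub_center (hr.mono (hsub (R := 1) (by simp)))
  have hcenter_quarter := circleAverage_norm_sq_sub_center
    (hr.mono (hsub (R := 1 / 4) (by norm_num [abs_of_pos])))
  have hschwarz := circleAverage_norm_sq_sub_center_quarter_le hr
  have hsubmean := norm_sq_le_circleAverage (hr.mono (hsub (R := 1) (by simp)))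
  have hC0 : 0 ≤ C := (abs_nonneg _).trans (hC 0 (by simp))
  rw [abs_le] at hmean_one hmean_quarter
  rw [← dslope_same P 0, abs_le]
  constructor <;> linarith

end CircleAverage

section SiegelModel

theorem norm_apply_zero_one_le {E : Type*} [NormedAddCommGroup E] [NormedSpace ℂ E]
    [FiniteDimensional ℂ E] (L : E × ℂ →ₗ[ℂ] E) {α β K : ℝ} (hα : 0 < α) (hβ : 0 < β)
    (hK : 4 * K ≤ 3 * α ^ 2)
    (hL : ∀ u v, ‖u‖ ≤ α → ‖v‖ ≤ β → |‖L (u, v)‖ ^ 2 - ‖u‖ ^ 2| ≤ K) :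
    ‖L (0, 1)‖ ≤ K / (α * β) := by
  have hscale {u : E} (hu : u ≠ 0) : ‖((α / ‖u‖ : ℝ) : ℂ) • u‖ = α := by
    rw [norm_smul, Complex.norm_of_nonneg (by positivity),
      div_mul_cancel₀ _ (norm_ne_zero_iff.2 hu)]
  have hlower {u : E} (hu : ‖u‖ = α) : α / 2 ≤ ‖L (u, 0)‖ := by
    have h := (abs_le.1 (hL u 0 hu.le (by simpa using hβ.le))).1
    rw [hu] at h
    exact le_of_sq_le_sq (by linarith) (norm_nonneg _)
  have hinj : Injective (L ∘ₗ LinearMap.inl ℂ E ℂ) := by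
    rw [injective_iff_map_eq_zero]
    intro u (hu : L (u, 0) = 0)
    by_contra hu0
    have h := hlower (hscale hu0)
    have hmap := map_smul L ((α / ‖u‖ : ℝ) : ℂ) (u, 0)
    rw [Prod.smul_mk, smul_zero, hu, smul_zero] at hmap
    rw [hmap, norm_zero] at h
    linarith
  obtain ⟨u, hu⟩ : ∃ u, L (u, 0) = L (0, 1) := LinearMap.injective_iff_surjective.1 hinj _
  rcases eq_or_ne u 0 with rfl | hu0
  · have hK0 : 0 ≤ K := (abs_nonneg _).trans (hL 0 0 (by simpa using hα.le) (by simpa using hβ.le))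
    rw [← hu, Prod.mk_zero_zero, map_zero, norm_zero]
    positivity
  set c : ℝ := α / ‖u‖ with hc
  have hval (v : ℝ) : L ((c : ℂ) • u, v) = ((c + v : ℝ) : ℂ) • L (0, 1) := by
    have hsplit : ((c : ℂ) • u, (v : ℂ)) = (c : ℂ) • (u, 0) + (v : ℂ) • ((0 : E), (1 : ℂ)) := by
      simp
    rw [hsplit, map_add, map_smul, map_smul, hu, ← add_smul, ← ofReal_add]
  have hlowerc := hlower (hscale hu0)
  rw [← hc, ← ofReal_zero, hval, add_zero, norm_smul,
    Complex.norm_of_nonneg (by positivity)] at hlowerc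
  have hpos := hL _ (β : ℂ) (hscale hu0).le (Complex.norm_of_nonneg hβ.le).le
  have hneg := hL _ ((-β : ℝ) : ℂ) (hscale hu0).le (by simp [abs_of_pos hβ])
  rw [← hc, hval, norm_smul, mul_pow, norm_real, Real.norm_eq_abs, sq_abs, abs_le] at hpos hneg
  rw [le_div_iff₀ (by positivity)]
  have hk := mul_le_mul_of_nonneg_right hlowerc (mul_nonneg hβ.le (norm_nonneg (L (0, 1))))
  nlinarith [hpos.2, hneg.1, hpos.1, hneg.2]

theorem hasDerivAt_neg_div_sqrt (c : ℝ) {x t : ℝ} (hxt : 0 < x + t) :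
    HasDerivAt (fun t => -(2 * c / √(x + t))) (c / ((x + t) * √(x + t))) t := by
  have hsqrt : 0 < √(x + t) := Real.sqrt_pos.2 hxt
  have hder := ((((hasDerivAt_id t).const_add x).sqrt hxt.ne').inv hsqrt.ne').const_mul (-(2 * c))
  refine (hder.congr_of_eventuallyEq (.of_forall fun s => ?_)).congr_deriv ?_
  · simp [div_eq_mul_inv]
  · simp only [id, Real.sq_sqrt hxt.le]
    field_simp

variable {E : Type*} [NormedAddCommGroup E]

/-- The height `Re z - ‖a‖²` of the point `(a, z)` in the Siegel model `{Re z > ‖a‖²}` of the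
ball. -/
def siegelHeight (Z : E × ℂ) : ℝ := Z.2.re - ‖Z.1‖ ^ 2

/-- The horoball of level `T` at infinity in the Siegel model: the points of height `> T`. -/
def horoball (E : Type*) [NormedAddCommGroup E] (T : ℝ) : Set (E × ℂ) :=
  {Z | T < siegelHeight Z}

theorem continuous_siegelHeight : Continuous (siegelHeight : E × ℂ → ℝ) := by
  unfold siegelHeight
  fun_prop

theorem isOpen_horoball (T : ℝ) : IsOpen (horoball E T) :=
  isOpen_lt continuous_const continuous_siegelHeight

theorem mem_horoball {T : ℝ} {Z : E × ℂ} : Z ∈ horoball E T ↔ T < siegelHeight Z := Iff.rfl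

theorem mk_mem_horoball {T : ℝ} {a : E} {z : ℂ} :
    (a, z) ∈ horoball E T ↔ T < z.re - ‖a‖ ^ 2 := Iff.rfl

theorem mem_horoball_of_norm_le_one {T : ℝ} {a : E} {z : ℂ} (ha : ‖a‖ ≤ 1) (hz : T + 1 < z.re) :
    (a, z) ∈ horoball E T := by
  rw [mem_horoball, siegelHeight]
  nlinarith [norm_nonneg a]

variable [InnerProductSpace ℂ E]

theorem add_smul_mem_horoball {T : ℝ} {a u : E} {z v : ℂ} (ha : ‖a‖ ≤ 1) (h16 : 16 ≤ z.re)
    (hT : 2 * T < z.re) (hu : ‖u‖ ≤ √z.re / 4) (hv : ‖v‖ ≤ z.re / 4) {ζ : ℂ} (hζ : ‖ζ‖ ≤ 1) :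
    (a + ζ • u, z + ζ * v) ∈ horoball E T := by
  have hsnd : ‖ζ * v‖ ≤ z.re / 4 := by
    rw [norm_mul]
    exact (mul_le_of_le_one_left (norm_nonneg v) hζ).trans hv
  have hfst : ‖a + ζ • u‖ ≤ 1 + √z.re / 4 := by
    refine (norm_add_le _ _).trans (add_le_add ha ?_)
    rw [norm_smul]
    exact (mul_le_of_le_one_left (norm_nonneg u) hζ).trans hu
  have hre := (abs_le.1 ((abs_re_le_norm (ζ * v)).trans hsnd)).1
  have hsqrt : √z.re ^ 2 = z.re := Real.sq_sqrt (by linarith)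
  have hsq : ‖a + ζ • u‖ ^ 2 ≤ (1 + √z.re / 4) ^ 2 := by gcongr
  rw [mem_horoball, siegelHeight, add_re]
  nlinarith [sq_nonneg (1 - √z.re / 4)]

/-- `G` tends to the identity as `Re z → ∞`, uniformly for bounded first coordinate. -/
def AsymptoticToId (G : E × ℂ → E × ℂ) : Prop :=
  ∀ A : ℝ, ∀ ε > 0, ∃ R : ℝ, ∀ (a : E) (z : ℂ), ‖a‖ ≤ A → R ≤ z.re → ‖G (a, z) - (a, z)‖ ≤ ε

/-- `G` is holomorphic on the horoball of level `T` and changes the height by at most `C` there. -/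
structure NearlyHeightPreserving (T C : ℝ) (G : E × ℂ → E × ℂ) : Prop where
  differentiableOn : DifferentiableOn ℂ G (horoball E T)
  abs_height_sub_le : ∀ Z ∈ horoball E T, |siegelHeight (G Z) - siegelHeight Z| ≤ C

namespace NearlyHeightPreserving

variable {T C : ℝ} {G : E × ℂ → E × ℂ}

theorem nonneg (hG : NearlyHeightPreserving T C G) : 0 ≤ C :=
  (abs_nonneg _).trans <| hG.abs_height_sub_le (0, ((T + 1 : ℝ) : ℂ)) <| by
    simp [mem_horoball, siegelHeight]

theorem differentiableAt (hG : NearlyHeightPreserving T C G) {Z : E × ℂ}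
    (hZ : Z ∈ horoball E T) : DifferentiableAt ℂ G Z :=
  hG.differentiableOn.differentiableAt ((isOpen_horoball T).mem_nhds hZ)

theorem abs_norm_fderiv_fst_sq_sub_le [CompleteSpace E] (hG : NearlyHeightPreserving T C G)
    {a u : E} {z v : ℂ} (ha : ‖a‖ ≤ 1) (h16 : 16 ≤ z.re) (hT : 2 * T < z.re)
    (hu : ‖u‖ ≤ √z.re / 4) (hv : ‖v‖ ≤ z.re / 4) :
    |‖(fderiv ℂ G (a, z) (u, v)).1‖ ^ 2 - ‖u‖ ^ 2| ≤ 50 * C := by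
  set l : ℂ → E × ℂ := fun ζ => (a + ζ • u, z + ζ * v) with hl
  have hld : Differentiable ℂ l := by
    rw [hl]
    fun_prop
  have hlmem : MapsTo l (closedBall 0 1) (horoball E T) := fun ζ hζ =>
    add_smul_mem_horoball ha h16 hT hu hv (by simpa using hζ)
  have hGl : DifferentiableOn ℂ (fun ζ => G (l ζ)) (closedBall 0 1) :=
    hG.differentiableOn.comp hld.differentiableOn hlmem
  have hderiv : HasDerivAt (fun ζ => (G (l ζ)).1) (fderiv ℂ G (a, z) (u, v)).1 0 := by
    have hl0 : l 0 = (a, z) := by simp [hl]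
    have hG' := (hG.differentiableAt (hlmem (mem_closedBall_self zero_le_one))).hasFDerivAt
    rw [← hl0]
    exact (ContinuousLinearMap.fst ℂ E ℂ).hasFDerivAt.comp_hasDerivAt (0 : ℂ)
      (hG'.comp_hasDerivAt (0 : ℂ) (hasDerivAt_add_smul (a, z) (u, v) 0))
  rw [← hderiv.deriv]
  refine abs_norm_deriv_sq_sub_le (h := fun ζ => (G (l ζ)).2 - (z + ζ * v)) (a := a)
    (differentiable_fst.comp_differentiableOn hGl)
    ((differentiable_snd.comp_differentiableOn hGl).sub (by fun_prop)) fun ζ hζ => ?_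
  rw [← abs_neg]
  convert hG.abs_height_sub_le (l ζ) (hlmem hζ) using 2
  simp only [siegelHeight, hl, sub_re]
  ring

theorem norm_fderiv_vertical_fst_le [FiniteDimensional ℂ E] (hG : NearlyHeightPreserving T C G)
    {a : E} {z : ℂ} (ha : ‖a‖ ≤ 1) (h16 : 16 ≤ z.re) (hT : 2 * T < z.re) (hC : 1600 * C < z.re) :
    ‖(fderiv ℂ G (a, z) (0, 1)).1‖ ≤ 800 * C / (z.re * √z.re) := by
  have : CompleteSpace E := FiniteDimensional.complete ℂ E
  have hz : 0 < z.re := by linarith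
  have h := norm_apply_zero_one_le (LinearMap.fst ℂ E ℂ ∘ₗ (fderiv ℂ G (a, z)).toLinearMap)
    (α := √z.re / 4) (β := z.re / 4) (K := 50 * C) (by positivity) (by positivity)
    (by rw [div_pow, Real.sq_sqrt hz.le]; linarith)
    fun u v hu hv => hG.abs_norm_fderiv_fst_sq_sub_le ha h16 hT hu hv
  refine h.trans_eq ?_
  field_simp
  ring

theorem hasDerivAt_vertical_fst (hG : NearlyHeightPreserving T C G) {a : E} {z : ℂ} {t : ℝ}
    (hmem : (a, z + t) ∈ horoball E T) :
    HasDerivAt (fun t : ℝ => (G (a, z + t)).1) (fderiv ℂ G (a, z + t) (0, 1)).1 t := by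
  have hline : HasDerivAt (fun t : ℂ => (a, z + t)) ((0 : E), (1 : ℂ)) (t : ℂ) :=
    (hasDerivAt_const (t : ℂ) a).prodMk ((hasDerivAt_id (t : ℂ)).const_add z)
  have hG' := (ContinuousLinearMap.fst ℂ E ℂ).hasFDerivAt.comp_hasDerivAt (t : ℂ)
    ((hG.differentiableAt hmem).hasFDerivAt.comp_hasDerivAt (t : ℂ) hline)
  exact (hG'.scomp t ofRealCLM.hasDerivAt).congr_deriv (one_smul ℂ _)

theorem norm_vertical_fst_sub_le [FiniteDimensional ℂ E] (hG : NearlyHeightPreserving T C G)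
    {a : E} {z : ℂ} (ha : ‖a‖ ≤ 1) (h16 : 16 ≤ z.re) (hT : 2 * T < z.re) (hC : 1600 * C < z.re)
    {τ : ℝ} (hτ : 0 ≤ τ) : ‖(G (a, z + τ)).1 - (G (a, z)).1‖ ≤ 1600 * C / √z.re := by
  have hf {t : ℝ} (ht : 0 ≤ t) := (hG.hasDerivAt_vertical_fst (a := a) (z := z) (t := t)
    (mem_horoball_of_norm_le_one ha (by rw [add_re, ofReal_re]; linarith))).sub_const (G (a, z)).1
  have hB {t : ℝ} (ht : 0 ≤ t) := (hasDerivAt_neg_div_sqrt (800 * C)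
    (show 0 < z.re + t by linarith)).const_add (2 * (800 * C) / √z.re)
  have h := image_norm_le_of_norm_deriv_right_le_deriv_boundary' (a := 0) (b := τ)
    (fun t ht => (hf ht.1).continuousAt.continuousWithinAt)
    (fun t ht => (hf ht.1).hasDerivWithinAt) (by simp)
    (fun t ht => (hB ht.1).continuousAt.continuousWithinAt)
    (fun t ht => (hB ht.1).hasDerivWithinAt)
    (fun t ht => by
      have hre : (z + t).re = z.re + t := by simp
      simpa only [hre] using hG.norm_fderiv_vertical_fst_le (z := z + t) ha
        (by linarith [ht.1]) (by linarith [ht.1]) (by linarith [ht.1]))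
    (right_mem_Icc.2 hτ)
  have hpos : 0 ≤ 2 * (800 * C) / √(z.re + τ) := by
    have := hG.nonneg
    positivity
  have hcoef : 2 * (800 * C) = 1600 * C := by ring
  rw [hcoef] at h hpos
  linarith

theorem norm_fst_sub_le [FiniteDimensional ℂ E] (hG : NearlyHeightPreserving T C G)
    (hA : AsymptoticToId G) {a : E} {z : ℂ} (ha : ‖a‖ ≤ 1) (h16 : 16 ≤ z.re) (hT : 2 * T < z.re)
    (hC : 1600 * C < z.re) : ‖(G (a, z)).1 - a‖ ≤ 1600 * C / √z.re := by
  refine le_of_forall_pos_le_add fun ε hε => ?_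
  obtain ⟨R, hR⟩ := hA 1 ε hε
  set τ : ℝ := max R 0
  have hfar : ‖(G (a, z + τ)).1 - a‖ ≤ ε :=
    (norm_fst_le _).trans (hR a (z + τ) ha (by simp [τ]; linarith [le_max_left R 0]))
  have hnear := hG.norm_vertical_fst_sub_le ha h16 hT hC (le_max_right R 0)
  rw [norm_sub_rev] at hnear
  exact (norm_sub_le_norm_sub_add_norm_sub _ _ _).trans (add_le_add hnear hfar)

theorem abs_re_snd_sub_le (hG : NearlyHeightPreserving T C G) {a : E} {z : ℂ} {η : ℝ}
    (ha : ‖a‖ ≤ 1) (hZ : (a, z) ∈ horoball E T) (hη : ‖(G (a, z)).1 - a‖ ≤ η) :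
    |(G (a, z)).2.re - z.re| ≤ C + (2 * η + η ^ 2) := by
  have hheight := hG.abs_height_sub_le _ hZ
  have hη0 : 0 ≤ η := (norm_nonneg _).trans hη
  have hnorm := abs_le.1 ((abs_norm_sub_norm_le _ _).trans hη)
  have hsq : |‖(G (a, z)).1‖ ^ 2 - ‖a‖ ^ 2| ≤ 2 * η + η ^ 2 := by
    rw [abs_le]
    constructor <;> nlinarith [norm_nonneg a, norm_nonneg (G (a, z)).1]
  simp only [siegelHeight] at hheight
  rw [abs_le] at hheight hsq ⊢
  constructor <;> linarith

end NearlyHeightPreserving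

end SiegelModel

section RigidityAtInfinity

theorem norm_sub_le_of_abs_re_le {V : Type*} [NormedAddCommGroup V] [NormedSpace ℂ V] {f : V → ℂ}
    {c y : V} {R K : ℝ} (hK : 0 < K) (hf : DifferentiableOn ℂ f (ball c R))
    (hre : ∀ x ∈ ball c R, |(f x).re| ≤ K) (hy : y ∈ ball c R) :
    ‖f y - f c‖ ≤ 4 * K * ‖y - c‖ / (R - ‖y - c‖) := by
  rcases eq_or_ne y c with rfl | hyc
  · simp
  have hpos : 0 < ‖y - c‖ := norm_pos_iff.2 (sub_ne_zero.2 hyc)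
  have hyR : ‖y - c‖ < R := mem_ball_iff_norm.1 hy
  have hmaps : MapsTo (fun s : ℂ => c + s • (y - c)) (ball 0 (R / ‖y - c‖)) (ball c R) := by
    intro s hs
    rwa [mem_ball_iff_norm, add_sub_cancel_left, norm_smul, ← lt_div_iff₀ hpos,
      ← mem_ball_zero_iff]
  have h := borelCaratheodory_zero (f := fun s => f (c + s • (y - c)) - f c) (M := 2 * K)
    (R := R / ‖y - c‖) (z := 1) (by positivity)
    ((hf.comp (by fun_prop) hmaps).sub_const _) (fun s hs => ?_) (div_pos (hpos.trans hyR) hpos)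
    (by simpa using (one_lt_div hpos).2 hyR) (by simp)
  · have hR : R - ‖y - c‖ ≠ 0 := (sub_pos.2 hyR).ne'
    refine (by simpa using h : ‖f y - f c‖ ≤ _).trans_eq ?_
    rw [div_sub_one hpos.ne']
    field_simp
    ring
  · have hs := abs_le.1 (hre _ (hmaps hs))
    have hc := abs_le.1 (hre c (mem_ball_self (hpos.trans hyR)))
    simp only [mem_ofPred_eq, sub_re]
    linarith

theorem norm_le_of_norm_sub_sub_le {V : Type*} [NormedAddCommGroup V] [NormedSpace ℝ V]
    {x : ℕ → V} {v : V} {q : ℝ} (hstep : ∀ j, ‖x (j + 1) - x j - v‖ ≤ q)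
    (hgrowth : ∀ ε > 0, ∃ c : ℝ, ∀ m : ℕ, ‖x m - x 0‖ ≤ c + m * ε) : ‖v‖ ≤ q := by
  have hsum (m : ℕ) : ‖x m - x 0 - (m : ℝ) • v‖ ≤ m * q := by
    induction m with
    | zero => simp
    | succ m ih =>
      have hsplit : x (m + 1) - x 0 - ((m + 1 : ℕ) : ℝ) • v
          = (x (m + 1) - x m - v) + (x m - x 0 - (m : ℝ) • v) := by
        push_cast
        module
      rw [hsplit, Nat.cast_succ, add_mul, one_mul, add_comm (m * q)]
      exact norm_add_le_of_le (hstep m) ih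
  refine le_of_forall_pos_le_add fun ε hε => ?_
  obtain ⟨c, hc⟩ := hgrowth ε hε
  by_contra! hlt
  obtain ⟨m, hm⟩ := exists_nat_gt (c / (‖v‖ - (q + ε)))
  rw [div_lt_iff₀ (by linarith)] at hm
  have hnorm := norm_sub_norm_le ((m : ℝ) • v) (x m - x 0)
  rw [norm_sub_rev ((m : ℝ) • v), norm_smul, Real.norm_natCast] at hnorm
  linarith [hsum m, hc m]

variable {E : Type*} [NormedAddCommGroup E] [InnerProductSpace ℂ E]

/-- `G` is holomorphic where `‖a‖ ≤ 1` and `Re z` is at least `x₀`, and moves `(a, z)` by at most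
`K / √(Re z)` in the first coordinate and by at most `K` in the real part of the second. -/
structure NearIdAbove (x₀ K : ℝ) (G : E × ℂ → E × ℂ) : Prop where
  differentiableOn : DifferentiableOn ℂ G {Z | ‖Z.1‖ ≤ 1 ∧ x₀ ≤ Z.2.re}
  norm_fst_sub_le : ∀ a z, ‖a‖ ≤ 1 → x₀ ≤ z.re → ‖(G (a, z)).1 - a‖ ≤ K / √z.re
  abs_re_snd_sub_le : ∀ a z, ‖a‖ ≤ 1 → x₀ ≤ z.re → |(G (a, z)).2.re - z.re| ≤ K

theorem exists_nearIdAbove_of_nearlyHeightPreserving [FiniteDimensional ℂ E] {T C : ℝ}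
    (hC : 0 ≤ C) : ∃ x₀ > T + 1, ∃ K > 0, 1 ≤ x₀ ∧ ∀ G : E × ℂ → E × ℂ,
      NearlyHeightPreserving T C G → AsymptoticToId G → NearIdAbove x₀ K G := by
  set K₁ : ℝ := 1600 * C + 1
  have hT := le_abs_self T
  have hT0 := abs_nonneg T
  have hmem {a : E} {z : ℂ} (ha : ‖a‖ ≤ 1) (hz : 17 + 2 * |T| + 1600 * C ≤ z.re) :
      (a, z) ∈ horoball E T := mem_horoball_of_norm_le_one ha (by linarith)
  have hfst {G : E × ℂ → E × ℂ} (hG : NearlyHeightPreserving T C G) (hA : AsymptoticToId G)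
      {a : E} {z : ℂ} (ha : ‖a‖ ≤ 1) (hz : 17 + 2 * |T| + 1600 * C ≤ z.re) :
      ‖(G (a, z)).1 - a‖ ≤ K₁ / √z.re := by
    refine (hG.norm_fst_sub_le hA ha (by linarith) (by linarith) (by linarith)).trans ?_
    gcongr
    exact (lt_add_one _).le
  refine ⟨17 + 2 * |T| + 1600 * C, by linarith, C + (2 * K₁ + K₁ ^ 2), by positivity, by linarith,
    fun G hG hA => ⟨hG.differentiableOn.mono fun Z hZ => hmem hZ.1 hZ.2, fun a z ha hz => ?_,
      fun a z ha hz => hG.abs_re_snd_sub_le ha (hmem ha hz) ((hfst hG hA ha hz).trans ?_)⟩⟩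
  · refine (hfst hG hA ha hz).trans ?_
    gcongr
    nlinarith
  · exact div_le_self (by positivity) (Real.one_le_sqrt.2 (by linarith))

namespace NearIdAbove

variable {x₀ K η : ℝ} {G : E × ℂ → E × ℂ} {a b : E} {z w : ℂ}

theorem norm_fst_displacement_sub_le (hG : NearIdAbove x₀ K G) (hK : 0 ≤ K) (hx₀ : 0 < x₀)
    (ha : ‖a‖ ≤ 1 / 2) (hz : x₀ + 1 ≤ z.re) (hη : K / √(z.re - 1) ≤ η)
    (hbw : ‖(b, w) - (a, z)‖ < 1 / 2) :
    ‖((G (b, w)).1 - b) - ((G (a, z)).1 - a)‖ ≤ 4 * η * ‖(b, w) - (a, z)‖ := by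
  have hball : ∀ Y ∈ ball (a, z) (1 / 2), ‖Y.1‖ ≤ 1 ∧ z.re - 1 ≤ Y.2.re := by
    intro Y hY
    rw [mem_ball_iff_norm] at hY
    have hfst : ‖Y.1 - a‖ ≤ 1 / 2 := (norm_fst_le _).trans hY.le
    have hsnd : ‖Y.2 - z‖ ≤ 1 / 2 := (norm_snd_le _).trans hY.le
    have hre := (abs_le.1 ((abs_re_le_norm _).trans hsnd)).1
    rw [sub_re] at hre
    exact ⟨by linarith [norm_le_norm_add_norm_sub' Y.1 a], by linarith⟩
  have hdisp : ∀ Y ∈ ball (a, z) (1 / 2), ‖(G Y).1 - Y.1‖ ≤ η := by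
    intro Y hY
    obtain ⟨hY1, hY2⟩ := hball Y hY
    refine (hG.norm_fst_sub_le Y.1 Y.2 hY1 (by linarith)).trans (le_trans ?_ hη)
    gcongr
    exact Real.sqrt_pos.2 (by linarith)
  have hd : DifferentiableOn ℂ (fun Y => (G Y).1 - Y.1) (ball (a, z) (1 / 2)) :=
    (differentiable_fst.comp_differentiableOn <| hG.differentiableOn.mono fun Y hY =>
      ⟨(hball Y hY).1, by linarith [(hball Y hY).2]⟩).sub differentiableOn_fst
  have hmaps : MapsTo (fun Y => (G Y).1 - Y.1) (ball (a, z) (1 / 2))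
      (closedBall ((G (a, z)).1 - a) (2 * η)) := by
    intro Y hY
    rw [mem_closedBall_iff_norm, two_mul]
    exact norm_sub_le_of_le (hdisp Y hY) (hdisp (a, z) (mem_ball_self (by norm_num)))
  have h := dist_le_div_mul_dist_of_mapsTo_ball hd hmaps (mem_ball_iff_norm.2 hbw)
  rw [dist_eq_norm, dist_eq_norm] at h
  exact h.trans_eq (by ring)

theorem norm_snd_sub_snd_le (hG : NearIdAbove x₀ K G) (hK : 0 < K) (ha : ‖a‖ ≤ 1 / 2)
    (hz : x₀ ≤ z.re) (hb : ‖b - a‖ ≤ 1 / 4) :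
    ‖(G (b, z)).2 - (G (a, z)).2‖ ≤ 16 * K * ‖b - a‖ := by
  have hball : ∀ y ∈ ball a (1 / 2), ‖y‖ ≤ 1 := fun y hy => by
    linarith [norm_le_norm_add_norm_sub' y a, mem_ball_iff_norm.1 hy]
  have hd : DifferentiableOn ℂ (fun y => (G (y, z)).2 - z) (ball a (1 / 2)) :=
    (differentiable_snd.comp_differentiableOn <| hG.differentiableOn.comp (by fun_prop)
      fun y hy => ⟨hball y hy, hz⟩).sub_const z
  have h := norm_sub_le_of_abs_re_le hK hd
    (fun y hy => by simpa using hG.abs_re_snd_sub_le y z (hball y hy) hz)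
    (mem_ball_iff_norm.2 (hb.trans_lt (by norm_num)))
  rw [sub_sub_sub_cancel_right] at h
  refine h.trans ?_
  rw [div_le_iff₀ (by linarith)]
  nlinarith [mul_nonneg hK.le (norm_nonneg (b - a))]

theorem norm_snd_displacement_sub_le (hG : NearIdAbove x₀ K G) (hK : 0 < K) (ha : ‖a‖ ≤ 1)
    (hzw : ‖z - w‖ < w.re - x₀) :
    ‖((G (a, z)).2 - z) - ((G (a, w)).2 - w)‖ ≤ 4 * K * ‖z - w‖ / (w.re - x₀ - ‖z - w‖) := by
  have hball : ∀ y ∈ ball w (w.re - x₀), x₀ ≤ y.re := by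
    intro y hy
    have h := (abs_le.1 ((abs_re_le_norm _).trans (mem_ball_iff_norm.1 hy).le)).1
    rw [sub_re] at h
    linarith
  exact norm_sub_le_of_abs_re_le (f := fun y => (G (a, y)).2 - y) hK
    ((differentiable_snd.comp_differentiableOn <| hG.differentiableOn.comp (by fun_prop)
      fun y hy => ⟨ha, hball y hy⟩).sub (by fun_prop))
    (fun y hy => hG.abs_re_snd_sub_le a y ha (hball y hy)) (mem_ball_iff_norm.2 hzw)

end NearIdAbove

/-- The maps `G j` behave, near infinity, like the iterates of `G 1`; they are `NearIdAbove` with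
constants independent of `j`, and `G 1` is asymptotic to the identity. -/
structure NearIdIterates (x₀ K : ℝ) (G : ℕ → E × ℂ → E × ℂ) : Prop where
  nearIdAbove : ∀ j, NearIdAbove x₀ K (G j)
  asymptoticToId : AsymptoticToId (G 1)
  zero_apply : ∀ a z, ‖a‖ ≤ 1 → x₀ ≤ z.re → G 0 (a, z) = (a, z)
  succ_apply : ∀ j a z, ‖a‖ ≤ 1 → x₀ ≤ z.re → G (j + 1) (a, z) = G j (G 1 (a, z))
  succ_apply' : ∀ j a z, ‖a‖ ≤ 1 → x₀ ≤ z.re → G (j + 1) (a, z) = G 1 (G j (a, z))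

namespace NearIdIterates

variable {x₀ K : ℝ} {G : ℕ → E × ℂ → E × ℂ} {a : E} {z : ℂ}

theorem norm_fst_sub_le (hG : NearIdIterates x₀ K G) (hK : 0 ≤ K) (hx₀ : 1 ≤ x₀) (j : ℕ)
    (ha : ‖a‖ ≤ 1) (hz : x₀ ≤ z.re) : ‖(G j (a, z)).1 - a‖ ≤ K :=
  ((hG.nearIdAbove j).norm_fst_sub_le a z ha hz).trans <|
    div_le_self hK (Real.one_le_sqrt.2 (hx₀.trans hz))

theorem exists_norm_snd_sub_le_mul (hG : NearIdIterates x₀ K G) (hK : 0 ≤ K) (hx₀ : 1 ≤ x₀)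
    {η : ℝ} (hη : 0 < η) :
    ∃ R ≥ x₀, ∀ a z, ‖a‖ ≤ 1 → R ≤ z.re → ∀ m : ℕ, ‖(G m (a, z)).2 - z‖ ≤ m * η := by
  obtain ⟨R, hR⟩ := hG.asymptoticToId (1 + K) η hη
  refine ⟨max R x₀ + K, by linarith [le_max_right R x₀], fun a z ha hz m => ?_⟩
  have hzx : x₀ ≤ z.re := by linarith [le_max_right R x₀]
  induction m with
  | zero => simp [hG.zero_apply a z ha hzx]
  | succ m ih =>
    have hfst : ‖(G m (a, z)).1‖ ≤ 1 + K :=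
      (norm_le_norm_add_norm_sub' _ a).trans
        (add_le_add ha (hG.norm_fst_sub_le hK hx₀ m ha hzx))
    have hre := (abs_le.1 ((hG.nearIdAbove m).abs_re_snd_sub_le a z ha hzx)).1
    have hstep := (norm_snd_le _).trans
      (hR (G m (a, z)).1 (G m (a, z)).2 hfst (by linarith [le_max_left R x₀]))
    rw [hG.succ_apply' m a z ha hzx, Nat.cast_succ, add_mul, one_mul, add_comm (m * η)]
    exact (norm_sub_le_norm_sub_add_norm_sub _ (G m (a, z)).2 _).trans (add_le_add hstep ih)

/-- Far up the iterates move slowly because `G 1` is close to the identity there; the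
Borel–Carathéodory bound, uniform in `m`, brings this down to every height. -/
theorem exists_norm_snd_sub_le (hG : NearIdIterates x₀ K G) (hK : 0 < K) (hx₀ : 1 ≤ x₀)
    (ha : ‖a‖ ≤ 1) (hz : x₀ < z.re) {η : ℝ} (hη : 0 < η) :
    ∃ c : ℝ, ∀ m : ℕ, ‖(G m (a, z)).2 - z‖ ≤ c + m * η := by
  obtain ⟨R, hR, hfar⟩ := hG.exists_norm_snd_sub_le_mul hK.le hx₀ hη
  set w : ℂ := z + R with hw
  have hwre : w.re = z.re + R := by simp [hw]
  have hzw : ‖z - w‖ = R := by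
    rw [hw, sub_add_cancel_left, norm_neg, Complex.norm_of_nonneg (by linarith)]
  refine ⟨4 * K * ‖z - w‖ / (w.re - x₀ - ‖z - w‖), fun m => ?_⟩
  have hlip := (hG.nearIdAbove m).norm_snd_displacement_sub_le (z := z) (w := w) hK ha
    (by linarith)
  exact (norm_le_norm_sub_add _ ((G m (a, w)).2 - w)).trans
    (add_le_add hlip (hfar a w ha (by linarith) m))

theorem norm_fst_displacement_le (hG : NearIdIterates x₀ K G) (hK : 0 < K) (hx₀ : 1 ≤ x₀)
    {η : ℝ} (ha : ‖a‖ ≤ 1 / 2) (hδ : ‖G 1 (a, z) - (a, z)‖ ≤ 1 / 8) (hz : x₀ + 1 ≤ z.re)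
    (hη : K / √(z.re - 1) ≤ η) :
    ‖(G 1 (a, z)).1 - a‖ ≤ 4 * η * ‖G 1 (a, z) - (a, z)‖ := by
  have hzx : x₀ ≤ z.re := by linarith
  have ha1 : ‖a‖ ≤ 1 := by linarith
  refine norm_le_of_norm_sub_sub_le (x := fun j => (G j (a, z)).1) (fun j => ?_) fun ε hε =>
    ⟨K, fun m => ?_⟩
  · have h := (hG.nearIdAbove j).norm_fst_displacement_sub_le hK.le (by linarith) ha hz hη
      (b := (G 1 (a, z)).1) (w := (G 1 (a, z)).2) (hδ.trans_lt (by norm_num))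
    rwa [sub_sub_sub_comm, ← hG.succ_apply j a z ha1 hzx] at h
  · simp only [hG.zero_apply a z ha1 hzx]
    linarith [hG.norm_fst_sub_le hK.le hx₀ m ha1 hzx, mul_nonneg m.cast_nonneg hε.le]

theorem norm_snd_displacement_le (hG : NearIdIterates x₀ K G) (hK : 0 < K) (hx₀ : 1 ≤ x₀)
    (ha : ‖a‖ ≤ 1 / 2) (hδ : ‖G 1 (a, z) - (a, z)‖ ≤ 1 / 8) (hz : x₀ + 8 * K + 1 ≤ z.re) :
    ‖(G 1 (a, z)).2 - z‖ ≤ 16 * K * ‖(G 1 (a, z)).1 - a‖ + 1 / 2 * ‖(G 1 (a, z)).2 - z‖ := by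
  have hzx : x₀ < z.re := by linarith
  have ha1 : ‖a‖ ≤ 1 := by linarith
  have hfst : ‖(G 1 (a, z)).1 - a‖ ≤ 1 / 8 := (norm_fst_le _).trans hδ
  have hsnd : ‖(G 1 (a, z)).2 - z‖ ≤ 1 / 8 := (norm_snd_le _).trans hδ
  refine norm_le_of_norm_sub_sub_le (x := fun j => (G j (a, z)).2) (fun j => ?_) fun ε hε => ?_
  · have hlipfst := (hG.nearIdAbove j).norm_snd_sub_snd_le hK ha hzx.le (b := (G 1 (a, z)).1)
      (by linarith)
    have hlipsnd := (hG.nearIdAbove j).norm_snd_displacement_sub_le hK (a := (G 1 (a, z)).1)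
      (z := (G 1 (a, z)).2) (w := z) (by linarith [norm_le_norm_add_norm_sub' (G 1 (a, z)).1 a])
      (by linarith)
    have hhalf : 4 * K * ‖(G 1 (a, z)).2 - z‖ / (z.re - x₀ - ‖(G 1 (a, z)).2 - z‖)
        ≤ 1 / 2 * ‖(G 1 (a, z)).2 - z‖ := by
      rw [div_le_iff₀ (by linarith)]
      nlinarith [norm_nonneg ((G 1 (a, z)).2 - z)]
    have hsplit : (G (j + 1) (a, z)).2 - (G j (a, z)).2 - ((G 1 (a, z)).2 - z)
        = ((G j ((G 1 (a, z)).1, z)).2 - (G j (a, z)).2)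
          + (((G j ((G 1 (a, z)).1, (G 1 (a, z)).2)).2 - (G 1 (a, z)).2)
            - ((G j ((G 1 (a, z)).1, z)).2 - z)) := by
      rw [hG.succ_apply j a z ha1 hzx.le]
      ring
    rw [hsplit]
    exact norm_add_le_of_le hlipfst (hlipsnd.trans hhalf)
  · simpa only [hG.zero_apply a z ha1 hzx.le] using
      hG.exists_norm_snd_sub_le hK hx₀ ha1 hzx hε

theorem exists_eq_id (hG : NearIdIterates x₀ K G) (hK : 0 < K) (hx₀ : 1 ≤ x₀) :
    ∃ X : ℝ, ∀ (a : E) (z : ℂ), ‖a‖ < 1 / 2 → X < z.re → G 1 (a, z) = (a, z) := by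
  obtain ⟨R, hR⟩ := hG.asymptoticToId 1 (1 / 8) (by norm_num)
  set η : ℝ := 1 / (8 * (1 + 32 * K)) with hη
  have hηpos : 0 < η := by positivity
  refine ⟨max R (x₀ + 1 + 8 * K + (K / η) ^ 2), fun a z ha hz => ?_⟩
  obtain ⟨hzR, hzX⟩ := max_lt_iff.1 hz
  have hδ := hR a z (by linarith) hzR.le
  have hfst := hG.norm_fst_displacement_le hK hx₀ ha.le hδ (η := η)
    (by linarith [sq_nonneg (K / η)]) (by
      rw [div_le_iff₀ (Real.sqrt_pos.2 (by linarith [sq_nonneg (K / η)])), mul_comm,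
        ← div_le_iff₀ hηpos]
      exact Real.le_sqrt_of_sq_le (by linarith))
  have hsnd := hG.norm_snd_displacement_le hK hx₀ ha.le hδ (by linarith [sq_nonneg (K / η)])
  set u := (G 1 (a, z)).1 - a
  set v := (G 1 (a, z)).2 - z
  have hK0 : 0 ≤ K * ‖u‖ := by positivity
  have hnorm : ‖G 1 (a, z) - (a, z)‖ ≤ (1 + 32 * K) * ‖u‖ :=
    max_le (show ‖u‖ ≤ _ by linarith) (show ‖v‖ ≤ _ by linarith [norm_nonneg u])
  have hu0 : ‖u‖ ≤ 1 / 2 * ‖u‖ :=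
    calc ‖u‖ ≤ 4 * η * ((1 + 32 * K) * ‖u‖) := hfst.trans (by gcongr)
      _ = 1 / 2 * ‖u‖ := by rw [hη]; field_simp; ring
  have hu' : ‖u‖ = 0 := by linarith [norm_nonneg u]
  rw [hu', mul_zero] at hnorm
  exact sub_eq_zero.1 (norm_le_zero_iff.1 hnorm)

end NearIdIterates

theorem eq_id_of_nearlyHeightPreserving_iterates [FiniteDimensional ℂ E] {T C : ℝ}
    {G : ℕ → E × ℂ → E × ℂ} (hG : ∀ j, NearlyHeightPreserving T C (G j))
    (hA : ∀ j, AsymptoticToId (G j)) (hzero : ∀ Z ∈ horoball E T, G 0 Z = Z)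
    (hsucc : ∀ j, ∀ Z ∈ horoball E T, G (j + 1) Z = G j (G 1 Z))
    (hsucc' : ∀ j, ∀ Z ∈ horoball E T, G (j + 1) Z = G 1 (G j Z)) :
    ∃ X : ℝ, ∀ (a : E) (z : ℂ), ‖a‖ < 1 / 2 → X < z.re → G 1 (a, z) = (a, z) := by
  obtain ⟨x₀, hx₀T, K, hK, hx₀, hnear⟩ :=
    exists_nearIdAbove_of_nearlyHeightPreserving (E := E) (T := T) (hG 0).nonneg
  have hmem {a : E} {z : ℂ} (ha : ‖a‖ ≤ 1) (hz : x₀ ≤ z.re) : (a, z) ∈ horoball E T :=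
    mem_horoball_of_norm_le_one ha (by linarith)
  have hiter : NearIdIterates x₀ K G :=
    { nearIdAbove := fun j => hnear (G j) (hG j) (hA j)
      asymptoticToId := hA 1
      zero_apply := fun a z ha hz => hzero _ (hmem ha hz)
      succ_apply := fun j a z ha hz => hsucc j _ (hmem ha hz)
      succ_apply' := fun j a z ha hz => hsucc' j _ (hmem ha hz) }
  exact hiter.exists_eq_id hK hx₀

end RigidityAtInfinity

section PhragmenLindelof

open Real (circleAverage)

theorem eventually_closedBall_abs_subset {X : Type*} [PseudoMetricSpace X] {U : Set X} {x : X}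
    (hU : U ∈ 𝓝 x) : ∀ᶠ R in 𝓝[>] (0 : ℝ), closedBall x |R| ⊆ U :=
  ((continuous_abs.tendsto' 0 0 abs_zero).mono_left nhdsWithin_le_nhds).eventually
    (eventually_closedBall_subset hU)

theorem circleAverage_norm_sq (z₀ : ℂ) (R : ℝ) :
    circleAverage (fun z => ‖z‖ ^ 2) z₀ R = R ^ 2 + ‖z₀‖ ^ 2 := by
  have hcenter := circleAverage_norm_sq_sub_center (f := fun z : ℂ => z) (c := z₀) (R := R)
    differentiableOn_id
  have hsphere : circleAverage (fun z => ‖z - z₀‖ ^ 2) z₀ R = R ^ 2 := by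
    rw [Real.circleAverage_congr_sphere (f₂ := fun _ => R ^ 2), Real.circleAverage_const]
    intro z hz
    rw [mem_sphere_iff_norm] at hz
    simp only [hz, sq_abs]
  linarith

/-- The local sub-mean value inequality for `w` at `z₀`, on all small circles. -/
def HasSubMeanAt (w : ℂ → ℝ) (z₀ : ℂ) : Prop :=
  ∀ᶠ R in 𝓝[>] (0 : ℝ), w z₀ ≤ circleAverage w z₀ R

theorem hasSubMeanAt_of_support {F : Type*} [NormedAddCommGroup F] [InnerProductSpace ℂ F]
    {w : ℂ → ℝ} {z₀ : ℂ} {h : ℂ → F} {k : ℂ → ℂ}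
    (hh : ∀ᶠ z in 𝓝 z₀, DifferentiableAt ℂ h z) (hk : ∀ᶠ z in 𝓝 z₀, DifferentiableAt ℂ k z)
    (hw : ∀ᶠ z in 𝓝 z₀, ContinuousAt w z) (heq : w z₀ = ‖h z₀‖ ^ 2 + (k z₀).re)
    (hle : ∀ᶠ z in 𝓝 z₀, ‖h z‖ ^ 2 + (k z).re ≤ w z) : HasSubMeanAt w z₀ := by
  filter_upwards [eventually_closedBall_abs_subset (hh.and (hk.and (hw.and hle)))] with R hR
  have hsph : sphere z₀ |R| ⊆ closedBall z₀ |R| := sphere_subset_closedBall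
  have hhd : DifferentiableOn ℂ h (closedBall z₀ |R|) :=
    fun z hz => (hR hz).1.differentiableWithinAt
  have hkd : DifferentiableOn ℂ k (closedBall z₀ |R|) :=
    fun z hz => (hR hz).2.1.differentiableWithinAt
  have hhi : CircleIntegrable (fun z => ‖h z‖ ^ 2) z₀ R :=
    ((hhd.continuousOn.mono hsph).norm.pow 2).circleIntegrable'
  have hki : CircleIntegrable (fun z => (k z).re) z₀ R :=
    (continuous_re.comp_continuousOn (hkd.continuousOn.mono hsph)).circleIntegrable'
  have hwi : CircleIntegrable w z₀ R := ContinuousOn.circleIntegrable'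
    fun z hz => (hR (hsph hz)).2.2.1.continuousWithinAt
  calc w z₀ = ‖h z₀‖ ^ 2 + (k z₀).re := heq
    _ ≤ circleAverage (fun z => ‖h z‖ ^ 2) z₀ R + circleAverage (fun z => (k z).re) z₀ R :=
      add_le_add (norm_sq_le_circleAverage hhd) (circleAverage_re hkd).ge
    _ = circleAverage (fun z => ‖h z‖ ^ 2 + (k z).re) z₀ R :=
      (Real.circleAverage_fun_add hhi hki).symm
    _ ≤ circleAverage w z₀ R :=
      Real.circleAverage_mono (hhi.add hki) hwi fun z hz => (hR (hsph hz)).2.2.2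

namespace HasSubMeanAt

variable {w : ℂ → ℝ} {z₀ : ℂ}

theorem add_re (h : HasSubMeanAt w z₀) {k : ℂ → ℂ} (hk : ∀ᶠ z in 𝓝 z₀, DifferentiableAt ℂ k z)
    (hw : ∀ᶠ z in 𝓝 z₀, ContinuousAt w z) : HasSubMeanAt (fun z => w z + (k z).re) z₀ := by
  filter_upwards [eventually_closedBall_abs_subset (hk.and hw), h] with R hR hav
  have hsph : sphere z₀ |R| ⊆ closedBall z₀ |R| := sphere_subset_closedBall
  have hkd : DifferentiableOn ℂ k (closedBall z₀ |R|) :=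
    fun z hz => (hR hz).1.differentiableWithinAt
  have hki : CircleIntegrable (fun z => (k z).re) z₀ R :=
    (continuous_re.comp_continuousOn (hkd.continuousOn.mono hsph)).circleIntegrable'
  have hwi : CircleIntegrable w z₀ R := ContinuousOn.circleIntegrable'
    fun z hz => (hR (hsph hz)).2.continuousWithinAt
  rw [Real.circleAverage_fun_add hwi hki, circleAverage_re hkd]
  exact add_le_add_left hav _

theorem not_isLocalMax_add_norm_sq (h : HasSubMeanAt w z₀) (hw : ∀ᶠ z in 𝓝 z₀, ContinuousAt w z)
    {δ : ℝ} (hδ : 0 < δ) : ¬ IsLocalMax (fun z => w z + δ * ‖z‖ ^ 2) z₀ := by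
  intro hmax
  obtain ⟨R, ⟨hR, hav⟩, hR0⟩ :=
    (((eventually_closedBall_abs_subset (hw.and hmax)).and h).and self_mem_nhdsWithin).exists
  have hsph : sphere z₀ |R| ⊆ closedBall z₀ |R| := sphere_subset_closedBall
  have hwi : CircleIntegrable w z₀ R := ContinuousOn.circleIntegrable'
    fun z hz => (hR (hsph hz)).1.continuousWithinAt
  have hni : CircleIntegrable (fun z : ℂ => δ • ‖z‖ ^ 2) z₀ R :=
    ContinuousOn.circleIntegrable' (by fun_prop)
  have hle : circleAverage (fun z => w z + δ • ‖z‖ ^ 2) z₀ R ≤ w z₀ + δ * ‖z₀‖ ^ 2 :=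
    Real.circleAverage_mono_on_of_le_circle (hwi.add hni) fun z hz => (hR (hsph hz)).2
  rw [Real.circleAverage_fun_add hwi hni, Real.circleAverage_fun_smul, circleAverage_norm_sq,
    smul_eq_mul] at hle
  have : 0 < δ * R ^ 2 := mul_pos hδ (pow_pos hR0 2)
  linarith

end HasSubMeanAt

theorem le_zero_of_hasSubMeanAt {K U : Set ℂ} (hK : IsCompact K) (hU : IsOpen U) (hUK : U ⊆ K)
    {w : ℂ → ℝ} (hw : ContinuousOn w K) (hbd : ∀ z ∈ K \ U, w z ≤ 0)
    (hsub : ∀ z ∈ U, HasSubMeanAt w z) : ∀ z ∈ K, w z ≤ 0 := by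
  intro z₁ hz₁
  by_contra! hpos
  obtain ⟨B, hB⟩ := hK.isBounded.exists_norm_le
  set δ : ℝ := w z₁ / (2 * (B ^ 2 + 1)) with hδ
  have hδ0 : 0 < δ := by positivity
  obtain ⟨z₀, hz₀, hmax⟩ := hK.exists_isMaxOn (f := fun z => w z + δ * ‖z‖ ^ 2) ⟨z₁, hz₁⟩
    (hw.add (by fun_prop))
  have hz₀pos : 0 < w z₀ := by
    have hval : w z₁ + δ * ‖z₁‖ ^ 2 ≤ w z₀ + δ * ‖z₀‖ ^ 2 := hmax hz₁
    have hδB : δ * (2 * (B ^ 2 + 1)) = w z₁ := by rw [hδ]; field_simp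
    have hnorm₀ : δ * ‖z₀‖ ^ 2 ≤ δ * B ^ 2 := by gcongr; exact hB _ hz₀
    have hnorm₁ : 0 ≤ δ * ‖z₁‖ ^ 2 := by positivity
    linarith
  have hz₀U : z₀ ∈ U := by
    by_contra hn
    exact (hbd z₀ ⟨hz₀, hn⟩).not_gt hz₀pos
  have hnhds : ∀ᶠ z in 𝓝 z₀, U ∈ 𝓝 z := eventually_mem_nhds_iff.2 (hU.mem_nhds hz₀U)
  exact (hsub z₀ hz₀U).not_isLocalMax_add_norm_sq
    (hnhds.mono fun z hz => hw.continuousAt (mem_of_superset hz hUK)) hδ0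
    (hmax.isLocalMax (mem_of_superset (hU.mem_nhds hz₀U) hUK))

section HalfPlane

variable {c : ℝ} {z : ℂ}

theorem one_le_norm_one_add_sub (hz : c ≤ z.re) : 1 ≤ ‖1 + (z - c)‖ := by
  refine le_trans ?_ (re_le_norm _)
  rw [add_re, sub_re, one_re, ofReal_re]
  linarith

theorem differentiableAt_log_one_add_sub (hz : c ≤ z.re) :
    DifferentiableAt ℂ (fun z => log (1 + (z - c))) z := by
  refine DifferentiableAt.clog (by fun_prop) (mem_slitPlane_iff.2 (Or.inl ?_))
  rw [add_re, sub_re, one_re, ofReal_re]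
  linarith

theorem tendsto_log_norm_one_add_sub (c : ℝ) :
    Tendsto (fun z : ℂ => Real.log ‖1 + (z - c)‖) (Bornology.cobounded ℂ) atTop := by
  refine Real.tendsto_log_atTop.comp (tendsto_atTop_mono (fun z => ?_)
    (tendsto_atTop_add_const_right _ (-‖(1 - c : ℂ)‖) tendsto_norm_cobounded_atTop))
  have hz : 1 + (z - c) = z + (1 - c) := by ring
  rw [hz, ← sub_eq_add_neg]
  exact norm_sub_le_norm_add _ _

variable {B : ℝ} {w : ℂ → ℝ}

theorem le_mul_log_of_hasSubMeanAt_halfPlane (hw : ∀ z : ℂ, c ≤ z.re → ContinuousAt w z)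
    (hbd : ∀ z : ℂ, z.re = c → w z ≤ 0)
    (hB : ∀ᶠ z in Bornology.cobounded ℂ, c ≤ z.re → w z ≤ B)
    (hsub : ∀ z : ℂ, c < z.re → HasSubMeanAt w z) {ε : ℝ} (hε : 0 < ε) (hz : c ≤ z.re) :
    w z ≤ ε * Real.log ‖1 + (z - c)‖ := by
  set L : ℂ → ℂ := fun z => ((-ε : ℝ) : ℂ) * log (1 + (z - c))
  have hL (z : ℂ) : (L z).re = -(ε * Real.log ‖1 + (z - c)‖) := by
    rw [re_ofReal_mul, log_re, neg_mul]
  have hLd {z : ℂ} (hz : c ≤ z.re) : DifferentiableAt ℂ L z :=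
    (differentiableAt_log_one_add_sub hz).const_mul _
  have hlog {z : ℂ} (hz : c ≤ z.re) : 0 ≤ ε * Real.log ‖1 + (z - c)‖ :=
    mul_nonneg hε.le (Real.log_nonneg (one_le_norm_one_add_sub hz))
  have hfar := hB.and (((tendsto_log_norm_one_add_sub c).const_mul_atTop hε).eventually_ge_atTop B)
  obtain ⟨R, -, hR⟩ := (hasBasis_cobounded_norm (E := ℂ)).mem_iff.1 hfar
  set R' := max R ‖z‖
  have hopen : IsOpen {z : ℂ | c < z.re} := isOpen_lt continuous_const continuous_re
  have hmax := le_zero_of_hasSubMeanAt (K := {z | c ≤ z.re} ∩ closedBall 0 R')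
    (U := {z | c < z.re} ∩ ball 0 R') (w := fun z => w z + (L z).re)
    ((isCompact_closedBall 0 R').inter_left (isClosed_le continuous_const continuous_re))
    (hopen.inter isOpen_ball)
    (inter_subset_inter (fun z (hz : c < z.re) => hz.le) ball_subset_closedBall)
    (fun z hz => ((hw z hz.1).add
      (continuous_re.continuousAt.comp (hLd hz.1).continuousAt)).continuousWithinAt)
    (fun z ⟨⟨hzc, _⟩, hzU⟩ => ?_)
    (fun z hz => (hsub z hz.1).add_re
      ((hopen.eventually_mem hz.1).mono fun y hy => hLd (le_of_lt hy))
      ((hopen.eventually_mem hz.1).mono fun y hy => hw y (le_of_lt hy)))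
    z ⟨hz, by simp [R']⟩
  · rw [hL] at hmax
    linarith
  · rw [hL]
    rcases (show c ≤ z.re from hzc).eq_or_lt with h | h
    · linarith [hbd z h.symm, hlog hzc]
    · have hRz : R ≤ ‖z‖ := by
        by_contra! hlt
        exact hzU ⟨h, mem_ball_zero_iff.2 (hlt.trans_le (le_max_left _ _))⟩
      linarith [(hR hRz).1 hzc, (hR hRz).2]

theorem le_zero_of_hasSubMeanAt_halfPlane (hw : ∀ z : ℂ, c ≤ z.re → ContinuousAt w z)
    (hbd : ∀ z : ℂ, z.re = c → w z ≤ 0)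
    (hB : ∀ᶠ z in Bornology.cobounded ℂ, c ≤ z.re → w z ≤ B)
    (hsub : ∀ z : ℂ, c < z.re → HasSubMeanAt w z) (hz : c ≤ z.re) : w z ≤ 0 := by
  have hlim : Tendsto (fun ε => ε * Real.log ‖1 + (z - c)‖) (𝓝[>] 0) (𝓝 0) :=
    ((continuous_mul_const _).tendsto' 0 0 (zero_mul _)).mono_left nhdsWithin_le_nhds
  exact ge_of_tendsto hlim <| eventually_mem_nhdsWithin.mono fun ε hε =>
    le_mul_log_of_hasSubMeanAt_halfPlane hw hbd hB hsub hε hz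

end HalfPlane

end PhragmenLindelof

section JuliaEstimate

variable {V E : Type*} [NormedAddCommGroup V] [InnerProductSpace ℂ V]
  [NormedAddCommGroup E] [InnerProductSpace ℂ E]

/-- Mutually inverse holomorphic coordinates near a boundary point `p` of `Ω`, sending `p` to
infinity and comparing `Ω` with the Siegel model there. The inverse is only required on a horoball,
and the height in the chart is bounded below, and bounded above away from `p`. -/
structure SiegelChart (Ω : Set V) (p : V) (E : Type*) [NormedAddCommGroup E]
    [InnerProductSpace ℂ E] where
  /-- the coordinates -/
  toFun : V → E × ℂ
  /-- the inverse map -/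
  inv : E × ℂ → V
  /-- the radius of the ball around `p` on which the coordinates are defined -/
  r : ℝ
  /-- the level above which the inverse is defined -/
  level : ℝ
  r_pos : 0 < r
  differentiableOn_inv : DifferentiableOn ℂ inv (horoball E level)
  inv_mem : ∀ Y ∈ horoball E level, inv Y ∈ Ω ∩ ball p r
  right_inv : ∀ Y ∈ horoball E level, toFun (inv Y) = Y
  differentiableOn : DifferentiableOn ℂ toFun (Ω ∩ ball p r)
  left_inv : ∀ x ∈ Ω ∩ ball p r, toFun x ∈ horoball E level → inv (toFun x) = x
  height_bddBelow : ∃ C : ℝ, ∀ x ∈ Ω ∩ ball p r, -C ≤ siegelHeight (toFun x)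
  height_bddAbove : ∃ M : ℝ, ∀ x ∈ Ω ∩ ball p r, r / 4 ≤ ‖x - p‖ → siegelHeight (toFun x) ≤ M

namespace SiegelChart

variable {Ω : Set V} {p : V} (χ : SiegelChart Ω p E)

theorem differentiableAt_toFun (hΩ : IsOpen Ω) {x : V} (hx : x ∈ Ω) (hxp : ‖x - p‖ < χ.r) :
    DifferentiableAt ℂ χ.toFun x :=
  χ.differentiableOn.differentiableAt
    ((hΩ.inter isOpen_ball).mem_nhds ⟨hx, mem_ball_iff_norm.2 hxp⟩)

theorem differentiableAt_inv {Y : E × ℂ} (hY : Y ∈ horoball E χ.level) :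
    DifferentiableAt ℂ χ.inv Y :=
  χ.differentiableOn_inv.differentiableAt ((isOpen_horoball _).mem_nhds hY)

/-- In the chart `χ`, the map `G` is close to the identity near infinity above level `T`. -/
def TangentToId (T : ℝ) (G : V → V) : Prop :=
  ∀ A : ℝ, ∀ ε > 0, ∃ R : ℝ, ∀ (a : E) (z : ℂ), ‖a‖ ≤ A → (a, z) ∈ horoball E T → R ≤ ‖z‖ →
    G (χ.inv (a, z)) ∈ ball p (χ.r / 4) ∧ ‖χ.toFun (G (χ.inv (a, z))) - (a, z)‖ ≤ ε

/-- The quadratic plurisubharmonic function that replaces minus the height away from `p`. -/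
def outerBarrier (N M : ℝ) (x : V) : ℝ := N * (‖x - p‖ ^ 2 - χ.r ^ 2 / 4) - M - 1

/-- A function on `Ω` that is minus the height in the chart near `p`, the outer barrier away from
`p`, and the maximum of the two in between. -/
def barrier (N M : ℝ) (x : V) : ℝ :=
  if ‖x - p‖ ≤ χ.r / 4 then -siegelHeight (χ.toFun x)
  else if ‖x - p‖ < 7 * χ.r / 8 then max (-siegelHeight (χ.toFun x)) (χ.outerBarrier N M x)
  else χ.outerBarrier N M x

variable {χ} {N M C : ℝ} {x : V}

theorem barrier_of_norm_sub_le (hx : ‖x - p‖ ≤ χ.r / 4) :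
    χ.barrier N M x = -siegelHeight (χ.toFun x) := if_pos hx

theorem neg_siegelHeight_le_barrier (hx : ‖x - p‖ < 7 * χ.r / 8) :
    -siegelHeight (χ.toFun x) ≤ χ.barrier N M x := by
  unfold barrier
  split_ifs with h
  · exact le_rfl
  · exact le_max_left _ _

theorem outerBarrier_le_barrier (hx : χ.r / 4 < ‖x - p‖) :
    χ.outerBarrier N M x ≤ χ.barrier N M x := by
  unfold barrier
  rw [if_neg hx.not_ge]
  split_ifs with h
  · exact le_max_right _ _
  · exact le_rfl

theorem barrier_eq_neg_siegelHeight_or_eq_outerBarrier (x : V) :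
    (‖x - p‖ < 7 * χ.r / 8 ∧ χ.barrier N M x = -siegelHeight (χ.toFun x)) ∨
    (χ.r / 4 < ‖x - p‖ ∧ χ.barrier N M x = χ.outerBarrier N M x) := by
  have hr := χ.r_pos
  unfold barrier
  split_ifs with hnear hmid
  · exact Or.inl ⟨by linarith, rfl⟩
  · exact (max_choice _ _).imp (⟨hmid, ·⟩) (⟨not_le.1 hnear, ·⟩)
  · exact Or.inr ⟨not_le.1 hnear, rfl⟩

theorem barrier_eventuallyEq_neg_siegelHeight (hΩ : IsOpen Ω) (hN : 0 ≤ N)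
    (hM : ∀ x ∈ Ω ∩ ball p χ.r, χ.r / 4 ≤ ‖x - p‖ → siegelHeight (χ.toFun x) ≤ M)
    (hx : x ∈ Ω) (hxp : ‖x - p‖ < χ.r / 2) :
    χ.barrier N M =ᶠ[𝓝 x] fun y => -siegelHeight (χ.toFun y) := by
  have hr := χ.r_pos
  have hcont : ContinuousAt (fun y : V => ‖y - p‖) x := by fun_prop
  filter_upwards [hΩ.mem_nhds hx, hcont.eventually_lt_const hxp] with y hy hyp
  rcases le_or_gt ‖y - p‖ (χ.r / 4) with hnear | hfar
  · exact barrier_of_norm_sub_le hnear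
  · have hheight := hM y ⟨hy, mem_ball_iff_norm.2 (by linarith)⟩ hfar.le
    have hsq : ‖y - p‖ ^ 2 ≤ χ.r ^ 2 / 4 := by nlinarith [norm_nonneg (y - p)]
    rw [barrier, if_neg hfar.not_ge, if_pos (by linarith), max_eq_left]
    unfold outerBarrier
    nlinarith

theorem barrier_eventuallyEq_outerBarrier (hΩ : IsOpen Ω) (hN : 0 ≤ N)
    (hC : ∀ x ∈ Ω ∩ ball p χ.r, -C ≤ siegelHeight (χ.toFun x))
    (hNC : C ≤ N * (5 * χ.r ^ 2 / 16) - M - 1)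
    (hx : x ∈ Ω) (hxp : 3 * χ.r / 4 < ‖x - p‖) :
    χ.barrier N M =ᶠ[𝓝 x] χ.outerBarrier N M := by
  have hr := χ.r_pos
  have hcont : ContinuousAt (fun y : V => ‖y - p‖) x := by fun_prop
  filter_upwards [hΩ.mem_nhds hx, hcont.eventually_const_lt hxp] with y hy hyp
  rw [barrier, if_neg (by linarith)]
  split_ifs with hmid
  · have hheight := hC y ⟨hy, mem_ball_iff_norm.2 (by linarith)⟩
    have hsq : 5 * χ.r ^ 2 / 16 ≤ ‖y - p‖ ^ 2 - χ.r ^ 2 / 4 := by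
      nlinarith [norm_nonneg (y - p)]
    rw [max_eq_right]
    unfold outerBarrier
    nlinarith
  · rfl

theorem continuousAt_barrier (hΩ : IsOpen Ω) (hN : 0 ≤ N)
    (hM : ∀ x ∈ Ω ∩ ball p χ.r, χ.r / 4 ≤ ‖x - p‖ → siegelHeight (χ.toFun x) ≤ M)
    (hC : ∀ x ∈ Ω ∩ ball p χ.r, -C ≤ siegelHeight (χ.toFun x))
    (hNC : C ≤ N * (5 * χ.r ^ 2 / 16) - M - 1) (hx : x ∈ Ω) :
    ContinuousAt (χ.barrier N M) x := by
  have hr := χ.r_pos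
  have houter : ContinuousAt (χ.outerBarrier N M) x := by
    unfold outerBarrier
    fun_prop
  have hinner (hxp : ‖x - p‖ < χ.r) : ContinuousAt (fun y => -siegelHeight (χ.toFun y)) x :=
    (continuous_siegelHeight.continuousAt.comp
      (χ.differentiableAt_toFun hΩ hx hxp).continuousAt).neg
  rcases lt_or_ge ‖x - p‖ (χ.r / 2) with hnear | hnear
  · exact (hinner (by linarith)).congr
      (barrier_eventuallyEq_neg_siegelHeight hΩ hN hM hx hnear).symm
  rcases lt_or_ge (3 * χ.r / 4) ‖x - p‖ with hfar | hfar
  · exact houter.congr (barrier_eventuallyEq_outerBarrier hΩ hN hC hNC hx hfar).symm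
  have hmax : ContinuousAt
      (fun y => max (-siegelHeight (χ.toFun y)) (χ.outerBarrier N M y)) x :=
    (hinner (by linarith)).max houter
  refine hmax.congr ?_
  have hcont : ContinuousAt (fun y : V => ‖y - p‖) x := by fun_prop
  filter_upwards [hcont.eventually_const_lt (show χ.r / 4 < ‖x - p‖ by linarith),
    hcont.eventually_lt_const (show ‖x - p‖ < 7 * χ.r / 8 by linarith)] with y hlower hupper
  rw [barrier, if_neg hlower.not_ge, if_pos hupper]

theorem outerBarrier_eq_norm_sq_add_re (hN : 0 ≤ N) (x : V) :
    χ.outerBarrier N M x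
      = ‖((√N : ℝ) : ℂ) • (x - p)‖ ^ 2 + ((-(N * χ.r ^ 2 / 4) - M - 1 : ℝ) : ℂ).re := by
  rw [norm_smul, mul_pow, norm_real, Real.norm_eq_abs, sq_abs, Real.sq_sqrt hN, ofReal_re,
    outerBarrier]
  ring

theorem hasSubMeanAt_barrier (hΩ : IsOpen Ω) (hN : 0 ≤ N)
    (hcont : ∀ x ∈ Ω, ContinuousAt (χ.barrier N M) x) {γ : ℂ → V} {z₀ : ℂ}
    (hγ : ∀ᶠ z in 𝓝 z₀, DifferentiableAt ℂ γ z) (hγΩ : ∀ᶠ z in 𝓝 z₀, γ z ∈ Ω) :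
    HasSubMeanAt (fun z => χ.barrier N M (γ z)) z₀ := by
  have hr := χ.r_pos
  have hγcont : ∀ᶠ z in 𝓝 z₀, ContinuousAt (fun z => χ.barrier N M (γ z)) z := by
    filter_upwards [hγ, hγΩ] with z hz hzΩ
    exact ContinuousAt.comp (hcont _ hzΩ) hz.continuousAt
  have hnorm : ContinuousAt (fun z => ‖γ z - p‖) z₀ :=
    (hγ.self_of_nhds.continuousAt.sub continuousAt_const).norm
  have hheight (Z : E × ℂ) : -siegelHeight Z = ‖Z.1‖ ^ 2 + (-Z.2).re := by
    rw [siegelHeight, neg_re]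
    ring
  rcases χ.barrier_eq_neg_siegelHeight_or_eq_outerBarrier (N := N) (M := M) (γ z₀)
    with ⟨hlt, heq⟩ | ⟨hlt, heq⟩
  · have hnear := hnorm.eventually_lt_const hlt
    have hd : ∀ᶠ z in 𝓝 z₀, DifferentiableAt ℂ (fun z => χ.toFun (γ z)) z := by
      filter_upwards [hγ, hγΩ, hnear] with z hz hzΩ hzp
      exact (χ.differentiableAt_toFun hΩ hzΩ (by linarith)).comp z hz
    exact hasSubMeanAt_of_support (h := fun z => (χ.toFun (γ z)).1)
      (k := fun z => -(χ.toFun (γ z)).2) (hd.mono fun z hz => hz.fst)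
      (hd.mono fun z hz => hz.snd.neg) hγcont (heq.trans (hheight _))
      (hnear.mono fun z hz => (hheight _).ge.trans (neg_siegelHeight_le_barrier hz))
  · exact hasSubMeanAt_of_support (h := fun z => ((√N : ℝ) : ℂ) • (γ z - p))
      (k := fun _ => ((-(N * χ.r ^ 2 / 4) - M - 1 : ℝ) : ℂ))
      (hγ.mono fun z hz => (hz.sub_const p).const_smul _)
      (.of_forall fun z => differentiableAt_const _) hγcont
      (heq.trans (outerBarrier_eq_norm_sq_add_re hN _))
      ((hnorm.eventually_const_lt hlt).mono fun z hz =>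
        (outerBarrier_eq_norm_sq_add_re hN _).ge.trans (outerBarrier_le_barrier hz))

theorem exists_barrier (χ : SiegelChart Ω p E) (hΩ : IsOpen Ω) (hb : Bornology.IsBounded Ω) :
    ∃ N M D : ℝ, 0 ≤ N ∧ (∀ x ∈ Ω, ContinuousAt (χ.barrier N M) x) ∧
      ∀ x ∈ Ω, χ.barrier N M x ≤ D := by
  obtain ⟨C₀, hC₀⟩ := χ.height_bddBelow
  obtain ⟨M₀, hM₀⟩ := χ.height_bddAbove
  obtain ⟨B, hB⟩ := hb.subset_ball p
  have hr := χ.r_pos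
  set C := max C₀ 0
  set M := max M₀ 0
  have hC : ∀ x ∈ Ω ∩ ball p χ.r, -C ≤ siegelHeight (χ.toFun x) := fun x hx =>
    (neg_le_neg (le_max_left _ _)).trans (hC₀ x hx)
  have hM : ∀ x ∈ Ω ∩ ball p χ.r, χ.r / 4 ≤ ‖x - p‖ → siegelHeight (χ.toFun x) ≤ M :=
    fun x hx h => (hM₀ x hx h).trans (le_max_left _ _)
  have hC0 : 0 ≤ C := le_max_right _ _
  have hM0 : 0 ≤ M := le_max_right _ _
  set N := 16 * (C + M + 1) / (5 * χ.r ^ 2) with hNdef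
  have hN : 0 ≤ N := by positivity
  have hNC : N * (5 * χ.r ^ 2 / 16) = C + M + 1 := by
    rw [hNdef]
    field_simp
  refine ⟨N, M, C + N * B ^ 2, hN,
    fun x hx => continuousAt_barrier hΩ hN hM hC (by linarith) hx, fun x hx => ?_⟩
  have hxB : ‖x - p‖ < B := mem_ball_iff_norm.1 (hB hx)
  rcases χ.barrier_eq_neg_siegelHeight_or_eq_outerBarrier (N := N) (M := M) x
    with ⟨hlt, heq⟩ | ⟨-, heq⟩
  · have hheight := hC x ⟨hx, mem_ball_iff_norm.2 (by linarith)⟩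
    have : 0 ≤ N * B ^ 2 := by positivity
    linarith
  · have hsq : N * (‖x - p‖ ^ 2 - χ.r ^ 2 / 4) ≤ N * B ^ 2 := by
      have : ‖x - p‖ ^ 2 ≤ B ^ 2 := by gcongr
      gcongr
      nlinarith
    rw [heq, outerBarrier]
    linarith

theorem barrier_add_re_le (hΩ : IsOpen Ω) (hN : 0 ≤ N)
    (hcont : ∀ x ∈ Ω, ContinuousAt (χ.barrier N M) x) {D : ℝ}
    (hD : ∀ x ∈ Ω, χ.barrier N M x ≤ D) {γ : ℂ → V} {b c B : ℝ} (hbc : b < c)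
    (hγ : ∀ z : ℂ, b < z.re → DifferentiableAt ℂ γ z) (hγΩ : ∀ z : ℂ, b < z.re → γ z ∈ Ω)
    (hB : ∀ᶠ z in Bornology.cobounded ℂ, c ≤ z.re → χ.barrier N M (γ z) + z.re ≤ B)
    {z : ℂ} (hz : c ≤ z.re) : χ.barrier N M (γ z) + z.re ≤ c + D := by
  have hopen : IsOpen {z : ℂ | b < z.re} := isOpen_lt continuous_const continuous_re
  have hγcont (z : ℂ) (hz : b < z.re) : ContinuousAt (fun z => χ.barrier N M (γ z)) z :=
    ContinuousAt.comp (hcont _ (hγΩ z hz)) (hγ z hz).continuousAt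
  have h := le_zero_of_hasSubMeanAt_halfPlane (c := c) (B := B - (c + D))
    (w := fun z => χ.barrier N M (γ z) + (z - (c + D : ℝ)).re)
    (fun z hz => (hγcont z (hbc.trans_le hz)).add (by fun_prop))
    (fun z hz => by
      rw [sub_re, ofReal_re]
      linarith [hD _ (hγΩ z (hbc.trans_eq hz.symm))])
    (hB.mono fun z hzB hz => by
      rw [sub_re, ofReal_re]
      linarith [hzB hz])
    (fun z hz => by
      have hnhds := hopen.eventually_mem (hbc.trans hz)
      exact (hasSubMeanAt_barrier hΩ hN hcont (hnhds.mono hγ) (hnhds.mono hγΩ)).add_re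
        (.of_forall fun z => by fun_prop) (hnhds.mono hγcont)) hz
  rw [sub_re, ofReal_re] at h
  linarith

theorem TangentToId.exists_barrier_add_re_le {T : ℝ} {G : V → V} (htan : χ.TangentToId T G)
    (a : E) : ∃ B, ∀ᶠ z in Bornology.cobounded ℂ, T + ‖a‖ ^ 2 < z.re →
      χ.barrier N M (G (χ.inv (a, z))) + z.re ≤ B := by
  obtain ⟨R, hR⟩ := htan ‖a‖ 1 one_pos
  refine ⟨(‖a‖ + 1) ^ 2 + 1, (eventually_cobounded_le_norm R).mono fun z hzR hz => ?_⟩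
  obtain ⟨hball, hnear⟩ := hR a z le_rfl (mk_mem_horoball.2 (by linarith)) hzR
  set x := G (χ.inv (a, z))
  have hfst : ‖(χ.toFun x).1‖ ≤ ‖a‖ + 1 := by
    have hsub : ‖(χ.toFun x).1 - a‖ ≤ 1 := (norm_fst_le _).trans hnear
    linarith [norm_le_norm_add_norm_sub' (χ.toFun x).1 a]
  have hsnd : |(χ.toFun x).2.re - z.re| ≤ 1 := by
    rw [← sub_re]
    exact (abs_re_le_norm _).trans ((norm_snd_le _).trans hnear)
  have hsq : ‖(χ.toFun x).1‖ ^ 2 ≤ (‖a‖ + 1) ^ 2 := by gcongr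
  rw [barrier_of_norm_sub_le (mem_ball_iff_norm.1 hball).le, siegelHeight]
  linarith [(abs_le.1 hsnd).1]

/-- A Julia-type lemma: the constants do not depend on `G`, so they serve all iterates of a map at
once. -/
theorem exists_height_sub_le (χ : SiegelChart Ω p E)
    (hΩ : IsOpen Ω) (hb : Bornology.IsBounded Ω) {T : ℝ} (hT : χ.level ≤ T) :
    ∃ D S : ℝ, T ≤ S ∧ ∀ G : V → V, DifferentiableOn ℂ G Ω → MapsTo G Ω Ω → χ.TangentToId T G →
      ∀ Y ∈ horoball E S, G (χ.inv Y) ∈ ball p χ.r ∧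
        siegelHeight Y - D ≤ siegelHeight (χ.toFun (G (χ.inv Y))) := by
  obtain ⟨N, M, D, hN, hcont, hD⟩ := χ.exists_barrier hΩ hb
  have hr := χ.r_pos
  set S := max (T + 1) (T + 1 + D + N * χ.r ^ 2 / 4 + M + 1)
  refine ⟨T + 1 + D, S, (le_add_of_nonneg_right zero_le_one).trans (le_max_left _ _), ?_⟩
  rintro G hG hGΩ htan ⟨a, z⟩ hY
  obtain ⟨hY₁, hY₂⟩ := max_lt_iff.1 (mk_mem_horoball.1 hY)
  set b : ℝ := T + ‖a‖ ^ 2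
  have hmem {ζ : ℂ} (hζ : b < ζ.re) : (a, ζ) ∈ horoball E χ.level :=
    mk_mem_horoball.2 (by linarith)
  have hγ (ζ : ℂ) (hζ : b < ζ.re) : DifferentiableAt ℂ (fun ζ => G (χ.inv (a, ζ))) ζ := by
    have hG' := hG.differentiableAt (hΩ.mem_nhds (χ.inv_mem _ (hmem hζ)).1)
    exact hG'.comp ζ ((χ.differentiableAt_inv (hmem hζ)).comp ζ (by fun_prop))
  obtain ⟨B, hB⟩ := htan.exists_barrier_add_re_le (N := N) (M := M) a
  have hle := barrier_add_re_le hΩ hN hcont hD (lt_add_one b) hγ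
    (fun ζ hζ => hGΩ (χ.inv_mem _ (hmem hζ)).1)
    (hB.mono fun ζ h hζ => h ((lt_add_one b).trans_le hζ)) (show b + 1 ≤ z.re by linarith)
  rcases χ.barrier_eq_neg_siegelHeight_or_eq_outerBarrier (N := N) (M := M) (G (χ.inv (a, z)))
    with ⟨hlt, heq⟩ | ⟨-, heq⟩
  · refine ⟨mem_ball_iff_norm.2 (by linarith), ?_⟩
    rw [show siegelHeight (a, z) = z.re - ‖a‖ ^ 2 from rfl]
    linarith
  · rw [outerBarrier] at heq
    have : 0 ≤ N * ‖G (χ.inv (a, z)) - p‖ ^ 2 := by positivity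
    linarith

end SiegelChart

end JuliaEstimate

section BoundaryRigidity

theorem approximatesLinearOn_id_of_norm_sub_le {W : Type*} [NormedAddCommGroup W]
    [NormedSpace ℂ W] {f : W → W} {c : W} {s ε : ℝ} (hε : 0 < ε) (hs : 16 * ε ≤ s)
    (hf : DifferentiableOn ℂ f (ball c s)) (hfε : ∀ y ∈ ball c s, ‖f y - y‖ ≤ ε) :
    ApproximatesLinearOn f (ContinuousLinearMap.id ℂ W) (closedBall c (2 * ε)) (1 / 2) := by
  intro x hx y hy
  rw [mem_closedBall] at hx hy
  have hsub : ball y (8 * ε) ⊆ ball c s := ball_subset_ball' (by linarith)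
  have hxy : x ∈ ball y (8 * ε) := by
    rw [mem_ball]
    linarith [dist_triangle_right x y c]
  have hdiff : DifferentiableOn ℂ (fun u => f u - u) (ball y (8 * ε)) :=
    (hf.mono hsub).sub differentiableOn_id
  have hmaps : MapsTo (fun u => f u - u) (ball y (8 * ε)) (closedBall (f y - y) (2 * ε)) := by
    intro u hu
    rw [mem_closedBall, dist_eq_norm]
    have hy' := hfε y (hsub (mem_ball_self (by linarith)))
    linarith [norm_sub_le (f u - u) (f y - y), hfε u (hsub hu)]
  have hschwarz := dist_le_div_mul_dist_of_mapsTo_ball hdiff hmaps hxy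
  rw [dist_eq_norm, dist_eq_norm] at hschwarz
  calc ‖f x - f y - ContinuousLinearMap.id ℂ W (x - y)‖ = ‖f x - x - (f y - y)‖ := by
        rw [ContinuousLinearMap.id_apply]
        congr 1
        abel
    _ ≤ 2 * ε / (8 * ε) * ‖x - y‖ := hschwarz
    _ ≤ ((1 / 2 : NNReal) : ℝ) * ‖x - y‖ := by
      gcongr
      rw [div_le_iff₀ (by linarith)]
      push_cast
      linarith

theorem exists_eq_center_of_norm_sub_le {W : Type*} [NormedAddCommGroup W] [NormedSpace ℂ W]
    [CompleteSpace W] {f : W → W} {c : W} {s ε : ℝ} (hε : 0 < ε) (hs : 16 * ε ≤ s)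
    (hf : DifferentiableOn ℂ f (ball c s)) (hfε : ∀ y ∈ ball c s, ‖f y - y‖ ≤ ε) :
    ∃ y ∈ closedBall c (2 * ε), f y = c := by
  have hsurj := (approximatesLinearOn_id_of_norm_sub_le hε hs hf
    hfε).surjOn_closedBall_of_nonlinearRightInverse
    { toFun := id, nnnorm := 1, bound' := by simp, right_inv' := fun _ => rfl }
    (b := c) (ε := 2 * ε) (by linarith) subset_rfl
  refine hsurj (mem_closedBall'.2 ?_)
  rw [dist_eq_norm]
  refine (hfε c (mem_ball_self (by linarith))).trans_eq ?_
  push_cast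
  ring

theorem ball_subset_horoball {E : Type*} [NormedAddCommGroup E] {A T : ℝ} {a : E} {z : ℂ}
    (hA : 0 ≤ A) (ha : ‖a‖ ≤ A)
    (h : (a, z) ∈ horoball E (T + 1)) : ball (a, z) (1 / (2 * A + 2)) ⊆ horoball E T := by
  rintro ⟨b, w⟩ hb
  rw [mem_ball_iff_norm] at hb
  have hfst : ‖b - a‖ < 1 / (2 * A + 2) := (norm_fst_le _).trans_lt hb
  have hsnd : |w.re - z.re| < 1 / (2 * A + 2) := by
    rw [← sub_re]
    exact (abs_re_le_norm _).trans_lt ((norm_snd_le _).trans_lt hb)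
  rw [mk_mem_horoball] at h ⊢
  set s := 1 / (2 * A + 2) with hs
  have hsA : s * (2 * A + 2) = 1 := by
    rw [hs]
    field_simp
  have hs0 : 0 < s := by positivity
  have hsq : ‖b‖ ^ 2 ≤ (‖a‖ + s) ^ 2 := by
    gcongr
    linarith [norm_le_norm_add_norm_sub' b a]
  nlinarith [norm_nonneg a, (abs_lt.1 hsnd).1]

variable {V E : Type*} [NormedAddCommGroup V] [InnerProductSpace ℂ V]
  [NormedAddCommGroup E] [InnerProductSpace ℂ E] {Ω : Set V} {p : V} {χ : SiegelChart Ω p E}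

namespace SiegelChart

variable {T : ℝ} {F G : V → V}

/-- The map `F` read in the chart `χ`. -/
def conj (χ : SiegelChart Ω p E) (F : V → V) (Y : E × ℂ) : E × ℂ := χ.toFun (F (χ.inv Y))

theorem horoball_subset (hT : χ.level ≤ T) : horoball E T ⊆ horoball E χ.level :=
  fun _ hY => hT.trans_lt hY

theorem differentiableOn_conj (hF : DifferentiableOn ℂ F Ω) {U : Set (E × ℂ)}
    (hU : U ⊆ horoball E χ.level) (hFU : MapsTo (fun Y => F (χ.inv Y)) U (Ω ∩ ball p χ.r)) :
    DifferentiableOn ℂ (χ.conj F) U :=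
  χ.differentiableOn.comp
    (hF.comp (χ.differentiableOn_inv.mono hU) fun Y hY => (χ.inv_mem Y (hU hY)).1) hFU

theorem TangentToId.asymptoticToId (h : χ.TangentToId T F) : AsymptoticToId (χ.conj F) := by
  intro A ε hε
  obtain ⟨R, hR⟩ := h A ε hε
  refine ⟨max R (T + A ^ 2 + 1), fun a z ha hz => (hR a z ha ?_ ?_).2⟩
  · have : ‖a‖ ^ 2 ≤ A ^ 2 := by gcongr
    rw [mk_mem_horoball]
    linarith [le_max_right R (T + A ^ 2 + 1)]
  · linarith [le_max_left R (T + A ^ 2 + 1), re_le_norm z]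

theorem TangentToId.exists_forall_ball (h : χ.TangentToId T F) {A ε : ℝ} (hA : 0 ≤ A)
    (hε : 0 < ε) : ∃ R : ℝ, ∀ (a : E) (z : ℂ), ‖a‖ ≤ A → (a, z) ∈ horoball E (T + 1) → R ≤ ‖z‖ →
      ∀ Y ∈ ball (a, z) (1 / (2 * A + 2)),
        F (χ.inv Y) ∈ ball p (χ.r / 4) ∧ ‖χ.conj F Y - Y‖ ≤ ε := by
  obtain ⟨R, hR⟩ := h (A + 1) ε hε
  refine ⟨R + 1, fun a z ha hm hz Y hY => ?_⟩
  have hs : 1 / (2 * A + 2) ≤ 1 := by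
    rw [div_le_one (by linarith)]
    linarith
  have hYs := (mem_ball_iff_norm.1 hY).trans_le hs
  have hfst : ‖Y.1 - a‖ < 1 := (norm_fst_le _).trans_lt hYs
  have hsnd : ‖Y.2 - z‖ < 1 := (norm_snd_le _).trans_lt hYs
  refine hR Y.1 Y.2 ?_ (ball_subset_horoball hA ha hm hY) ?_
  · linarith [norm_le_norm_add_norm_sub' Y.1 a]
  · linarith [norm_le_norm_add_norm_sub Y.2 z]

theorem TangentToId.leftInverse [CompleteSpace E] (h : χ.TangentToId T F)
    (hid : χ.TangentToId T id) (hT : χ.level ≤ T) (hF : DifferentiableOn ℂ F Ω)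
    (hFΩ : MapsTo F Ω Ω) (hGF : LeftInvOn G F Ω) : χ.TangentToId (T + 1) G := by
  intro A ε hε
  have hr := χ.r_pos
  set B := max A 0
  have hB : 0 ≤ B := le_max_right _ _
  set s := 1 / (2 * B + 2)
  have hs0 : 0 < s := by positivity
  set δ := min (ε / 2) (s / 16)
  have hδ0 : 0 < δ := by positivity
  have hδε : 2 * δ ≤ ε := by linarith [min_le_left (ε / 2) (s / 16)]
  have hδs : 16 * δ ≤ s := by linarith [min_le_right (ε / 2) (s / 16)]
  obtain ⟨R₁, hR₁⟩ := h.exists_forall_ball hB hδ0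
  obtain ⟨R₂, hR₂⟩ := hid.exists_forall_ball hB one_pos
  refine ⟨max R₁ R₂, fun a z ha hm hz => ?_⟩
  have haB : ‖a‖ ≤ B := ha.trans (le_max_left _ _)
  have hsub : ball (a, z) s ⊆ horoball E χ.level :=
    (ball_subset_horoball hB haB hm).trans (horoball_subset hT)
  have hFnear := hR₁ a z haB hm ((le_max_left _ _).trans hz)
  have hFmem : MapsTo (fun Y => F (χ.inv Y)) (ball (a, z) s) (Ω ∩ ball p χ.r) := fun Y hY =>
    ⟨hFΩ (χ.inv_mem Y (hsub hY)).1, ball_subset_ball (by linarith) (hFnear Y hY).1⟩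
  obtain ⟨Y, hY, hYeq⟩ := exists_eq_center_of_norm_sub_le hδ0 hδs
    (differentiableOn_conj hF hsub hFmem) fun Y hY => (hFnear Y hY).2
  have hYs : Y ∈ ball (a, z) s := closedBall_subset_ball (by linarith) hY
  have hinv : χ.inv (a, z) = F (χ.inv Y) := by
    have hcenter := hsub (mem_ball_self hs0)
    rw [← hYeq] at hcenter ⊢
    exact χ.left_inv _ (hFmem hYs) hcenter
  rw [hinv, hGF (χ.inv_mem Y (hsub hYs)).1, χ.right_inv Y (hsub hYs)]
  refine ⟨(hR₂ a z haB hm ((le_max_right _ _).trans hz) Y hYs).1, ?_⟩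
  rw [← dist_eq_norm]
  exact (mem_closedBall.1 hY).trans hδε

/-- The upper bound for the change of height under `F` is the Julia estimate for its left inverse
`G`. -/
theorem exists_nearlyHeightPreserving_conj [CompleteSpace E] (χ : SiegelChart Ω p E)
    (hΩ : IsOpen Ω) (hb : Bornology.IsBounded Ω) (hid : χ.TangentToId χ.level id) :
    ∃ T C : ℝ, χ.level ≤ T ∧ ∀ F G : V → V, DifferentiableOn ℂ F Ω → MapsTo F Ω Ω →
      DifferentiableOn ℂ G Ω → MapsTo G Ω Ω → LeftInvOn G F Ω → χ.TangentToId χ.level F →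
        NearlyHeightPreserving T C (χ.conj F) ∧
          ∀ Y ∈ horoball E T, χ.inv (χ.conj F Y) = F (χ.inv Y) := by
  obtain ⟨D₁, S₁, hS₁, hheight₁⟩ := χ.exists_height_sub_le hΩ hb le_rfl
  obtain ⟨D₂, S₂, hS₂, hheight₂⟩ := χ.exists_height_sub_le (T := χ.level + 1) hΩ hb (by linarith)
  set T := max S₁ (S₂ + D₁)
  have hTS₁ : S₁ ≤ T := le_max_left _ _
  have hTS₂ : S₂ + D₁ ≤ T := le_max_right _ _
  have hsub : horoball E T ⊆ horoball E χ.level := horoball_subset (hS₁.trans hTS₁)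
  refine ⟨T, max D₁ D₂, hS₁.trans hTS₁, fun F G hF hFΩ hG hGΩ hGF htan => ?_⟩
  have hlow (Y : E × ℂ) (hY : Y ∈ horoball E T) := hheight₁ F hF hFΩ htan Y (hTS₁.trans_lt hY)
  have hmem : MapsTo (fun Y => F (χ.inv Y)) (horoball E T) (Ω ∩ ball p χ.r) := fun Y hY =>
    ⟨hFΩ (χ.inv_mem Y (hsub hY)).1, (hlow Y hY).1⟩
  have himg (Y : E × ℂ) (hY : Y ∈ horoball E T) : χ.conj F Y ∈ horoball E S₂ := by
    rw [mem_horoball] at hY ⊢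
    have := (hlow Y hY).2
    unfold conj
    linarith
  have hback (Y : E × ℂ) (hY : Y ∈ horoball E T) : χ.inv (χ.conj F Y) = F (χ.inv Y) :=
    χ.left_inv _ (hmem hY) (horoball_subset (by linarith) (himg Y hY))
  refine ⟨⟨differentiableOn_conj hF hsub hmem, fun Y hY => ?_⟩, hback⟩
  have hup := (hheight₂ G hG hGΩ (htan.leftInverse hid le_rfl hF hFΩ hGF) _ (himg Y hY)).2
  rw [hback Y hY, hGF (χ.inv_mem Y (hsub hY)).1, χ.right_inv Y (hsub hY)] at hup
  have hdown : siegelHeight Y - D₁ ≤ siegelHeight (χ.conj F Y) := (hlow Y hY).2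
  rw [abs_le]
  constructor <;> linarith [le_max_left D₁ D₂, le_max_right D₁ D₂]

theorem exists_isOpen_eqOn_id_of_conj (hΩ : IsOpen Ω) (hT : χ.level ≤ T)
    (hinv : ∀ Y ∈ horoball E T, χ.inv (χ.conj F Y) = F (χ.inv Y)) {X δ : ℝ} (hδ : 0 < δ)
    (hX : ∀ (a : E) (z : ℂ), ‖a‖ < δ → X < z.re → χ.conj F (a, z) = (a, z)) :
    ∃ U ⊆ Ω, IsOpen U ∧ U.Nonempty ∧ EqOn F id U := by
  set W : Set (E × ℂ) := {Y | ‖Y.1‖ < δ} ∩ ({Y | X < Y.2.re} ∩ horoball E T)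
  have hW : IsOpen W := (isOpen_lt (by fun_prop) continuous_const).inter
    ((isOpen_lt continuous_const (by fun_prop)).inter (isOpen_horoball T))
  refine ⟨(Ω ∩ ball p χ.r) ∩ χ.toFun ⁻¹' W, fun x hx => hx.1.1,
    χ.differentiableOn.continuousOn.isOpen_inter_preimage (hΩ.inter isOpen_ball) hW, ?_, ?_⟩
  · have hY : ((0 : E), ((max X T + 1 : ℝ) : ℂ)) ∈ W := by
      simp only [W, mem_inter_iff, mem_ofPred_eq, mk_mem_horoball, ofReal_re, norm_zero]
      exact ⟨hδ, by linarith [le_max_left X T], by linarith [le_max_right X T]⟩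
    refine ⟨_, χ.inv_mem _ (horoball_subset hT hY.2.2), ?_⟩
    rwa [mem_preimage, χ.right_inv _ (horoball_subset hT hY.2.2)]
  · rintro x ⟨hx, hxW⟩
    have hfix := hX (χ.toFun x).1 (χ.toFun x).2 hxW.1 hxW.2.1
    have hFx := hinv _ hxW.2.2
    rw [Prod.mk.eta] at hfix
    rw [hfix, χ.left_inv x hx (horoball_subset hT hxW.2.2)] at hFx
    exact hFx.symm

theorem exists_isOpen_eqOn_id [FiniteDimensional ℂ E] (χ : SiegelChart Ω p E)
    (hΩ : IsOpen Ω) (hb : Bornology.IsBounded Ω)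
    (hF : DifferentiableOn ℂ F Ω) (hFΩ : MapsTo F Ω Ω)
    (hG : DifferentiableOn ℂ G Ω) (hGΩ : MapsTo G Ω Ω) (hGF : LeftInvOn G F Ω)
    (htan : ∀ j : ℕ, χ.TangentToId χ.level F^[j]) :
    ∃ U ⊆ Ω, IsOpen U ∧ U.Nonempty ∧ EqOn F id U := by
  have : CompleteSpace E := FiniteDimensional.complete ℂ E
  obtain ⟨T, C, hT, hconj⟩ := χ.exists_nearlyHeightPreserving_conj hΩ hb (htan 0)
  have hGFj (j : ℕ) : LeftInvOn G^[j] F^[j] Ω := by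
    induction j with
    | zero => exact fun x _ => rfl
    | succ j ih =>
      rw [iterate_succ, iterate_succ']
      exact ih.comp hGF (hFΩ.iterate j)
  have hiter (j : ℕ) := hconj F^[j] G^[j] (hF.iterate hFΩ j) (hFΩ.iterate j)
    (hG.iterate hGΩ j) (hGΩ.iterate j) (hGFj j) (htan j)
  obtain ⟨X, hX⟩ := eq_id_of_nearlyHeightPreserving_iterates (G := fun j => χ.conj F^[j])
    (fun j => (hiter j).1) (fun j => (htan j).asymptoticToId)
    (fun Y hY => χ.right_inv Y (horoball_subset hT hY))
    (fun j Y hY => congrArg (χ.toFun ∘ F^[j]) ((hiter 1).2 Y hY).symm)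
    (fun j Y hY => by
      rw [conj, iterate_succ_apply', ← (hiter j).2 Y hY]
      rfl)
  exact exists_isOpen_eqOn_id_of_conj hΩ hT (hiter 1).2 (by norm_num) hX

end SiegelChart

end BoundaryRigidity

section NormalForm

/-- The inversion exchanging the origin and infinity in the Siegel model. -/
def siegelInversion {E : Type*} [AddCommGroup E] [Module ℂ E] (w : E × ℂ) : E × ℂ :=
  (w.2⁻¹ • w.1, w.2⁻¹)

theorem siegelInversion_siegelInversion {E : Type*} [AddCommGroup E] [Module ℂ E] {w : E × ℂ}
    (hw : w.2 ≠ 0) : siegelInversion (siegelInversion w) = w := by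
  ext1
  · simp [siegelInversion, smul_smul, hw]
  · simp [siegelInversion]

theorem isLittleO_iterate_sub {V : Type*} [NormedAddCommGroup V] {Ω : Set V} {p : V} {F : V → V}
    (hFΩ : MapsTo F Ω Ω) (hF : (fun x => F x - x) =o[𝓝[Ω] p] fun x => ‖x - p‖ ^ 2) (j : ℕ) :
    (fun x => F^[j] x - x) =o[𝓝[Ω] p] fun x => ‖x - p‖ ^ 2 := by
  have hsub : Tendsto (fun x => x - p) (𝓝[Ω] p) (𝓝 0) :=
    (tendsto_sub_nhds_zero_iff.2 tendsto_id).mono_left nhdsWithin_le_nhds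
  have hsq : (fun x => ‖x - p‖ ^ 2) =O[𝓝[Ω] p] fun x => x - p :=
    ((Asymptotics.isLittleO_norm_pow_id (E' := V) one_lt_two).comp_tendsto hsub).isBigO
  have hFp : (fun x => F x - p) =O[𝓝[Ω] p] fun x => x - p :=
    ((hF.isBigO.trans hsq).add (Asymptotics.isBigO_refl _ _)).congr_left fun x => by abel
  have hFt : Tendsto F (𝓝[Ω] p) (𝓝[Ω] p) :=
    tendsto_nhdsWithin_iff.2 ⟨tendsto_sub_nhds_zero_iff.1 (hFp.trans_tendsto hsub),
      eventually_nhdsWithin_of_forall hFΩ⟩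
  induction j with
  | zero => simp
  | succ j ih =>
    refine (((ih.comp_tendsto hFt).trans_isBigO (hFp.norm_norm.pow 2)).add hF).congr_left
      fun x => ?_
    simp [iterate_succ_apply]

theorem siegelHeight_le_norm_snd {E : Type*} [NormedAddCommGroup E] (w : E × ℂ) :
    siegelHeight w ≤ ‖w.2‖ :=
  (sub_le_self _ (sq_nonneg _)).trans (re_le_norm _)

theorem lt_norm_snd_of_mem_horoball {E : Type*} [NormedAddCommGroup E] {T : ℝ} {Y : E × ℂ}
    (hY : Y ∈ horoball E T) : T < ‖Y.2‖ :=
  hY.trans_le (siegelHeight_le_norm_snd Y)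

variable {V E : Type*} [NormedAddCommGroup V] [InnerProductSpace ℂ V]
  [NormedAddCommGroup E] [InnerProductSpace ℂ E]

theorem differentiableAt_siegelInversion {w : E × ℂ} (hw : w.2 ≠ 0) :
    DifferentiableAt ℂ (siegelInversion : E × ℂ → E × ℂ) w := by
  have hinv : DifferentiableAt ℂ (fun w : E × ℂ => w.2⁻¹) w := differentiableAt_snd.inv hw
  exact (hinv.smul differentiableAt_fst).prodMk hinv

theorem siegelHeight_siegelInversion_mul {w : E × ℂ} (hw : w.2 ≠ 0) :
    siegelHeight (siegelInversion w) * ‖w.2‖ ^ 2 = siegelHeight w := by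
  have hw' : ‖w.2‖ ≠ 0 := norm_ne_zero_iff.2 hw
  simp only [siegelHeight, siegelInversion, norm_smul, norm_inv, inv_re, normSq_eq_norm_sq]
  field_simp

theorem norm_siegelInversion_fst_sq_le {T : ℝ} (hT : 0 ≤ T) {Y : E × ℂ} (hY : Y ∈ horoball E T) :
    ‖(siegelInversion Y).1‖ ^ 2 ≤ ‖Y.2‖⁻¹ := by
  have hpos : 0 < ‖Y.2‖ := hT.trans_lt (lt_norm_snd_of_mem_horoball hY)
  have hsq : ‖Y.1‖ ^ 2 ≤ ‖Y.2‖ := by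
    have hheight : T < Y.2.re - ‖Y.1‖ ^ 2 := hY
    linarith [re_le_norm Y.2]
  calc ‖(siegelInversion Y).1‖ ^ 2 = (‖Y.2‖ ^ 2)⁻¹ * ‖Y.1‖ ^ 2 := by
        rw [siegelInversion, norm_smul, norm_inv, mul_pow, inv_pow]
    _ ≤ (‖Y.2‖ ^ 2)⁻¹ * ‖Y.2‖ := by gcongr
    _ = ‖Y.2‖⁻¹ := by field_simp

theorem norm_inv_le_of_norm_sub_inv_le {𝕜 : Type*} [NormedDivisionRing 𝕜] {z v : 𝕜} (hz : z ≠ 0)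
    (h : ‖v - z⁻¹‖ ≤ (2 * ‖z‖)⁻¹) : v ≠ 0 ∧ ‖v⁻¹‖ ≤ 2 * ‖z‖ := by
  have hv : (2 * ‖z‖)⁻¹ ≤ ‖v‖ := by
    have htri : ‖z⁻¹‖ ≤ ‖v‖ + ‖v - z⁻¹‖ := norm_le_insert _ _
    have hhalf : ‖z‖⁻¹ = 2 * (2 * ‖z‖)⁻¹ := by field_simp
    rw [norm_inv, hhalf] at htri
    linarith
  refine ⟨norm_pos_iff.1 (lt_of_lt_of_le (by positivity) hv), ?_⟩
  rw [norm_inv]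
  exact inv_le_of_inv_le₀ (by positivity) hv

theorem norm_siegelInversion_sub_le {a : E} {z : ℂ} {w : E × ℂ} {η : ℝ} (hz : 1 ≤ ‖z‖)
    (hη0 : 0 ≤ η) (hη : η ≤ 1 / 2) (hw : ‖w - siegelInversion (a, z)‖ ≤ η / ‖z‖ ^ 2) :
    ‖siegelInversion w - (a, z)‖ ≤ 2 * η * (1 + ‖a‖) := by
  have hzne : z ≠ 0 := norm_pos_iff.1 (by linarith)
  have hfst : ‖w.1 - z⁻¹ • a‖ ≤ η / ‖z‖ ^ 2 := (norm_fst_le _).trans hw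
  have hsnd : ‖w.2 - z⁻¹‖ ≤ η / ‖z‖ ^ 2 := (norm_snd_le _).trans hw
  obtain ⟨hwne, hwinv⟩ := norm_inv_le_of_norm_sub_inv_le hzne <| hsnd.trans <| by
    rw [div_le_iff₀ (by positivity)]
    field_simp
    nlinarith
  rw [Prod.norm_def, max_le_iff]
  constructor
  · have hdiff : (siegelInversion w - (a, z)).1 =
        w.2⁻¹ • ((w.1 - z⁻¹ • a) - (w.2 - z⁻¹) • a) := by
      simp only [siegelInversion, Prod.fst_sub, sub_smul, smul_sub, smul_smul,
        inv_mul_cancel₀ hwne, one_smul]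
      abel
    rw [hdiff, norm_smul]
    calc ‖w.2⁻¹‖ * ‖(w.1 - z⁻¹ • a) - (w.2 - z⁻¹) • a‖
        ≤ (2 * ‖z‖) * (η / ‖z‖ ^ 2 + η / ‖z‖ ^ 2 * ‖a‖) := by
          gcongr
          refine (norm_sub_le _ _).trans ?_
          rw [norm_smul]
          gcongr
      _ = 2 * η * (1 + ‖a‖) / ‖z‖ := by field_simp
      _ ≤ 2 * η * (1 + ‖a‖) := div_le_self (by positivity) hz
  · have hdiff : (siegelInversion w - (a, z)).2 = w.2⁻¹ * (z * -(w.2 - z⁻¹)) := by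
      simp only [siegelInversion, Prod.snd_sub]
      field_simp
      ring
    rw [hdiff, norm_mul, norm_mul, norm_neg]
    calc ‖w.2⁻¹‖ * (‖z‖ * ‖w.2 - z⁻¹‖) ≤ (2 * ‖z‖) * (‖z‖ * (η / ‖z‖ ^ 2)) := by gcongr
      _ = 2 * η := by field_simp
      _ ≤ 2 * η * (1 + ‖a‖) := le_mul_of_one_le_right (by positivity) (by simp)

/-- Holomorphic coordinates centred at a boundary point `p` of `Ω` in which `Ω` agrees with the
Siegel model up to terms of weight at least two: the coordinates of `p + x` are `toFun x`, and the
weight is the order of vanishing, with the `ℂ`-coordinate counted once and the `E`-coordinate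
one half. -/
structure SiegelNormalForm (Ω : Set V) (p : V) (E : Type*) [NormedAddCommGroup E]
    [InnerProductSpace ℂ E] where
  /-- the coordinates -/
  toFun : V → E × ℂ
  /-- the inverse map -/
  inv : E × ℂ → V
  /-- the radius of definition of the coordinates -/
  r : ℝ
  /-- the radius of definition of the inverse -/
  κ : ℝ
  /-- the constant in the estimate of the terms of higher weight -/
  C : ℝ
  /-- the Lipschitz constant of the inverse at the origin -/
  K : ℝ
  /-- the Lipschitz constant of the coordinates -/
  L : ℝ
  r_pos : 0 < r
  κ_pos : 0 < κ
  C_nonneg : 0 ≤ C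
  K_pos : 0 < K
  L_nonneg : 0 ≤ L
  differentiableOn : DifferentiableOn ℂ toFun (ball 0 r)
  injOn : InjOn toFun (ball 0 r)
  lipschitz : ∀ x ∈ ball 0 r, ∀ y ∈ ball 0 r, ‖toFun x - toFun y‖ ≤ L * ‖x - y‖
  norm_le : ∀ x ∈ ball 0 r, ‖x‖ ≤ K * ‖toFun x‖
  differentiableOn_inv : DifferentiableOn ℂ inv (ball 0 κ)
  inv_mem : ∀ w ∈ ball 0 κ, inv w ∈ ball 0 r
  right_inv : ∀ w ∈ ball 0 κ, toFun (inv w) = w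
  small : ∀ x ∈ ball 0 r, (2 * C + 1) * ‖toFun x‖ ≤ 1
  notMem : p ∉ Ω
  le_of_mem : ∀ x ∈ ball 0 r, p + x ∈ Ω →
    -(C * (‖(toFun x).2‖ ^ 2 + ‖(toFun x).1‖ ^ 4)) ≤ siegelHeight (toFun x)
  mem_of_lt : ∀ x ∈ ball 0 r,
    C * (‖(toFun x).2‖ ^ 2 + ‖(toFun x).1‖ ^ 4) < siegelHeight (toFun x) → p + x ∈ Ω

namespace SiegelNormalForm

variable {Ω : Set V} {p : V} (ν : SiegelNormalForm Ω p E) {x : V} {Y : E × ℂ}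

theorem mul_norm_toFun_le (hx : x ∈ ball 0 ν.r) : ν.C * ‖ν.toFun x‖ ≤ 1 / 2 := by
  linarith [ν.small x hx, norm_nonneg (ν.toFun x)]

theorem norm_toFun_le_one (hx : x ∈ ball 0 ν.r) : ‖ν.toFun x‖ ≤ 1 := by
  linarith [ν.small x hx, mul_nonneg ν.C_nonneg (norm_nonneg (ν.toFun x))]

theorem norm_fst_sq_le (hx : x ∈ ball 0 ν.r) (hΩ : p + x ∈ Ω) :
    ‖(ν.toFun x).1‖ ^ 2 ≤ 3 * ‖(ν.toFun x).2‖ := by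
  have hC := ν.C_nonneg
  have hsmall := ν.mul_norm_toFun_le hx
  have hone := ν.norm_toFun_le_one hx
  have hheight := ν.le_of_mem x hx hΩ
  rw [siegelHeight] at hheight
  set w := ν.toFun x
  have hsnd : ν.C * ‖w.2‖ ^ 2 ≤ 1 / 2 * ‖w.2‖ := by
    calc ν.C * ‖w.2‖ ^ 2 ≤ ν.C * (‖w‖ * ‖w.2‖) := by
          rw [sq]
          gcongr
          exact norm_snd_le w
      _ = ν.C * ‖w‖ * ‖w.2‖ := by ring
      _ ≤ 1 / 2 * ‖w.2‖ := by gcongr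
  have hfst : ν.C * ‖w.1‖ ^ 4 ≤ 1 / 2 * ‖w.1‖ ^ 2 := by
    calc ν.C * ‖w.1‖ ^ 4 = ν.C * ‖w.1‖ * ‖w.1‖ * ‖w.1‖ ^ 2 := by ring
      _ ≤ ν.C * ‖w‖ * 1 * ‖w.1‖ ^ 2 := by
        gcongr
        · exact norm_fst_le w
        · exact (norm_fst_le w).trans hone
      _ ≤ 1 / 2 * ‖w.1‖ ^ 2 := by
        rw [mul_one]
        gcongr
  linarith [re_le_norm w.2]

theorem norm_toFun_sq_le (hx : x ∈ ball 0 ν.r) (hΩ : p + x ∈ Ω) :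
    ‖ν.toFun x‖ ^ 2 ≤ 3 * ‖(ν.toFun x).2‖ := by
  have hone := ν.norm_toFun_le_one hx
  have hfst := ν.norm_fst_sq_le hx hΩ
  rcases max_choice ‖(ν.toFun x).1‖ ‖(ν.toFun x).2‖ with h | h <;> rw [← Prod.norm_def] at h
  · rwa [h]
  · rw [← h]
    nlinarith [norm_nonneg (ν.toFun x)]

theorem snd_ne_zero (hx : x ∈ ball 0 ν.r) (hΩ : p + x ∈ Ω) : (ν.toFun x).2 ≠ 0 := by
  intro hsnd
  have hsq := ν.norm_toFun_sq_le hx hΩ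
  rw [hsnd, norm_zero, mul_zero] at hsq
  have hzero : ‖ν.toFun x‖ = 0 := pow_eq_zero_iff two_ne_zero |>.1 (hsq.antisymm (sq_nonneg _))
  have hx0 := ν.norm_le x hx
  rw [hzero, mul_zero, norm_le_zero_iff] at hx0
  rw [hx0, add_zero] at hΩ
  exact ν.notMem hΩ

theorem neg_le_siegelHeight (hx : x ∈ ball 0 ν.r) (hΩ : p + x ∈ Ω) :
    -(10 * ν.C) ≤ siegelHeight (siegelInversion (ν.toFun x)) := by
  have hC := ν.C_nonneg
  have hne := ν.snd_ne_zero hx hΩ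
  have hpow : ‖(ν.toFun x).1‖ ^ 4 ≤ 9 * ‖(ν.toFun x).2‖ ^ 2 := by
    nlinarith [ν.norm_fst_sq_le hx hΩ, sq_nonneg ‖(ν.toFun x).1‖]
  refine le_of_mul_le_mul_right ?_ (pow_pos (norm_pos_iff.2 hne) 2)
  rw [siegelHeight_siegelInversion_mul hne]
  refine le_trans ?_ (ν.le_of_mem x hx hΩ)
  linarith [mul_le_mul_of_nonneg_left hpow hC]

theorem siegelHeight_le (hx : x ∈ ball 0 ν.r) (hΩ : p + x ∈ Ω) (hxr : ν.r / 4 ≤ ‖x‖) :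
    siegelHeight (siegelInversion (ν.toFun x)) ≤ 48 * ν.K ^ 2 / ν.r ^ 2 := by
  have hr := ν.r_pos
  have hv : 0 < ‖(ν.toFun x).2‖ := norm_pos_iff.2 (ν.snd_ne_zero hx hΩ)
  have hrv : ν.r ^ 2 ≤ 48 * ν.K ^ 2 * ‖(ν.toFun x).2‖ := by
    have hsq : (ν.r / 4) ^ 2 ≤ (ν.K * ‖ν.toFun x‖) ^ 2 := by
      gcongr
      exact hxr.trans (ν.norm_le x hx)
    linarith [mul_le_mul_of_nonneg_left (ν.norm_toFun_sq_le hx hΩ) (sq_nonneg ν.K)]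
  calc siegelHeight (siegelInversion (ν.toFun x)) ≤ ‖((ν.toFun x).2)⁻¹‖ :=
        siegelHeight_le_norm_snd _
    _ = 1 / ‖(ν.toFun x).2‖ := by rw [norm_inv, one_div]
    _ ≤ 48 * ν.K ^ 2 / ν.r ^ 2 := by
      rw [div_le_div_iff₀ hv (by positivity)]
      linarith

/-- The level above which the chart at infinity is defined. -/
def level : ℝ := 2 * ν.C + 1 + 1 / ν.κ + 1 / ν.κ ^ 2

theorem level_pos : 0 < ν.level := by
  have := ν.κ_pos
  have := ν.C_nonneg
  unfold level
  positivity

theorem snd_ne_zero_of_mem_horoball (hY : Y ∈ horoball E ν.level) : Y.2 ≠ 0 :=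
  norm_pos_iff.1 (ν.level_pos.trans (lt_norm_snd_of_mem_horoball hY))

theorem siegelInversion_mem_ball (hY : Y ∈ horoball E ν.level) :
    siegelInversion Y ∈ ball 0 ν.κ := by
  have hκ := ν.κ_pos
  have hC := ν.C_nonneg
  have hfst := norm_siegelInversion_fst_sq_le ν.level_pos.le hY
  have hpos : 0 < ‖Y.2‖ := norm_pos_iff.2 (ν.snd_ne_zero_of_mem_horoball hY)
  have hlevel := lt_norm_snd_of_mem_horoball hY
  have hinv : 0 < 1 / ν.κ := by positivity
  have hinvsq : 0 < 1 / ν.κ ^ 2 := by positivity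
  unfold level at hlevel
  have hκY : ‖Y.2‖⁻¹ < ν.κ := by
    rw [inv_lt_comm₀ hpos hκ, ← one_div]
    linarith
  have hκY2 : ‖Y.2‖⁻¹ < ν.κ ^ 2 := by
    rw [inv_lt_comm₀ hpos (by positivity), ← one_div]
    linarith
  rw [mem_ball_zero_iff, Prod.norm_def, max_lt_iff]
  refine ⟨lt_of_pow_lt_pow_left₀ 2 hκ.le (hfst.trans_lt hκY2), ?_⟩
  rwa [siegelInversion, norm_inv]

theorem inv_mem_of_mem_horoball (hY : Y ∈ horoball E ν.level) :
    p + ν.inv (siegelInversion Y) ∈ Ω := by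
  have hκ := ν.κ_pos
  have hC := ν.C_nonneg
  have hmem := ν.siegelInversion_mem_ball hY
  have hne := ν.snd_ne_zero_of_mem_horoball hY
  have hfst := norm_siegelInversion_fst_sq_le ν.level_pos.le hY
  rw [← norm_inv] at hfst
  change _ ≤ ‖(siegelInversion Y).2‖ at hfst
  refine ν.mem_of_lt _ (ν.inv_mem _ hmem) ?_
  rw [ν.right_inv _ hmem]
  have hne' : (siegelInversion Y).2 ≠ 0 := inv_ne_zero hne
  have hpow : ‖(siegelInversion Y).1‖ ^ 4 ≤ ‖(siegelInversion Y).2‖ ^ 2 := by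
    nlinarith [sq_nonneg ‖(siegelInversion Y).1‖]
  have hheight : 2 * ν.C < siegelHeight Y := by
    have hinv : 0 < 1 / ν.κ := by positivity
    have hinvsq : 0 < 1 / ν.κ ^ 2 := by positivity
    have hlevel : ν.level < siegelHeight Y := hY
    unfold level at hlevel
    linarith
  rw [← siegelHeight_siegelInversion_mul hne', siegelInversion_siegelInversion hne]
  calc ν.C * (‖(siegelInversion Y).2‖ ^ 2 + ‖(siegelInversion Y).1‖ ^ 4)
      ≤ ν.C * (‖(siegelInversion Y).2‖ ^ 2 + ‖(siegelInversion Y).2‖ ^ 2) := by gcongr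
    _ = 2 * ν.C * ‖(siegelInversion Y).2‖ ^ 2 := by ring
    _ < siegelHeight Y * ‖(siegelInversion Y).2‖ ^ 2 := by gcongr

theorem sub_mem_ball (hx : x ∈ Ω ∩ ball p ν.r) : x - p ∈ ball 0 ν.r :=
  mem_ball_zero_iff.2 (mem_ball_iff_norm.1 hx.2)

theorem snd_toFun_sub_ne_zero (hx : x ∈ Ω ∩ ball p ν.r) : (ν.toFun (x - p)).2 ≠ 0 :=
  ν.snd_ne_zero (ν.sub_mem_ball hx) (by simpa using hx.1)

/-- The Siegel chart at infinity obtained from a normal form by inversion. -/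
def chart : SiegelChart Ω p E where
  toFun x := siegelInversion (ν.toFun (x - p))
  inv Y := p + ν.inv (siegelInversion Y)
  r := ν.r
  level := ν.level
  r_pos := ν.r_pos
  differentiableOn_inv Y hY := by
    have hmem := ν.siegelInversion_mem_ball hY
    have hinv := ν.differentiableOn_inv.differentiableAt (isOpen_ball.mem_nhds hmem)
    exact ((hinv.comp Y (differentiableAt_siegelInversion
      (ν.snd_ne_zero_of_mem_horoball hY))).const_add p).differentiableWithinAt
  inv_mem Y hY := ⟨ν.inv_mem_of_mem_horoball hY, by
    simpa [dist_eq_norm] using ν.inv_mem _ (ν.siegelInversion_mem_ball hY)⟩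
  right_inv Y hY := by
    rw [add_sub_cancel_left, ν.right_inv _ (ν.siegelInversion_mem_ball hY),
      siegelInversion_siegelInversion (ν.snd_ne_zero_of_mem_horoball hY)]
  differentiableOn x hx := by
    have hmem := ν.sub_mem_ball hx
    have hto := ν.differentiableOn.differentiableAt (isOpen_ball.mem_nhds hmem)
    exact ((differentiableAt_siegelInversion (ν.snd_toFun_sub_ne_zero hx)).comp x
      (hto.comp x (differentiableAt_id.sub_const p))).differentiableWithinAt
  left_inv x hx hY := by
    have hmem := ν.siegelInversion_mem_ball hY
    rw [siegelInversion_siegelInversion (ν.snd_toFun_sub_ne_zero hx)] at hmem ⊢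
    rw [ν.injOn (ν.inv_mem _ hmem) (ν.sub_mem_ball hx) (ν.right_inv _ hmem)]
    abel
  height_bddBelow := ⟨10 * ν.C, fun x hx =>
    ν.neg_le_siegelHeight (ν.sub_mem_ball hx) (by simpa using hx.1)⟩
  height_bddAbove := ⟨48 * ν.K ^ 2 / ν.r ^ 2, fun x hx hxr =>
    ν.siegelHeight_le (ν.sub_mem_ball hx) (by simpa using hx.1) hxr⟩

theorem norm_inv_siegelInversion_le {a : E} {z : ℂ} (hY : (a, z) ∈ horoball E ν.level) :
    ‖ν.inv (siegelInversion (a, z))‖ ≤ ν.K * (1 + ‖a‖) / ‖z‖ := by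
  have hK := ν.K_pos
  have hmem := ν.siegelInversion_mem_ball hY
  refine (ν.norm_le _ (ν.inv_mem _ hmem)).trans ?_
  rw [ν.right_inv _ hmem, mul_div_assoc]
  gcongr
  rw [siegelInversion, Prod.norm_def, norm_smul, norm_inv, max_le_iff, ← div_eq_inv_mul,
    ← one_div]
  constructor <;> gcongr <;> simp

theorem chart_toFun_near_of_norm_sub_le {a : E} {z : ℂ} {y : V} {δ η : ℝ}
    (hY : (a, z) ∈ horoball E ν.level) (hz : 1 ≤ ‖z‖) (hδ : 0 ≤ δ) (hδ1 : δ ≤ 1) (hη : η ≤ 1 / 2)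
    (hδη : ν.L * (δ * (ν.K * (1 + ‖a‖)) ^ 2) ≤ η)
    (hζ1 : ‖ν.inv (siegelInversion (a, z))‖ ≤ 1)
    (hζr : ‖ν.inv (siegelInversion (a, z))‖ < ν.r / 8)
    (hy : ‖y - (p + ν.inv (siegelInversion (a, z)))‖ ≤
      δ * ‖ν.inv (siegelInversion (a, z))‖ ^ 2) :
    y ∈ ball p (ν.r / 4) ∧ ‖ν.chart.toFun y - (a, z)‖ ≤ 2 * η * (1 + ‖a‖) := by
  have hr := ν.r_pos
  have hL := ν.L_nonneg
  have hmem := ν.siegelInversion_mem_ball hY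
  have hζz := ν.norm_inv_siegelInversion_le hY
  have hζ := ν.inv_mem _ hmem
  have hζw := ν.right_inv _ hmem
  set ζ := ν.inv (siegelInversion (a, z))
  have hyp : ‖y - p‖ < ν.r / 4 := by
    have htri : ‖y - p‖ ≤ ‖ζ‖ + ‖y - (p + ζ)‖ := by
      rw [← sub_sub]
      exact norm_le_insert' _ _
    have hsq : δ * ‖ζ‖ ^ 2 ≤ 1 * ‖ζ‖ := by
      gcongr
      exact pow_le_of_le_one (norm_nonneg _) hζ1 two_ne_zero
    linarith
  refine ⟨mem_ball_iff_norm.2 hyp, norm_siegelInversion_sub_le hz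
    (hδη.trans' (by positivity)) hη ?_⟩
  rw [← hζw]
  calc ‖ν.toFun (y - p) - ν.toFun ζ‖ ≤ ν.L * ‖y - p - ζ‖ :=
        ν.lipschitz _ (by rw [mem_ball_zero_iff]; linarith) _ hζ
    _ ≤ ν.L * (δ * (ν.K * (1 + ‖a‖) / ‖z‖) ^ 2) := by
      rw [sub_sub]
      gcongr
      exact hy.trans (by gcongr)
    _ = ν.L * (δ * (ν.K * (1 + ‖a‖)) ^ 2) / ‖z‖ ^ 2 := by ring
    _ ≤ η / ‖z‖ ^ 2 := by gcongr

/-- At a point `ζ` with coordinates `siegelInversion (a, z)` one has `‖ζ‖ = O(1 / ‖z‖)`, so a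
displacement `o(‖ζ‖ ^ 2)` is `o(1 / ‖z‖ ^ 2)` there, which the inversion turns into `o(1)`. -/
theorem tangentToId_chart {F : V → V}
    (hF : (fun x => F x - x) =o[𝓝[Ω] p] fun x => ‖x - p‖ ^ 2) :
    ν.chart.TangentToId ν.chart.level F := by
  intro A ε hε
  have hr := ν.r_pos
  have hK := ν.K_pos
  have hL := ν.L_nonneg
  set B := 1 + max A 0
  set η := min (1 / 2) (ε / (2 * B))
  have hηε : η * (2 * B) ≤ ε := (le_div_iff₀ (by positivity)).1 (min_le_right _ _)
  set δ := min 1 (η / (ν.L * (ν.K * B) ^ 2 + 1))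
  have hδ : 0 < δ := by positivity
  have hδη : δ * (ν.L * (ν.K * B) ^ 2 + 1) ≤ η :=
    (le_div_iff₀ (by positivity)).1 (min_le_right _ _)
  obtain ⟨ρ, hρ, hρF⟩ := Metric.eventually_nhds_iff.1 (eventually_nhdsWithin_iff.1 (hF.bound hδ))
  set τ := min ρ (min (ν.r / 8) 1)
  have hτ : 0 < τ := by positivity
  have hτr : τ ≤ ν.r / 8 := (min_le_right _ _).trans (min_le_left _ _)
  have hτ1 : τ ≤ 1 := (min_le_right _ _).trans (min_le_right _ _)
  refine ⟨1 + ν.K * B / τ, fun a z ha hY hz => ?_⟩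
  have hdiv : 0 ≤ ν.K * B / τ := by positivity
  have haB : 1 + ‖a‖ ≤ B := by
    unfold B
    gcongr
    exact ha.trans (le_max_left _ _)
  have hζτ : ‖ν.inv (siegelInversion (a, z))‖ < τ := by
    refine (ν.norm_inv_siegelInversion_le hY).trans_lt ?_
    rw [div_lt_comm₀ (by linarith) hτ]
    calc ν.K * (1 + ‖a‖) / τ ≤ ν.K * B / τ := by gcongr
      _ < ‖z‖ := by linarith
  have hδa : ν.L * (δ * (ν.K * (1 + ‖a‖)) ^ 2) ≤ η := by
    calc ν.L * (δ * (ν.K * (1 + ‖a‖)) ^ 2) ≤ ν.L * (δ * (ν.K * B) ^ 2) := by gcongr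
      _ ≤ η := by linarith
  obtain ⟨hball, hdist⟩ := ν.chart_toFun_near_of_norm_sub_le hY (by linarith) hδ.le
    (min_le_left _ _) (min_le_left _ _) hδa (hζτ.le.trans hτ1) (hζτ.trans_le hτr) <| by
      simpa using hρF (by simpa [dist_eq_norm] using hζτ.trans_le (min_le_left _ _))
        (ν.inv_mem_of_mem_horoball hY)
  refine ⟨hball, hdist.trans (le_trans ?_ hηε)⟩
  calc 2 * η * (1 + ‖a‖) ≤ 2 * η * B := by gcongr
    _ = η * (2 * B) := by ring

end SiegelNormalForm

end NormalForm

section Taylor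

open Asymptotics

variable {V G : Type*} [NormedAddCommGroup V] [NormedSpace ℝ V] [NormedAddCommGroup G]
  [NormedSpace ℝ G]

theorem isBigO_sub_sum_iteratedFDeriv [CompleteSpace G] {f : V → G} {n : ℕ}
    (hf : ContDiff ℝ (n + 1) f) (x : V) :
    (fun y => f (x + y) - ∑ k ∈ Finset.range (n + 1),
      (k.factorial : ℝ)⁻¹ • iteratedFDeriv ℝ k f x fun _ => y) =O[𝓝 0] fun y => ‖y‖ ^ (n + 1) := by
  have hcont : Continuous (iteratedFDeriv ℝ (n + 1) f) := hf.continuous_iteratedFDeriv le_rfl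
  obtain ⟨δ, hδ, hδB⟩ := Metric.continuousAt_iff.1 (hcont.continuousAt (x := x)) 1 one_pos
  set B := ‖iteratedFDeriv ℝ (n + 1) f x‖ + 1
  refine IsBigO.of_bound ((n.factorial : ℝ)⁻¹ * B) ?_
  filter_upwards [ball_mem_nhds (0 : V) hδ] with y hy
  rw [mem_ball_zero_iff] at hy
  rw [map_add_eq_sum_add_integral_iteratedFDeriv fun t _ => hf.contDiffAt, add_sub_cancel_left,
    norm_smul, norm_inv, Real.norm_natCast, mul_assoc, norm_pow, norm_norm]
  gcongr
  have hB : ∀ t ∈ uIoc (0 : ℝ) 1,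
      ‖(1 - t) ^ n • iteratedFDeriv ℝ (n + 1) f (x + t • y) fun _ => y‖ ≤ B * ‖y‖ ^ (n + 1) := by
    intro t ht
    rw [uIoc_of_le zero_le_one] at ht
    have hdist : dist (x + t • y) x < δ := by
      rw [dist_self_add_left, norm_smul, Real.norm_of_nonneg ht.1.le]
      exact (mul_le_of_le_one_left (norm_nonneg y) ht.2).trans_lt hy
    have hnorm : ‖iteratedFDeriv ℝ (n + 1) f (x + t • y)‖ ≤ B :=
      norm_le_norm_add_const_of_dist_le (hδB hdist).le
    have happly := (iteratedFDeriv ℝ (n + 1) f (x + t • y)).le_of_opNorm_le hnorm fun _ => y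
    rw [Finset.prod_const, Finset.card_univ, Fintype.card_fin] at happly
    rw [norm_smul, norm_pow, Real.norm_of_nonneg (sub_nonneg.2 ht.2)]
    exact (mul_le_of_le_one_left (norm_nonneg _) (pow_le_one₀ (sub_nonneg.2 ht.2)
      (sub_le_self _ ht.1.le))).trans happly
  simpa using intervalIntegral.norm_integral_le_of_norm_le_const hB

theorem iteratedFDeriv_three_apply (f : V → G) (x : V) (m : Fin 3 → V) :
    iteratedFDeriv ℝ 3 f x m = fderiv ℝ (fderiv ℝ (fderiv ℝ f)) x (m 0) (m 1) (m 2) := by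
  rw [iteratedFDeriv_succ_apply_right, iteratedFDeriv_two_apply]
  rfl

theorem fderiv_fderiv_apply_comm {f : V → G} (hf : ContDiff ℝ 2 f) (x u v : V) :
    fderiv ℝ (fderiv ℝ f) x u v = fderiv ℝ (fderiv ℝ f) x v u :=
  (hf.contDiffAt.isSymmSndFDerivAt (by simp)) u v

theorem fderiv_fderiv_fderiv_apply_comm {f : V → G} (hf : ContDiff ℝ 3 f) (x u v w : V) :
    fderiv ℝ (fderiv ℝ (fderiv ℝ f)) x u v w = fderiv ℝ (fderiv ℝ (fderiv ℝ f)) x u w v := by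
  have hf1 : ContDiff ℝ 2 (fderiv ℝ f) := hf.fderiv_right (by norm_num)
  have hf2 : ContDiff ℝ 1 (fderiv ℝ (fderiv ℝ f)) := hf1.fderiv_right (by norm_num)
  have hd : HasFDerivAt (fderiv ℝ (fderiv ℝ f)) (fderiv ℝ (fderiv ℝ (fderiv ℝ f)) x) x :=
    (hf2.differentiable (by norm_num) x).hasFDerivAt
  have hd_apply : ∀ a b : V, HasFDerivAt (fun y => fderiv ℝ (fderiv ℝ f) y a b)
      (((fderiv ℝ (fderiv ℝ (fderiv ℝ f)) x).flip a).flip b) x := fun a b => by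
    have h := (hd.clm_apply (hasFDerivAt_const a x)).clm_apply (hasFDerivAt_const b x)
    rwa [ContinuousLinearMap.comp_zero, ContinuousLinearMap.comp_zero, zero_add, zero_add] at h
  have hswap := (hd_apply v w).unique ((hd_apply w v).congr_of_eventuallyEq
    (Eventually.of_forall fun y => fderiv_fderiv_apply_comm (hf.of_le (by norm_num)) y v w))
  simpa using DFunLike.congr_fun hswap u

end Taylor

section ComplexLinearPart

theorem map_smul_of_map_I_smul {V F : Type*} [AddCommGroup V] [Module ℝ V] [Module ℂ V]
    [IsScalarTower ℝ ℂ V] [AddCommGroup F] [Module ℝ F] [Module ℂ F] [IsScalarTower ℝ ℂ F]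
    (τ : ℂ →ₐ[ℝ] ℂ) (f : V →ₗ[ℝ] F) (hf : ∀ v, f (I • v) = τ I • f v) (c : ℂ) (v : V) :
    f (c • v) = τ c • f v := by
  have hc : c = algebraMap ℝ ℂ c.re + algebraMap ℝ ℂ c.im * I := (re_add_im c).symm
  rw [hc, map_add, map_mul, AlgHom.commutes, AlgHom.commutes]
  simp only [add_smul, mul_smul, algebraMap_smul, map_add, map_smul, hf]

variable {V F : Type*} [NormedAddCommGroup V] [NormedSpace ℂ V] [NormedAddCommGroup F]
  [NormedSpace ℂ F]

/-- The complex linear part of a real linear map. -/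
def linearPart (φ : V →L[ℝ] F) : V →L[ℂ] F :=
  let ψ : V →L[ℝ] F := (1 / 2 : ℂ) • (φ - I • φ ∘L (I • ContinuousLinearMap.id ℝ V))
  { ψ with
    map_smul' := map_smul_of_map_I_smul (AlgHom.id ℝ ℂ) ψ.toLinearMap fun v => by
      change (1 / 2 : ℂ) • (φ (I • v) - I • φ (I • I • v))
        = I • (1 / 2 : ℂ) • (φ v - I • φ (I • v))
      rw [smul_smul I I v, I_mul_I, neg_one_smul, map_neg]
      match_scalars
      · linear_combination (1 / 2 : ℂ) * I_sq
      · ring }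

/-- The complex antilinear part of a real linear map. -/
def antilinearPart (φ : V →L[ℝ] F) : V →L⋆[ℂ] F :=
  let ψ : V →L[ℝ] F := (1 / 2 : ℂ) • (φ + I • φ ∘L (I • ContinuousLinearMap.id ℝ V))
  { ψ with
    map_smul' := map_smul_of_map_I_smul conjAe.toAlgHom ψ.toLinearMap fun v => by
      change (1 / 2 : ℂ) • (φ (I • v) + I • φ (I • I • v))
        = (starRingEnd ℂ) I • (1 / 2 : ℂ) • (φ v + I • φ (I • v))
      rw [smul_smul I I v, I_mul_I, neg_one_smul, map_neg, conj_I]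
      match_scalars
      · linear_combination (1 / 2 : ℂ) * I_sq
      · ring }

theorem linearPart_apply (φ : V →L[ℝ] F) (ζ : V) :
    linearPart φ ζ = (1 / 2 : ℂ) • (φ ζ - I • φ (I • ζ)) := rfl

theorem norm_linearPart_le (φ : V →L[ℝ] F) : ‖linearPart φ‖ ≤ ‖φ‖ := by
  refine ContinuousLinearMap.opNorm_le_bound _ (norm_nonneg φ) fun ζ => ?_
  have hI : ‖φ (I • ζ)‖ ≤ ‖φ‖ * ‖ζ‖ := by
    simpa [norm_smul] using φ.le_opNorm (I • ζ)
  calc ‖linearPart φ ζ‖ = 1 / 2 * ‖φ ζ - I • φ (I • ζ)‖ := by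
        rw [linearPart_apply, norm_smul]
        norm_num
    _ ≤ 1 / 2 * (‖φ ζ‖ + ‖I • φ (I • ζ)‖) := by gcongr; exact norm_sub_le _ _
    _ ≤ ‖φ‖ * ‖ζ‖ := by
      rw [norm_smul, norm_I, one_mul]
      linarith [φ.le_opNorm ζ]

variable (V F) in
/-- The complex linear part as a continuous linear map, through which it acts on the values of
multilinear forms. -/
def linearPartL : (V →L[ℝ] F) →L[ℝ] (V →L[ℂ] F) :=
  LinearMap.mkContinuous
    { toFun := linearPart
      map_add' := fun φ ψ => by
        ext ζ
        simp only [linearPart_apply, _root_.add_apply, smul_add]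
        module
      map_smul' := fun c φ => by
        ext ζ
        simp only [linearPart_apply, _root_.smul_apply, RingHom.id_apply, smul_comm c, smul_sub] }
    1 fun φ => (one_mul ‖φ‖).symm ▸ norm_linearPart_le φ

variable (V) in
/-- The complex linear part of a real functional. -/
def linearFormPart : (V →L[ℝ] ℝ) →L[ℝ] (V →L[ℂ] ℂ) :=
  linearPartL V ℂ ∘L ContinuousLinearMap.compL ℝ V ℝ ℂ ofRealCLM

variable (V) in
/-- The complex bilinear part of a real bilinear form. -/
def bilinearFormPart : (V →L[ℝ] V →L[ℝ] ℝ) →L[ℝ] (V →L[ℂ] V →L[ℂ] ℂ) :=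
  linearPartL V (V →L[ℂ] ℂ) ∘L
    ContinuousLinearMap.compL ℝ V (V →L[ℝ] ℝ) (V →L[ℂ] ℂ) (linearFormPart V)

/-- The complex trilinear part of a real trilinear form. -/
def trilinearFormPart (D : V →L[ℝ] V →L[ℝ] V →L[ℝ] ℝ) : V →L[ℂ] V →L[ℂ] V →L[ℂ] ℂ :=
  linearPart (F := V →L[ℂ] V →L[ℂ] ℂ) (bilinearFormPart V ∘L D)

/-- The part of a real bilinear form that is complex antilinear in the first variable and complex
linear in the second; that of the Hessian is the Levi form. -/
def hermitianPart (b : V →L[ℝ] V →L[ℝ] ℝ) : V →L⋆[ℂ] V →L[ℂ] ℂ :=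
  antilinearPart (linearFormPart V ∘L b)

/-- The part of a real trilinear form that is complex antilinear in the first variable and complex
linear in the others. -/
def mixedPart (D : V →L[ℝ] V →L[ℝ] V →L[ℝ] ℝ) : V →L⋆[ℂ] V →L[ℂ] V →L[ℂ] ℂ :=
  antilinearPart (F := V →L[ℂ] V →L[ℂ] ℂ) (bilinearFormPart V ∘L D)

theorem linearFormPart_apply (φ : V →L[ℝ] ℝ) (ζ : V) :
    linearFormPart V φ ζ = 1 / 2 * (φ ζ - I * φ (I • ζ)) := rfl

theorem bilinearFormPart_apply (b : V →L[ℝ] V →L[ℝ] ℝ) (u v : V) :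
    bilinearFormPart V b u v
      = 1 / 2 * (linearFormPart V (b u) v - I * linearFormPart V (b (I • u)) v) := rfl

theorem trilinearFormPart_apply (D : V →L[ℝ] V →L[ℝ] V →L[ℝ] ℝ) (u v w : V) :
    trilinearFormPart D u v w
      = 1 / 2 * (bilinearFormPart V (D u) v w - I * bilinearFormPart V (D (I • u)) v w) := rfl

theorem hermitianPart_apply (b : V →L[ℝ] V →L[ℝ] ℝ) (u v : V) :
    hermitianPart b u v
      = 1 / 2 * (linearFormPart V (b u) v + I * linearFormPart V (b (I • u)) v) := rfl

theorem mixedPart_apply (D : V →L[ℝ] V →L[ℝ] V →L[ℝ] ℝ) (u v w : V) :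
    mixedPart D u v w
      = 1 / 2 * (bilinearFormPart V (D u) v w + I * bilinearFormPart V (D (I • u)) v w) := rfl

theorem re_linearFormPart (φ : V →L[ℝ] ℝ) (ζ : V) : (linearFormPart V φ ζ).re = φ ζ / 2 := by
  simp [linearFormPart_apply, div_eq_inv_mul]

theorem im_linearFormPart (φ : V →L[ℝ] ℝ) (ζ : V) :
    (linearFormPart V φ ζ).im = -φ (I • ζ) / 2 := by
  simp [linearFormPart_apply, div_eq_inv_mul]

theorem hermitianPart_apply_self {b : V →L[ℝ] V →L[ℝ] ℝ} (hb : ∀ u v, b u v = b v u) (ζ : V) :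
    hermitianPart b ζ ζ = ((b ζ ζ + b (I • ζ) (I • ζ)) / 4 : ℝ) := by
  rw [hermitianPart_apply, linearFormPart_apply, linearFormPart_apply, hb (I • ζ) ζ]
  push_cast
  linear_combination (-(1 / 4) * b (I • ζ) (I • ζ) : ℂ) * I_sq

theorem conj_hermitianPart {b : V →L[ℝ] V →L[ℝ] ℝ} (hb : ∀ u v, b u v = b v u) (u v : V) :
    (starRingEnd ℂ) (hermitianPart b v u) = hermitianPart b u v := by
  simp only [hermitianPart_apply, linearFormPart_apply, map_add, map_sub, map_mul, map_div₀,
    map_one, map_ofNat, conj_ofReal, conj_I, hb v u, hb (I • v) (I • u), hb (I • v) u,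
    hb v (I • u)]
  ring

theorem bilinearFormPart_apply_self {b : V →L[ℝ] V →L[ℝ] ℝ} (hb : ∀ u v, b u v = b v u)
    (ζ : V) :
    bilinearFormPart V b ζ ζ
      = ((b ζ ζ - b (I • ζ) (I • ζ)) / 4 : ℝ) - (b ζ (I • ζ) / 2 : ℝ) * I := by
  rw [bilinearFormPart_apply, linearFormPart_apply, linearFormPart_apply, hb (I • ζ) ζ]
  push_cast
  linear_combination (1 / 4 * b (I • ζ) (I • ζ) : ℂ) * I_sq

theorem apply_self_eq_re_bilinearFormPart {b : V →L[ℝ] V →L[ℝ] ℝ} (hb : ∀ u v, b u v = b v u)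
    (ζ : V) :
    b ζ ζ = 2 * (bilinearFormPart V b ζ ζ).re + 2 * (hermitianPart b ζ ζ).re := by
  rw [hermitianPart_apply_self hb, bilinearFormPart_apply_self hb, sub_re, ofReal_re, ofReal_re,
    re_ofReal_mul, I_re]
  ring

theorem apply_self_eq_re_trilinearFormPart {D : V →L[ℝ] V →L[ℝ] V →L[ℝ] ℝ}
    (hD : ∀ u v w, D u v w = D v u w) (hD' : ∀ u v w, D u v w = D u w v) (ζ : V) :
    D ζ ζ ζ = 2 * (trilinearFormPart D ζ ζ ζ).re + 6 * (mixedPart D ζ ζ ζ).re := by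
  rw [trilinearFormPart_apply, mixedPart_apply, bilinearFormPart_apply_self (hD' ζ),
    bilinearFormPart_apply_self (hD' (I • ζ)), hD (I • ζ) ζ (I • ζ)]
  simp only [one_div, mul_re, mul_im, add_re, sub_re, sub_im, inv_re, inv_im, re_ofNat, im_ofNat,
    normSq_ofNat, ofReal_re, ofReal_im, I_re, I_im]
  ring

end ComplexLinearPart

section HermitianCoordinates

/-- Homogeneity reduces the claim to the unit sphere, which is covered by the increasing open sets
`{x | 0 < Q x + k * R x}`. -/
theorem exists_forall_pos_add_mul {V : Type*} [NormedAddCommGroup V] [NormedSpace ℝ V]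
    [ProperSpace V] {Q R : V → ℝ} (hQ : Continuous Q) (hR : Continuous R)
    (hQ_smul : ∀ (t : ℝ) x, Q (t • x) = t ^ 2 * Q x)
    (hR_smul : ∀ (t : ℝ) x, R (t • x) = t ^ 2 * R x)
    (hR_nonneg : ∀ x, 0 ≤ R x) (hpos : ∀ x, x ≠ 0 → R x = 0 → 0 < Q x) :
    ∃ K : ℝ, ∀ x, x ≠ 0 → 0 < Q x + K * R x := by
  obtain ⟨k, hk⟩ := (isCompact_sphere (0 : V) 1).elim_directed_cover
    (fun k : ℕ => {x : V | 0 < Q x + k * R x})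
    (fun k => isOpen_lt (by fun_prop) (by fun_prop))
    (fun x hx => by
      have hx0 : x ≠ 0 := ne_of_mem_sphere hx one_ne_zero
      rw [mem_iUnion]
      rcases (hR_nonneg x).eq_or_lt with h | h
      · exact ⟨0, by simpa using hpos x hx0 h.symm⟩
      · obtain ⟨k, hk⟩ := exists_nat_gt (-Q x / R x)
        exact ⟨k, by rw [div_lt_iff₀ h] at hk; rw [mem_ofPred_eq]; linarith⟩)
    (directed_of_isDirected_le fun i j hij x hx => by
      rw [mem_ofPred_eq] at hx ⊢
      have : (i : ℝ) * R x ≤ j * R x := by gcongr; exact hR_nonneg x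
      linarith)
  refine ⟨k, fun x hx => ?_⟩
  have hunit : ‖‖x‖⁻¹ • x‖ = 1 := by
    rw [norm_smul, norm_inv, norm_norm, inv_mul_cancel₀ (norm_ne_zero_iff.2 hx)]
  have h : 0 < Q (‖x‖⁻¹ • x) + k * R (‖x‖⁻¹ • x) := hk (mem_sphere_zero_iff_norm.2 hunit)
  rw [hQ_smul, hR_smul, mul_left_comm, ← mul_add] at h
  exact pos_of_mul_pos_right h (by positivity)

theorem exists_linearEquiv_norm_sq_eq_inner {V : Type*} [AddCommGroup V] [Module ℂ V]
    [FiniteDimensional ℂ V] (c : InnerProductSpace.Core ℂ V) :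
    ∃ M : V ≃ₗ[ℂ] EuclideanSpace ℂ (Fin (Module.finrank ℂ V)),
      ∀ v, ‖M v‖ ^ 2 = (c.inner v v).re := by
  let _ : NormedAddCommGroup V := c.toNormedAddCommGroup
  let _ : InnerProductSpace ℂ V := InnerProductSpace.ofCore c.toCore
  refine ⟨(stdOrthonormalBasis ℂ V).repr.toLinearEquiv, fun v => ?_⟩
  calc ‖(stdOrthonormalBasis ℂ V).repr v‖ ^ 2 = ‖v‖ ^ 2 := by rw [LinearIsometryEquiv.norm_map]
    _ = (c.inner v v).re := norm_sq_eq_re_inner (𝕜 := ℂ) v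

theorem exists_hermitian_coordinates {V : Type*} [NormedAddCommGroup V] [NormedSpace ℂ V]
    [FiniteDimensional ℂ V] {H : V →L⋆[ℂ] V →L[ℂ] ℂ}
    (hH : ∀ u v, (starRingEnd ℂ) (H v u) = H u v) (l : V →L[ℂ] ℂ)
    (hpos : ∀ ζ, ζ ≠ 0 → l ζ = 0 → 0 < (H ζ ζ).re) :
    ∃ (K : ℝ) (M : V ≃L[ℂ] EuclideanSpace ℂ (Fin (Module.finrank ℂ V))),
      ∀ ζ, ‖M ζ‖ ^ 2 = (H ζ ζ).re + K * ‖l ζ‖ ^ 2 := by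
  have : ProperSpace V := FiniteDimensional.proper ℂ V
  obtain ⟨K, hK⟩ := exists_forall_pos_add_mul (Q := fun ζ => (H ζ ζ).re)
    (R := fun ζ => ‖l ζ‖ ^ 2) (by fun_prop) (by fun_prop)
    (fun t ζ => by
      simp only [← Complex.coe_smul, map_smul, map_smulₛₗ, _root_.smul_apply, smul_eq_mul,
        conj_ofReal, re_ofReal_mul]
      ring)
    (fun t ζ => by
      simp only [← Complex.coe_smul, map_smul, norm_smul, norm_real, mul_pow, Real.norm_eq_abs,
        sq_abs])
    (fun ζ => sq_nonneg _) fun ζ hζ hl => hpos ζ hζ (by simpa using hl)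
  have hself : ∀ ζ, (H ζ ζ + K * ((starRingEnd ℂ) (l ζ) * l ζ)).re = (H ζ ζ).re + K * ‖l ζ‖ ^ 2 :=
    fun ζ => by
      rw [conj_mul', add_re, re_ofReal_mul, ← ofReal_pow, ofReal_re]
  let c : InnerProductSpace.Core ℂ V :=
    { inner := fun u v => H u v + K * ((starRingEnd ℂ) (l u) * l v)
      conj_inner_symm := fun u v => by
        simp only [map_add, map_mul, hH, conj_ofReal, conj_conj]
        ring
      re_inner_nonneg := fun u => by
        refine le_of_le_of_eq ?_ (hself u).symm
        rcases eq_or_ne u 0 with rfl | hu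
        · simp
        · exact (hK u hu).le
      add_left := fun u v w => by
        simp only [map_add, _root_.add_apply]
        ring
      smul_left := fun u v r => by
        simp only [map_smulₛₗ, _root_.smul_apply, smul_eq_mul, map_mul, RingHom.id_apply]
        ring
      definite := fun u hu => by
        by_contra h
        exact (hK u h).ne' ((hself u).symm.trans (congrArg re hu)) }
  obtain ⟨M, hM⟩ := exists_linearEquiv_norm_sq_eq_inner c
  exact ⟨K, M.toContinuousLinearEquiv, fun ζ => (hM ζ).trans (hself ζ)⟩

end HermitianCoordinates

section SiegelCoordinates

open Asymptotics

section OrthogonalComplement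

variable {𝕜 V W : Type*} [RCLike 𝕜] [NormedAddCommGroup V] [NormedSpace 𝕜 V]
  [NormedAddCommGroup W] [InnerProductSpace 𝕜 W]

theorem exists_inner_apply_apply_eq [FiniteDimensional 𝕜 W] (B : W →ₗ⋆[𝕜] V →L[𝕜] V →L[𝕜] 𝕜) :
    ∃ S : V →L[𝕜] V →L[𝕜] W, ∀ w u v, inner 𝕜 w (S u v) = B w u v := by
  let e := stdOrthonormalBasis 𝕜 W
  refine ⟨∑ k, ContinuousLinearMap.compL 𝕜 V 𝕜 W
    (ContinuousLinearMap.toSpanSingleton 𝕜 (e k)) ∘L B (e k), fun w u v => ?_⟩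
  conv_rhs => rw [← e.sum_repr' w, map_sum]
  simp [inner_sum, inner_smul_right, mul_comm]

theorem norm_sq_orthogonalProjection_span_singleton_orthogonal {e : W} (he : e ≠ 0) (x : W) :
    ‖(𝕜 ∙ e)ᗮ.orthogonalProjectionOnto x‖ ^ 2 = ‖x‖ ^ 2 - ‖inner 𝕜 e x‖ ^ 2 / ‖e‖ ^ 2 := by
  have hpyth := (𝕜 ∙ e).norm_sq_eq_add_norm_sq_projection x
  have hproj : ‖(𝕜 ∙ e).orthogonalProjectionOnto x‖ = ‖inner 𝕜 e x‖ / ‖e‖ := by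
    have hne : ‖e‖ ≠ 0 := norm_ne_zero_iff.2 he
    rw [← Submodule.norm_coe, Submodule.coe_orthogonalProjectionOnto_apply,
      Submodule.starProjection_singleton, norm_smul, norm_div, norm_algebraMap', norm_pow,
      norm_norm]
    field_simp
  rw [hproj, div_pow] at hpyth
  linarith

/-- The splitting of an inner product space into the orthogonal complement of a nonzero vector `e`
and the coordinate `inner 𝕜 e`. -/
def orthogonalProdInner {e : W} (he : e ≠ 0) : W ≃L[𝕜] (𝕜 ∙ e)ᗮ × 𝕜 :=
  ContinuousLinearEquiv.equivOfInverse
    ((𝕜 ∙ e)ᗮ.orthogonalProjectionOnto.prod (innerSL 𝕜 e))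
    ((𝕜 ∙ e)ᗮ.subtypeL.coprod
      (ContinuousLinearMap.toSpanSingleton 𝕜 (((‖e‖ ^ 2 : ℝ) : 𝕜)⁻¹ • e)))
    (fun x => by
      simp [Submodule.starProjection_singleton, smul_smul, div_eq_mul_inv])
    (fun y => by
      have hy : inner 𝕜 e (y.1 : W) = 0 :=
        Submodule.mem_orthogonal_singleton_iff_inner_right.1 y.1.2
      have he0 : (𝕜 ∙ e)ᗮ.orthogonalProjectionOnto e = 0 :=
        Submodule.orthogonalProjectionOnto_orthogonal_apply_eq_zero
          (Submodule.mem_span_singleton_self e)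
      ext1
      · simp [he0]
      · simp [inner_add_right, inner_smul_right, hy, he])

theorem isBigO_norm_sq_of_isBigO_sub {α G : Type*} [NormedAddCommGroup G] {φ : Filter α}
    {u v : α → G} {w : α → ℝ} (h : (fun x => v x - u x) =O[φ] w) :
    (fun x => ‖v x‖ ^ 2) =O[φ] fun x => ‖u x‖ ^ 2 + w x ^ 2 := by
  have hu : u =O[φ] fun x => ‖u x‖ + |w x| := IsBigO.of_norm_le fun x => by
    simp
  have hw : w =O[φ] fun x => ‖u x‖ + |w x| := IsBigO.of_norm_le fun x => by simp
  have hv : (fun x => ‖v x‖) =O[φ] fun x => ‖u x‖ + |w x| :=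
    (((h.trans hw).add hu).congr_left fun x => sub_add_cancel _ _).norm_left
  refine (hv.pow 2).trans (IsBigO.of_bound 2 (Eventually.of_forall fun x => ?_))
  rw [Real.norm_of_nonneg (by positivity), Real.norm_of_nonneg (by positivity), ← sq_abs (w x)]
  exact add_sq_le

theorem isBigO_norm_sq_orthogonalProjection_sub {α : Type*} {φ : Filter α} {e : W} (he : e ≠ 0)
    {m σ : α → W} {u : α → 𝕜} {w : α → ℝ} (hm : (fun x => inner 𝕜 e (m x) - u x) =O[φ] w)
    (hσ : σ =O[φ] w) :
    (fun x => ‖(𝕜 ∙ e)ᗮ.orthogonalProjectionOnto (m x + σ x)‖ ^ 2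
      - (‖m x‖ ^ 2 + 2 * RCLike.re (inner 𝕜 (m x) (σ x)))) =O[φ]
      fun x => ‖u x‖ ^ 2 + w x ^ 2 := by
  have hσ_sq : (fun x => ‖σ x‖ ^ 2) =O[φ] fun x => ‖u x‖ ^ 2 + w x ^ 2 :=
    (hσ.norm_left.pow 2).trans (IsBigO.of_norm_le fun x => by
      rw [Real.norm_of_nonneg (sq_nonneg _)]
      exact le_add_of_nonneg_left (sq_nonneg _))
  have he_sq : (fun x => ‖inner 𝕜 e (m x + σ x)‖ ^ 2) =O[φ] fun x => ‖u x‖ ^ 2 + w x ^ 2 :=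
    isBigO_norm_sq_of_isBigO_sub
      ((hm.add (((innerSL 𝕜 e).isBigO_comp σ φ).trans hσ)).congr_left fun x => by
        rw [inner_add_right, innerSL_apply_apply]
        ring)
  refine (hσ_sq.sub (he_sq.const_mul_left (‖e‖ ^ 2)⁻¹)).congr_left fun x => ?_
  rw [norm_sq_orthogonalProjection_span_singleton_orthogonal he, norm_add_sq (𝕜 := 𝕜)]
  ring

end OrthogonalComplement

variable {V : Type*} [NormedAddCommGroup V] [NormedSpace ℂ V]

/-- The holomorphic cubic polynomial whose real part collects the pluriharmonic terms of the Taylor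
polynomial of degree three of `f` at `x`. -/
def holomorphicTaylor (f : V → ℝ) (x ζ : V) : ℂ :=
  2 * linearFormPart V (fderiv ℝ f x) ζ
    + bilinearFormPart V (fderiv ℝ (fderiv ℝ f) x) ζ ζ
    + 1 / 3 * trilinearFormPart (fderiv ℝ (fderiv ℝ (fderiv ℝ f)) x) ζ ζ ζ

theorem contDiff_holomorphicTaylor (f : V → ℝ) (x : V) :
    ContDiff ℂ ⊤ (holomorphicTaylor f x) := by
  unfold holomorphicTaylor
  fun_prop

theorem holomorphicTaylor_zero (f : V → ℝ) (x : V) : holomorphicTaylor f x 0 = 0 := by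
  simp [holomorphicTaylor]

theorem isBigO_apply_apply_self {𝕜 E G : Type*} [NontriviallyNormedField 𝕜]
    [NormedAddCommGroup E] [NormedSpace 𝕜 E] [NormedAddCommGroup G] [NormedSpace 𝕜 G]
    (B : E →L[𝕜] E →L[𝕜] G) : (fun v => B v v) =O[𝓝 0] fun v => ‖v‖ ^ 2 :=
  IsBigO.of_bound ‖B‖ (Eventually.of_forall fun v => by
    rw [norm_pow, norm_norm, sq, ← mul_assoc]
    exact B.le_opNorm₂ v v)

theorem isBigO_holomorphicTaylor_sub (f : V → ℝ) (x : V) :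
    (fun ζ => holomorphicTaylor f x ζ - 2 * linearFormPart V (fderiv ℝ f x) ζ) =O[𝓝 0]
      fun ζ => ‖ζ‖ ^ 2 := by
  set T := trilinearFormPart (fderiv ℝ (fderiv ℝ (fderiv ℝ f)) x)
  have hT : (fun ζ => T ζ ζ ζ) =O[𝓝 0] fun ζ => ‖ζ‖ ^ 2 := by
    refine IsBigO.trans (IsBigO.of_bound 1 ?_) (isBigO_apply_apply_self T)
    filter_upwards [closedBall_mem_nhds (0 : V) one_pos] with ζ hζ
    rw [mem_closedBall_zero_iff] at hζ
    rw [one_mul]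
    exact ((T ζ ζ).le_opNorm ζ).trans (mul_le_of_le_one_right (norm_nonneg _) hζ)
  refine ((isBigO_apply_apply_self (bilinearFormPart V (fderiv ℝ (fderiv ℝ f) x))).add
    (hT.const_mul_left (1 / 3))).congr_left fun ζ => ?_
  rw [holomorphicTaylor]
  ring

theorem isBigO_sub_re_holomorphicTaylor {f : V → ℝ} (hf : ContDiff ℝ 4 f) (x : V) :
    (fun ζ => f (x + ζ) - f x - ((holomorphicTaylor f x ζ).re
      + (hermitianPart (fderiv ℝ (fderiv ℝ f) x) ζ ζ).re
      + (mixedPart (fderiv ℝ (fderiv ℝ (fderiv ℝ f)) x) ζ ζ ζ).re)) =O[𝓝 0]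
      fun ζ => ‖ζ‖ ^ 4 := by
  refine (isBigO_sub_sum_iteratedFDeriv (n := 3) (by exact_mod_cast hf) x).congr_left
    fun ζ => ?_
  have hquad := apply_self_eq_re_bilinearFormPart
    (fderiv_fderiv_apply_comm (hf.of_le (by norm_num)) x) ζ
  have hcub := apply_self_eq_re_trilinearFormPart (D := fderiv ℝ (fderiv ℝ (fderiv ℝ f)) x)
    (fun u v w => by
      rw [fderiv_fderiv_apply_comm (hf.fderiv_right (m := 2) (by norm_num)) x u v])
    (fderiv_fderiv_fderiv_apply_comm (hf.of_le (by norm_num)) x) ζ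
  have hlin := re_linearFormPart (fderiv ℝ f x) ζ
  simp only [Finset.sum_range_succ, Finset.sum_range_zero, iteratedFDeriv_zero_apply,
    iteratedFDeriv_one_apply, iteratedFDeriv_two_apply, iteratedFDeriv_three_apply]
  simp only [Nat.factorial, Nat.cast_one, inv_one, smul_eq_mul, one_mul, zero_add,
    Nat.succ_eq_add_one, mul_one, Nat.reduceAdd, Nat.cast_ofNat, hquad, Nat.reduceMul, hcub,
    holomorphicTaylor, one_div, add_re, mul_re, re_ofNat, hlin, im_ofNat, zero_mul, sub_zero,
    inv_re, normSq_ofNat, div_self_mul_self', inv_im, neg_zero, zero_div]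
  ring

/-- The coordinates on `V` obtained from a linear isomorphism `M` by adding the quadratic map
`S / 2`, projecting along a vector `e` and taking `-h` as the new coordinate in that direction. -/
def siegelCoordinates {W : Type*} [NormedAddCommGroup W] [InnerProductSpace ℂ W] (M : V ≃L[ℂ] W)
    (S : V →L[ℂ] V →L[ℂ] W) (e : W) (h : V → ℂ) (ζ : V) : (ℂ ∙ e)ᗮ × ℂ :=
  ((ℂ ∙ e)ᗮ.orthogonalProjectionOnto (M ζ + (1 / 2 : ℂ) • S ζ ζ), -h ζ)

section

variable {W : Type*} [NormedAddCommGroup W] [InnerProductSpace ℂ W] {M : V ≃L[ℂ] W}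
  {S : V →L[ℂ] V →L[ℂ] W} {e : W} {h : V → ℂ}

theorem contDiff_siegelCoordinates (hh : ContDiff ℂ ⊤ h) :
    ContDiff ℂ ⊤ (siegelCoordinates M S e h) := by
  unfold siegelCoordinates
  fun_prop

theorem hasFDerivAt_siegelCoordinates (he : e ≠ 0)
    (hh : (fun ζ => inner ℂ e (M ζ) - -h ζ) =O[𝓝 0] fun ζ => ‖ζ‖ ^ 2) :
    HasFDerivAt (siegelCoordinates M S e h)
      (M.trans (orthogonalProdInner he) : V →L[ℂ] (ℂ ∙ e)ᗮ × ℂ) 0 := by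
  set A := M.trans (orthogonalProdInner (𝕜 := ℂ) he) with hA_def
  have hA : (fun ζ => siegelCoordinates M S e h ζ - A ζ) =O[𝓝 0] fun ζ => ‖ζ‖ ^ 2 := by
    have hS := ((isBigO_apply_apply_self S).const_smul_left (1 / 2 : ℂ))
    refine ((((ℂ ∙ e)ᗮ.orthogonalProjectionOnto.isBigO_comp _ _).trans hS).prod_left
      hh.neg_left).congr_left fun ζ => ?_
    simp [hA_def, siegelCoordinates, orthogonalProdInner, sub_eq_add_neg]
  have hdiff : HasFDerivAt (fun ζ => siegelCoordinates M S e h ζ - A ζ)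
      (0 : V →L[ℂ] (ℂ ∙ e)ᗮ × ℂ) 0 :=
    IsBigO.hasFDerivAt (n := 2) (by simpa using hA) one_lt_two
  simpa [Pi.add_def] using hdiff.add A.hasFDerivAt

theorem isBigO_siegelHeight_siegelCoordinates (he : e ≠ 0)
    (hh : (fun ζ => inner ℂ e (M ζ) - -h ζ) =O[𝓝 0] fun ζ => ‖ζ‖ ^ 2) :
    (fun ζ => siegelHeight (siegelCoordinates M S e h ζ)
      + ((h ζ).re + ‖M ζ‖ ^ 2 + (inner ℂ (M ζ) (S ζ ζ)).re)) =O[𝓝 0]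
      fun ζ => ‖h ζ‖ ^ 2 + ‖ζ‖ ^ 4 := by
  have hS := (isBigO_apply_apply_self S).const_smul_left (1 / 2 : ℂ)
  refine (isBigO_norm_sq_orthogonalProjection_sub he hh hS).neg_left.congr
    (fun ζ => ?_) fun ζ => ?_
  · have hhalf : 2 * (1 / 2 * inner ℂ (M ζ) (S ζ ζ)).re = (inner ℂ (M ζ) (S ζ ζ)).re := by simp
    rw [siegelHeight, siegelCoordinates, Pi.smul_apply, inner_smul_right, RCLike.re_to_complex,
      hhalf, neg_re]
    ring
  · rw [norm_neg, ← pow_mul]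

end

/-- Coordinates adapted to the real hyperplane `fderiv ℝ ρ p = 0` and to the Levi form. -/
theorem exists_levi_coordinates [FiniteDimensional ℂ V] {ρ : V → ℝ} {p : V}
    (hρ : ContDiff ℝ 2 ρ) (hdρ : fderiv ℝ ρ p ≠ 0)
    (hpos : ∀ ζ, ζ ≠ 0 → fderiv ℝ ρ p ζ = 0 → fderiv ℝ ρ p (I • ζ) = 0 →
      0 < fderiv ℝ (fderiv ℝ ρ) p ζ ζ + fderiv ℝ (fderiv ℝ ρ) p (I • ζ) (I • ζ)) :
    ∃ (K : ℝ) (M : V ≃L[ℂ] EuclideanSpace ℂ (Fin (Module.finrank ℂ V)))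
      (e : EuclideanSpace ℂ (Fin (Module.finrank ℂ V))), e ≠ 0 ∧
      (∀ ζ, inner ℂ e (M ζ) = -(2 * linearFormPart V (fderiv ℝ ρ p) ζ)) ∧
      ∀ ζ, ‖M ζ‖ ^ 2 = (hermitianPart (fderiv ℝ (fderiv ℝ ρ) p) ζ ζ).re
        + K * ‖inner ℂ e (M ζ)‖ ^ 2 := by
  set l : V →L[ℂ] ℂ := -((2 : ℂ) • linearFormPart V (fderiv ℝ ρ p)) with hl_def
  have hl_re : ∀ ζ, (l ζ).re = -fderiv ℝ ρ p ζ := fun ζ => by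
    simp [hl_def, re_linearFormPart, mul_div_cancel₀]
  have hl_im : ∀ ζ, (l ζ).im = fderiv ℝ ρ p (I • ζ) := fun ζ => by
    simp [hl_def, im_linearFormPart, mul_div_cancel₀]
  have hsymm := fderiv_fderiv_apply_comm hρ p
  obtain ⟨K, M, hM⟩ := exists_hermitian_coordinates (conj_hermitianPart hsymm) l
    fun ζ hζ hlζ => by
      rw [hermitianPart_apply_self hsymm, ofReal_re]
      exact div_pos (hpos ζ hζ (by rw [← neg_eq_zero, ← hl_re, hlζ, zero_re])
        (by rw [← hl_im, hlζ, zero_im])) four_pos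
  obtain ⟨e, he⟩ : ∃ e, ∀ ζ, inner ℂ e (M ζ) = l ζ :=
    ⟨(InnerProductSpace.toDual ℂ _).symm (l ∘L M.symm.toContinuousLinearMap), fun ζ => by simp⟩
  refine ⟨K, M, e, ?_, he, fun ζ => by rw [hM, he]⟩
  rintro rfl
  refine hdρ (ContinuousLinearMap.ext fun ζ => ?_)
  rw [← neg_neg (fderiv ℝ ρ p ζ), ← hl_re, ← he, inner_zero_left, zero_re, neg_zero]
  rfl

/-- The `ℂ`-coordinate is `-holomorphicTaylor`, and the mixed cubic terms are absorbed into the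
quadratic terms of the `E`-coordinate by completing a square. -/
theorem exists_siegel_coordinates [FiniteDimensional ℂ V] {ρ : V → ℝ} {p : V}
    (hρ : ContDiff ℝ 4 ρ) (hdρ : fderiv ℝ ρ p ≠ 0)
    (hpos : ∀ ζ, ζ ≠ 0 → fderiv ℝ ρ p ζ = 0 → fderiv ℝ ρ p (I • ζ) = 0 →
      0 < fderiv ℝ (fderiv ℝ ρ) p ζ ζ + fderiv ℝ (fderiv ℝ ρ) p (I • ζ) (I • ζ)) :
    ∃ (E : Submodule ℂ (EuclideanSpace ℂ (Fin (Module.finrank ℂ V)))) (Θ : V → E × ℂ)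
      (A : V ≃L[ℂ] E × ℂ), ContDiff ℂ ⊤ Θ ∧ Θ 0 = 0 ∧ HasFDerivAt Θ (A : V →L[ℂ] E × ℂ) 0 ∧
      (fun ζ => ρ (p + ζ) - ρ p + siegelHeight (Θ ζ)) =O[𝓝 0]
        fun ζ => ‖(Θ ζ).2‖ ^ 2 + ‖ζ‖ ^ 4 := by
  obtain ⟨K, M, e, he, hMe, hM⟩ := exists_levi_coordinates (hρ.of_le (by norm_num)) hdρ hpos
  obtain ⟨S, hS⟩ := exists_inner_apply_apply_eq
    ((mixedPart (fderiv ℝ (fderiv ℝ (fderiv ℝ ρ)) p)).toLinearMap ∘ₛₗ M.symm.toLinearMap)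
  have hMS : ∀ ζ, inner ℂ (M ζ) (S ζ ζ)
      = mixedPart (fderiv ℝ (fderiv ℝ (fderiv ℝ ρ)) p) ζ ζ ζ := fun ζ => by
    rw [hS]
    simp
  set h := holomorphicTaylor ρ p with hh_def
  have hh : (fun ζ => inner ℂ e (M ζ) - -h ζ) =O[𝓝 0] fun ζ => ‖ζ‖ ^ 2 :=
    (isBigO_holomorphicTaylor_sub ρ p).congr_left fun ζ => by
      rw [hMe]
      ring
  refine ⟨(ℂ ∙ e)ᗮ, siegelCoordinates M S e h, M.trans (orthogonalProdInner he),
    contDiff_siegelCoordinates (contDiff_holomorphicTaylor ρ p), ?_,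
    hasFDerivAt_siegelCoordinates he hh, ?_⟩
  · simp [siegelCoordinates, hh_def, holomorphicTaylor_zero]
  · have hinner : (fun ζ => ‖inner ℂ e (M ζ)‖ ^ 2) =O[𝓝 0] fun ζ => ‖h ζ‖ ^ 2 + ‖ζ‖ ^ 4 :=
      (isBigO_norm_sq_of_isBigO_sub hh).congr_right fun ζ => by rw [norm_neg, ← pow_mul]
    have hpow : (fun ζ : V => ‖ζ‖ ^ 4) =O[𝓝 0] fun ζ => ‖h ζ‖ ^ 2 + ‖ζ‖ ^ 4 :=
      IsBigO.of_norm_le fun ζ => by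
        rw [norm_pow, norm_norm]
        exact le_add_of_nonneg_left (sq_nonneg _)
    refine ((((isBigO_sub_re_holomorphicTaylor hρ p).trans hpow).sub
      (hinner.const_mul_left K)).add
      (isBigO_siegelHeight_siegelCoordinates (S := S) he hh)).congr (fun ζ => ?_) fun ζ => ?_
    · rw [hMS, hM]
      ring
    · simp [siegelCoordinates]

end SiegelCoordinates

section ExistsSiegelNormalForm

open Asymptotics

theorem exists_differentiableOn_rightInverse {𝕜 V X : Type*} [RCLike 𝕜] [NormedAddCommGroup V]
    [NormedSpace 𝕜 V] [CompleteSpace V] [NormedAddCommGroup X] [NormedSpace 𝕜 X] {f : V → X}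
    {A : V ≃L[𝕜] X} {a : V} {s : Set V} (hf : ContDiffAt 𝕜 1 f a)
    (hA : HasFDerivAt f (A : V →L[𝕜] X) a) (hs : s ∈ 𝓝 a) :
    ∃ r > 0, ∃ κ > 0, ∃ g : X → V, ball a r ⊆ s ∧ InjOn f (ball a r) ∧
      DifferentiableOn 𝕜 g (ball (f a) κ) ∧ MapsTo g (ball (f a) κ) (ball a r) ∧
      ∀ y ∈ ball (f a) κ, f (g y) = y := by
  have hstrict : HasStrictFDerivAt f (A : V →L[𝕜] X) a := hf.hasStrictFDerivAt' hA one_ne_zero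
  set φ := hstrict.toOpenPartialHomeomorph f
  have ha : a ∈ φ.source := hstrict.mem_toOpenPartialHomeomorph_source
  have hfa : f a ∈ φ.target := hstrict.image_mem_toOpenPartialHomeomorph_target
  have hsymm_fa : φ.symm (f a) = a := φ.left_inv ha
  obtain ⟨r, hr, hball⟩ := Metric.mem_nhds_iff.1 (inter_mem hs (φ.open_source.mem_nhds ha))
  have hsymm : ContDiffAt 𝕜 1 φ.symm (f a) :=
    φ.contDiffAt_symm (f₀' := A) hfa (by rwa [hsymm_fa]) (by rwa [hsymm_fa])
  obtain ⟨κ, hκ, hballκ⟩ := Metric.mem_nhds_iff.1 (inter_mem (φ.open_target.mem_nhds hfa)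
    ((hsymm.eventually (by simp)).and (hsymm.continuousAt.eventually_mem
      (s := ball a r) (by rw [hsymm_fa]; exact ball_mem_nhds a hr))))
  exact ⟨r, hr, κ, hκ, φ.symm, fun x hx => (hball hx).1,
    φ.injOn.mono fun x hx => (hball hx).2,
    fun y hy => ((hballκ hy).2.1.differentiableAt one_ne_zero).differentiableWithinAt,
    fun y hy => (hballκ hy).2.2, fun y hy => φ.right_inv (hballκ hy).1⟩

theorem norm_pow_four_le {E F : Type*} [SeminormedAddCommGroup E] [SeminormedAddCommGroup F]
    {w : E × F} (hw : ‖w‖ ≤ 1) : ‖w‖ ^ 4 ≤ ‖w.2‖ ^ 2 + ‖w.1‖ ^ 4 := by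
  rcases max_choice ‖w.1‖ ‖w.2‖ with h | h <;> rw [← Prod.norm_def] at h
  · rw [h]
    exact le_add_of_nonneg_left (sq_nonneg _)
  · calc ‖w‖ ^ 4 ≤ ‖w‖ ^ 2 := pow_le_pow_of_le_one (norm_nonneg _) hw (by norm_num)
      _ = ‖w.2‖ ^ 2 := by rw [h]
      _ ≤ ‖w.2‖ ^ 2 + ‖w.1‖ ^ 4 := le_add_of_nonneg_right (by positivity)

theorem isBigO_norm_snd_sq_add_norm_fst_pow_four {V E F : Type*} [NormedAddCommGroup V]
    [NormedAddCommGroup E] [NormedAddCommGroup F] {Θ : V → E × F} {φ : Filter V}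
    (hΘ : Tendsto Θ φ (𝓝 0)) (hinv : (fun x => x) =O[φ] Θ) :
    (fun x => ‖(Θ x).2‖ ^ 2 + ‖x‖ ^ 4) =O[φ] fun x => ‖(Θ x).2‖ ^ 2 + ‖(Θ x).1‖ ^ 4 := by
  refine IsBigO.add (IsBigO.of_norm_le fun x => ?_)
    ((hinv.norm_norm.pow 4).trans (IsBigO.of_bound 1 ?_))
  · rw [Real.norm_of_nonneg (by positivity)]
    exact le_add_of_nonneg_right (by positivity)
  · filter_upwards [hΘ.eventually_mem (closedBall_mem_nhds 0 one_pos)] with x hx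
    rw [Real.norm_of_nonneg (by positivity), Real.norm_of_nonneg (by positivity), one_mul]
    exact norm_pow_four_le (mem_closedBall_zero_iff.1 hx)

theorem exists_siegelNormalForm {V : Type*} [NormedAddCommGroup V] [InnerProductSpace ℂ V]
    [FiniteDimensional ℂ V] {Ω : Set V} {p : V} {ρ : V → ℝ} (hρ : ContDiff ℝ 4 ρ)
    (hΩ : Ω = {z | ρ z < 0}) (hp : ρ p = 0) (hdρ : fderiv ℝ ρ p ≠ 0)
    (hpos : ∀ ζ, ζ ≠ 0 → fderiv ℝ ρ p ζ = 0 → fderiv ℝ ρ p (I • ζ) = 0 →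
      0 < fderiv ℝ (fderiv ℝ ρ) p ζ ζ + fderiv ℝ (fderiv ℝ ρ) p (I • ζ) (I • ζ)) :
    ∃ E : Submodule ℂ (EuclideanSpace ℂ (Fin (Module.finrank ℂ V))),
      Nonempty (SiegelNormalForm Ω p E) := by
  obtain ⟨E, Θ, A, hΘ, hΘ0, hA, hO⟩ := exists_siegel_coordinates hρ hdρ hpos
  have hinv : (fun x => x) =O[𝓝 0] Θ := by
    simpa [hΘ0] using (hA.isTheta_sub A.toHomeomorph.isInducing).isBigO_symm
  have hΘ_tendsto : Tendsto Θ (𝓝 0) (𝓝 0) := by simpa [hΘ0] using hΘ.continuous.tendsto 0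
  obtain ⟨C, hC, hest⟩ :=
    (hO.trans (isBigO_norm_snd_sq_add_norm_fst_pow_four hΘ_tendsto hinv)).exists_pos
  obtain ⟨K, hK, hnorm⟩ := hinv.exists_pos
  obtain ⟨L, s, hs, hL⟩ :=
    (hΘ.contDiffAt.hasStrictFDerivAt' hA (by simp)).exists_lipschitzOnWith
  have hsmall : ∀ᶠ x in 𝓝 (0 : V), (2 * C + 1) * ‖Θ x‖ < 1 :=
    (hΘ_tendsto.norm.const_mul (2 * C + 1)).eventually_lt_const (by simp)
  obtain ⟨r, hr, κ, hκ, g, hball, hinj, hg, hgmem, hright⟩ :=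
    exists_differentiableOn_rightInverse (hΘ.contDiffAt.of_le le_top) hA
      (inter_mem hs (hsmall.and (hest.bound.and hnorm.bound)))
  rw [hΘ0] at hg hgmem hright
  have habs : ∀ x ∈ ball (0 : V) r, |ρ (p + x) + siegelHeight (Θ x)|
      ≤ C * (‖(Θ x).2‖ ^ 2 + ‖(Θ x).1‖ ^ 4) := fun x hx => by
    have hx' := (hball hx).2.2.1
    rwa [hp, sub_zero, Real.norm_eq_abs, Real.norm_of_nonneg (by positivity)] at hx'
  exact ⟨E, ⟨{
    toFun := Θ, inv := g, r, κ, C, K, L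
    r_pos := hr
    κ_pos := hκ
    C_nonneg := hC.le
    K_pos := hK
    L_nonneg := L.2
    differentiableOn := (hΘ.differentiable (by simp)).differentiableOn
    injOn := hinj
    lipschitz := fun x hx y hy => by
      simpa [dist_eq_norm] using hL.dist_le_mul x (hball hx).1 y (hball hy).1
    norm_le := fun x hx => (hball hx).2.2.2
    differentiableOn_inv := hg
    inv_mem := hgmem
    right_inv := hright
    small := fun x hx => (hball hx).2.1.le
    notMem := by simp [hΩ, hp]
    le_of_mem := fun x hx hxΩ => by
      rw [hΩ, mem_ofPred_eq] at hxΩ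
      linarith [(abs_le.1 (habs x hx)).1]
    mem_of_lt := fun x hx hlt => by
      rw [hΩ, mem_ofPred_eq]
      linarith [(abs_le.1 (habs x hx)).2] }⟩⟩

end ExistsSiegelNormalForm

section IdentityPrinciple

variable {V G : Type*} [NormedAddCommGroup V] [NormedSpace ℂ V] [NormedAddCommGroup G]
  [NormedSpace ℂ G] [CompleteSpace G]

theorem eqOn_ball_of_differentiableOn_of_eventuallyEq {f g : V → G} {x u : V} {r : ℝ}
    (hf : DifferentiableOn ℂ f (ball x r)) (hg : DifferentiableOn ℂ g (ball x r))
    (hu : u ∈ ball x r) (hfg : f =ᶠ[𝓝 u] g) : EqOn f g (ball x r) := by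
  intro y hy
  let c : ℂ → V := fun t => u + t • (y - u)
  have hc : Differentiable ℂ c := by fun_prop
  have hopen : IsOpen (c ⁻¹' ball x r) := isOpen_ball.preimage hc.continuous
  have hconn : IsPreconnected (c ⁻¹' ball x r) :=
    (((convex_ball x r).translate_preimage_right u).linear_preimage
      ((LinearMap.toSpanSingleton ℂ V (y - u)).restrictScalars ℝ)).isPreconnected
  have hfc : AnalyticOnNhd ℂ (f ∘ c) (c ⁻¹' ball x r) :=
    (hf.comp hc.differentiableOn (mapsTo_preimage _ _)).analyticOnNhd hopen
  have hgc : AnalyticOnNhd ℂ (g ∘ c) (c ⁻¹' ball x r) :=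
    (hg.comp hc.differentiableOn (mapsTo_preimage _ _)).analyticOnNhd hopen
  have hc_zero : c 0 = u := by simp [c]
  have hc_one : c 1 = y := by simp [c]
  have heq := hfc.eqOn_of_preconnected_of_eventuallyEq hgc hconn (z₀ := 0)
    (by rwa [mem_preimage, hc_zero])
    (hfg.comp_tendsto (hc_zero ▸ hc.continuous.tendsto 0))
    (show (1 : ℂ) ∈ c ⁻¹' ball x r by rwa [mem_preimage, hc_one])
  simpa [hc_one] using heq

theorem eqOn_of_differentiableOn_of_isPreconnected_of_eventuallyEq {f g : V → G} {Ω : Set V}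
    {u : V} (hΩ : IsOpen Ω) (hconn : IsPreconnected Ω) (hf : DifferentiableOn ℂ f Ω)
    (hg : DifferentiableOn ℂ g Ω) (hu : u ∈ Ω) (hfg : f =ᶠ[𝓝 u] g) : EqOn f g Ω := by
  have hsub : Ω ⊆ interior {x | f x = g x} := by
    refine hconn.subset_of_closure_inter_subset isOpen_interior
      ⟨u, hu, mem_interior_iff_mem_nhds.2 hfg⟩ ?_
    rintro x ⟨hx, hxΩ⟩
    obtain ⟨r, hr, hball⟩ := Metric.isOpen_iff.1 hΩ x hxΩ
    obtain ⟨v, hv, hvint⟩ := mem_closure_iff.1 hx (ball x r) isOpen_ball (mem_ball_self hr)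
    have heq := eqOn_ball_of_differentiableOn_of_eventuallyEq (hf.mono hball) (hg.mono hball) hv
      (mem_interior_iff_mem_nhds.1 hvint)
    exact mem_interior.2 ⟨ball x r, heq, isOpen_ball, mem_ball_self hr⟩
  exact hsub.trans interior_subset

end IdentityPrinciple

theorem LittleOh.isLittleO {n k : ℕ} {Ω : Set (En n)} {F : En n → En n} {p : En n}
    (h : LittleOh Ω F p k) (hp : p ∉ Ω) :
    (fun z => F z - z) =o[𝓝[Ω] p] fun z => ‖z - p‖ ^ k := by
  have hne : ∀ᶠ z in 𝓝[Ω] p, ‖z - p‖ ^ k = 0 → ‖F z - z‖ = 0 := by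
    filter_upwards [self_mem_nhdsWithin] with z hz hzero
    have hzp : z - p ≠ 0 := sub_ne_zero.2 (ne_of_mem_of_not_mem hz hp)
    exact absurd hzero (pow_ne_zero k (norm_ne_zero_iff.2 hzp))
  exact Asymptotics.isLittleO_norm_left.1 ((Asymptotics.isLittleO_iff_tendsto' hne).2 h)

theorem leviForm_eq_fderiv_fderiv {n : ℕ} (ρ : En n → ℝ) (q ξ : En n) :
    LeviForm ρ q ξ = (1 / 4) *
      (fderiv ℝ (fderiv ℝ ρ) q ξ ξ + fderiv ℝ (fderiv ℝ ρ) q (I • ξ) (I • ξ)) := by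
  simp only [LeviForm, iteratedFDeriv_two_apply, Matrix.cons_val_zero, Matrix.cons_val_one]

theorem StronglyPcxAt.fderiv_fderiv_pos {n : ℕ} {ρ : En n → ℝ} {q ξ : En n}
    (h : StronglyPcxAt ρ q) (hξ : ξ ≠ 0) (hdξ : fderiv ℝ ρ q ξ = 0)
    (hdIξ : fderiv ℝ ρ q (I • ξ) = 0) :
    0 < fderiv ℝ (fderiv ℝ ρ) q ξ ξ + fderiv ℝ (fderiv ℝ ρ) q (I • ξ) (I • ξ) := by
  have hpos := h ξ hξ ⟨hdξ, hdIξ⟩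
  rw [leviForm_eq_fderiv_fderiv] at hpos
  linarith

theorem automorphism_rigidity_k_two_general {V : Type*} [NormedAddCommGroup V]
    [InnerProductSpace ℂ V] [FiniteDimensional ℂ V] {Ω : Set V} {ρ : V → ℝ} {p : V} {F G : V → V}
    (hconn : IsPreconnected Ω) (hb : Bornology.IsBounded Ω)
    (hρ : ContDiff ℝ 4 ρ) (hΩ : Ω = {z | ρ z < 0}) (hp : ρ p = 0) (hdρ : fderiv ℝ ρ p ≠ 0)
    (hpos : ∀ ζ, ζ ≠ 0 → fderiv ℝ ρ p ζ = 0 → fderiv ℝ ρ p (I • ζ) = 0 →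
      0 < fderiv ℝ (fderiv ℝ ρ) p ζ ζ + fderiv ℝ (fderiv ℝ ρ) p (I • ζ) (I • ζ))
    (hF : DifferentiableOn ℂ F Ω) (hFΩ : MapsTo F Ω Ω)
    (hG : DifferentiableOn ℂ G Ω) (hGΩ : MapsTo G Ω Ω) (hGF : LeftInvOn G F Ω)
    (ho : (fun z => F z - z) =o[𝓝[Ω] p] fun z => ‖z - p‖ ^ 2) : EqOn F id Ω := by
  have hopen : IsOpen Ω := hΩ ▸ isOpen_lt hρ.continuous continuous_const
  obtain ⟨E, ⟨ν⟩⟩ := exists_siegelNormalForm hρ hΩ hp hdρ hpos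
  have htan (j : ℕ) := ν.tangentToId_chart (isLittleO_iterate_sub hFΩ ho j)
  obtain ⟨U, hUΩ, hU, ⟨u, hu⟩, hFU⟩ :=
    ν.chart.exists_isOpen_eqOn_id hopen hb hF hFΩ hG hGΩ hGF htan
  exact eqOn_of_differentiableOn_of_isPreconnected_of_eventuallyEq hopen hconn hF
    differentiableOn_id (hUΩ hu) (eventually_of_mem (hU.mem_nhds hu) hFU)

theorem automorphism_rigidity_k_two
    {n : ℕ} (hn : 2 ≤ n) (Ω : Set (En n)) (ρ : En n → ℝ)
    (hΩ : IsDomain' Ω) (hbd : Bornology.IsBounded Ω)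
    (hρ : IsPcxCinfBoundary Ω ρ)
    (p : En n) (hp : p ∈ frontier Ω) (hspc : StronglyPcxAt ρ p)
    (F : En n → En n) (hF : IsAutomorphismOf F Ω)
    (ho : LittleOh Ω F p 2) :
    ∀ z ∈ Ω, F z = z := by
  obtain ⟨⟨hρs, hρΩ, hρf, hdρ⟩, -⟩ := hρ
  obtain ⟨hFd, hFΩ, G, hGd, hGΩ, hGF, -⟩ := hF
  have hpΩ : p ∉ Ω := fun h => hp.2 (by rwa [hΩ.1.interior_eq])
  exact automorphism_rigidity_k_two_general hΩ.2.isPreconnected hbd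
    (hρs.of_le (WithTop.coe_le_coe.2 le_top)) hρΩ (by rwa [hρf] at hp) (hdρ p hp)
    (fun _ => hspc.fderiv_fderiv_pos) hFd hFΩ hGd hGΩ hGF (ho.isLittleO hpΩ)
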